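/- Let R be an associative ring with identity and Q a left rooted quiver. Then (PGF(Q), Rep(Q, PGF(R)^⊥)) is a complete hereditary cotorsion pair in Rep(Q,R), and PGF(Q) ∩ Rep(Q, PGF(R)^⊥) = Prj(Q), the class of projective representations. -/

import Mathlib

open CategoryTheory CategoryTheory.Limits Opposite
open scoped DirectSum

universe w v u

namespace QuiverGF


section Cat

variable {A : Type u} [Category.{v} A] [Abelian A]

/-- `Ext¹(X,Y) = 0`, expressed as: every short exact sequence `0 → Y → E → X → 0` splits. -/
def ext1Zero (X Y : A) : Prop :=
  ∀ (E : A) (f : Y ⟶ E) (g : E ⟶ X) (w : f ≫ g = 0),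
    (ShortComplex.mk f g w).ShortExact → ∃ s : X ⟶ E, s ≫ g = 𝟙 X

/-- `extHigherZero n X Y` encodes `Ext^{n+1}(X,Y) = 0`, defined by dimension shifting along
short exact sequences `0 → Y → I → Z → 0` with `I` injective. -/
def extHigherZero : ℕ → A → A → Prop
  | 0 => fun X Y => ext1Zero X Y
  | n + 1 => fun X Y => ∀ (I Z : A) (f : Y ⟶ I) (g : I ⟶ Z) (w : f ≫ g = 0),
      Injective I → (ShortComplex.mk f g w).ShortExact → extHigherZero n X Z

/-- The right `Ext¹`-orthogonal class. -/
def rightPerp (S : Set A) : Set A := {Y | ∀ X ∈ S, ext1Zero X Y}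

/-- The left `Ext¹`-orthogonal class. -/
def leftPerp (S : Set A) : Set A := {X | ∀ Y ∈ S, ext1Zero X Y}

/-- `(X, Y)` is a cotorsion pair. -/
structure IsCotorsionPair (X Y : Set A) : Prop where
  right_eq : Y = rightPerp X
  left_eq : X = leftPerp Y

/-- Completeness of a pair of classes: every object admits approximation sequences. -/
def IsCompleteCP (X Y : Set A) : Prop :=
  (∀ M : A, ∃ (YM XM : A) (f : M ⟶ YM) (g : YM ⟶ XM) (w : f ≫ g = 0),
     (ShortComplex.mk f g w).ShortExact ∧ YM ∈ Y ∧ XM ∈ X) ∧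
  (∀ M : A, ∃ (YM XM : A) (f : YM ⟶ XM) (g : XM ⟶ M) (w : f ≫ g = 0),
     (ShortComplex.mk f g w).ShortExact ∧ YM ∈ Y ∧ XM ∈ X)

/-- Heredity: `Ext^i(X,Y) = 0` for all `i ≥ 1`. -/
def IsHereditaryCP (X Y : Set A) : Prop :=
  ∀ M ∈ X, ∀ N ∈ Y, ∀ n : ℕ, extHigherZero n M N

/-- A thick class of objects. -/
structure IsThick (W : Set A) : Prop where
  summand : ∀ Z ∈ W, ∀ (X : A) (i : X ⟶ Z) (r : Z ⟶ X), i ≫ r = 𝟙 X → X ∈ W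
  ext_closed : ∀ (S : ShortComplex A), S.ShortExact → S.X₁ ∈ W → S.X₃ ∈ W → S.X₂ ∈ W
  ker_epi : ∀ (S : ShortComplex A), S.ShortExact → S.X₂ ∈ W → S.X₃ ∈ W → S.X₁ ∈ W
  coker_mono : ∀ (S : ShortComplex A), S.ShortExact → S.X₁ ∈ W → S.X₂ ∈ W → S.X₃ ∈ W

/-- A Hovey triple. -/
structure IsHoveyTriple (C W F : Set A) : Prop where
  thick : IsThick W
  cp1 : IsCotorsionPair C (W ∩ F)
  cp1_complete : IsCompleteCP C (W ∩ F)
  cp2 : IsCotorsionPair (C ∩ W) F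
  cp2_complete : IsCompleteCP (C ∩ W) F

/-- A hereditary Hovey triple. -/
structure IsHereditaryHoveyTriple (C W F : Set A) extends IsHoveyTriple C W F : Prop where
  cp1_hereditary : IsHereditaryCP C (W ∩ F)
  cp2_hereditary : IsHereditaryCP (C ∩ W) F

/-- `f : C ⟶ M` is an `S`-cover of `M`. -/
def IsCover (S : Set A) {C M : A} (f : C ⟶ M) : Prop :=
  C ∈ S ∧ (∀ C' ∈ S, ∀ g : C' ⟶ M, ∃ h : C' ⟶ C, h ≫ f = g) ∧
    (∀ h : C ⟶ C, h ≫ f = f → IsIso h)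

/-- `f : M ⟶ E` is an `S`-envelope of `M`. -/
def IsEnvelope (S : Set A) {M E : A} (f : M ⟶ E) : Prop :=
  E ∈ S ∧ (∀ E' ∈ S, ∀ g : M ⟶ E', ∃ h : E ⟶ E', f ≫ h = g) ∧
    (∀ h : E ⟶ E, f ≫ h = f → IsIso h)

/-- A perfect pair of classes: X-covers and Y-envelopes always exist. -/
def IsPerfectCP (X Y : Set A) : Prop :=
  (∀ M : A, ∃ (C : A) (f : C ⟶ M), IsCover X f) ∧
  (∀ M : A, ∃ (E : A) (f : M ⟶ E), IsEnvelope Y f)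

/-- `W` is a cogenerator for `X`. -/
def IsCogenerator (W X : Set A) : Prop :=
  W ⊆ X ∧ ∀ M ∈ X, ∃ (W' X' : A) (f : M ⟶ W') (g : W' ⟶ X') (w : f ≫ g = 0),
    (ShortComplex.mk f g w).ShortExact ∧ W' ∈ W ∧ X' ∈ X

end Cat

section Quiver

variable (V : Type w) [Quiver.{w} V]

/-- A quiver is left rooted if it has no infinite sequence of arrows `• → • → • → ⋯`. -/
def LeftRooted : Prop := ¬ ∃ f : ℕ → V, ∀ n : ℕ, Nonempty (f n ⟶ f (n + 1))

variable {V}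
variable {A : Type u} [Category.{v} A]

/-- A vertex of `V`, seen as an object of the path category. -/
abbrev vtx (i : V) : Paths V := i

section Phi

variable [Abelian A] [HasCoproducts.{w} A]

/-- The canonical morphism `φᵢˣ : ⊕_{a : j ⟶ i} X(j) ⟶ X(i)`. -/
noncomputable def phi (X : Paths V ⥤ A) (i : V) :
    (∐ fun p : Σ j : V, j ⟶ i => X.obj (vtx p.1)) ⟶ X.obj (vtx i) :=
  Sigma.desc fun p => X.map p.2.toPath

/-- The class `Φ(S)` of representations. -/
noncomputable def PhiClass (S : Set A) : Set (Paths V ⥤ A) :=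
  {X | ∀ i : V, Mono (phi X i) ∧ X.obj (vtx i) ∈ S ∧ cokernel (phi X i) ∈ S}

end Phi

/-- The class of representations with all vertex values in `S`. -/
def RepClass (S : Set A) : Set (Paths V ⥤ A) := {X | ∀ i : V, X.obj (vtx i) ∈ S}

section Psi

variable [Abelian A] [HasProducts.{w} A]

/-- The canonical morphism `ψᵢʸ : Y(i) ⟶ Π_{a : i ⟶ j} Y(j)`. -/
noncomputable def psi (Y : Paths V ⥤ A) (i : V) :
    Y.obj (vtx i) ⟶ ∏ᶜ fun p : Σ j : V, i ⟶ j => Y.obj (vtx p.1) :=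
  Pi.lift fun p => Y.map p.2.toPath

/-- The class `Ψ(S)` of representations. -/
noncomputable def PsiClass (S : Set A) : Set (Paths V ⥤ A) :=
  {Y | ∀ i : V, Epi (psi Y i) ∧ Y.obj (vtx i) ∈ S ∧ kernel (psi Y i) ∈ S}

end Psi

end Quiver




section NcTensor

variable (R : Type u) [Ring R]

variable (E : Type u) [AddCommGroup E] [Module Rᵐᵒᵖ E]
variable (M : Type u) [AddCommGroup M] [Module R M]

/-- The defining relations of the tensor product `E ⊗_R M` of a right `R`-module `E`
and a left `R`-module `M` over a (possibly noncommutative) ring `R`. -/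
def ncRel : Submodule ℤ (TensorProduct ℤ E M) :=
  Submodule.span ℤ {z | ∃ (e : E) (r : R) (m : M),
    z = (MulOpposite.op r • e) ⊗ₜ[ℤ] m - e ⊗ₜ[ℤ] (r • m)}

/-- The tensor product `E ⊗_R M` of a right `R`-module `E` and a left `R`-module `M`. -/
abbrev NcTensor := TensorProduct ℤ E M ⧸ ncRel R E M

/-- The canonical generator `e ⊗ m` of `E ⊗_R M`. -/
noncomputable def NcTensor.tmul (e : E) (m : M) : NcTensor R E M :=
  Submodule.Quotient.mk (e ⊗ₜ[ℤ] m)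

variable {E M}
variable {E' : Type u} [AddCommGroup E'] [Module Rᵐᵒᵖ E']
variable {M' : Type u} [AddCommGroup M'] [Module R M']

/-- Functoriality of the tensor product. -/
noncomputable def NcTensor.map (f : E →ₗ[Rᵐᵒᵖ] E') (g : M →ₗ[R] M') :
    NcTensor R E M →ₗ[ℤ] NcTensor R E' M' :=
  Submodule.mapQ _ _
    (TensorProduct.map f.toAddMonoidHom.toIntLinearMap g.toAddMonoidHom.toIntLinearMap)
    (by
      refine Submodule.span_le.2 ?_
      rintro z ⟨e, r, m, rfl⟩
      refine Submodule.mem_comap.2 (Submodule.subset_span ?_)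
      exact ⟨f e, r, g m, by
        refine (map_sub (TensorProduct.map f.toAddMonoidHom.toIntLinearMap
          g.toAddMonoidHom.toIntLinearMap) _ _).trans ?_
        rw [TensorProduct.map_tmul, TensorProduct.map_tmul]
        simp [map_smul]⟩)

@[simp] lemma NcTensor.map_tmul (f : E →ₗ[Rᵐᵒᵖ] E') (g : M →ₗ[R] M') (e : E) (m : M) :
    NcTensor.map R f g (NcTensor.tmul R E M e m) = NcTensor.tmul R E' M' (f e) (g m) := by
  rfl

end NcTensor

section ModuleClasses

variable (R : Type u) [Ring R]

/-- A left `R`-module is flat if tensoring with it preserves injections of right `R`-modules. -/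
def IsFlatModule (M : ModuleCat.{u} R) : Prop :=
  ∀ (E E' : ModuleCat.{u} Rᵐᵒᵖ) (f : E ⟶ E'), Function.Injective f →
    Function.Injective (NcTensor.map R (f.hom : ↑E →ₗ[Rᵐᵒᵖ] ↑E') (LinearMap.id (M := ↑M)))

/-- Gorenstein flat left `R`-modules: cycles of exact complexes of flat modules which stay
exact after tensoring with any injective right `R`-module. -/
def IsGorensteinFlatModule (M : ModuleCat.{u} R) : Prop :=
  ∃ (F : ℤ → ModuleCat.{u} R) (d : ∀ n : ℤ, F n ⟶ F (n + 1)),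
    (∀ n, IsFlatModule R (F n)) ∧
    (∀ n, Function.Exact (d n) (d (n + 1))) ∧
    Nonempty (↑M ≃ₗ[R] ↥(LinearMap.ker ((d 0).hom : ↑(F 0) →ₗ[R] ↑(F (0 + 1))))) ∧
    ∀ (E : ModuleCat.{u} Rᵐᵒᵖ), Injective E → ∀ n : ℤ,
      Function.Exact (NcTensor.map R (LinearMap.id (M := ↑E)) ((d n).hom : ↑(F n) →ₗ[R] ↑(F (n + 1))))
        (NcTensor.map R (LinearMap.id (M := ↑E)) ((d (n + 1)).hom : ↑(F (n + 1)) →ₗ[R] ↑(F (n + 1 + 1))))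

/-- Projectively coresolved Gorenstein flat left `R`-modules. -/
def IsPGFModule (M : ModuleCat.{u} R) : Prop :=
  ∃ (P : ℤ → ModuleCat.{u} R) (d : ∀ n : ℤ, P n ⟶ P (n + 1)),
    (∀ n, Projective (P n)) ∧
    (∀ n, Function.Exact (d n) (d (n + 1))) ∧
    Nonempty (↑M ≃ₗ[R] ↥(LinearMap.ker ((d 0).hom : ↑(P 0) →ₗ[R] ↑(P (0 + 1))))) ∧
    ∀ (E : ModuleCat.{u} Rᵐᵒᵖ), Injective E → ∀ n : ℤ,
      Function.Exact (NcTensor.map R (LinearMap.id (M := ↑E)) ((d n).hom : ↑(P n) →ₗ[R] ↑(P (n + 1))))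
        (NcTensor.map R (LinearMap.id (M := ↑E)) ((d (n + 1)).hom : ↑(P (n + 1)) →ₗ[R] ↑(P (n + 1 + 1))))

/-- Gorenstein injective objects of an abelian category. -/
def IsGorensteinInjective {A : Type*} [Category A] [Abelian A] (M : A) : Prop :=
  ∃ (I : ℤ → A) (d : ∀ n : ℤ, I n ⟶ I (n + 1)),
    (∀ n, Injective (I n)) ∧
    (∀ n, ∃ w : d n ≫ d (n + 1) = 0, (ShortComplex.mk (d n) (d (n + 1)) w).Exact) ∧
    Nonempty (M ≅ kernel (d 0)) ∧
    ∀ (E : A), Injective E → ∀ n : ℤ,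
      Function.Exact (fun f : E ⟶ I n => f ≫ d n) (fun f : E ⟶ I (n + 1) => f ≫ d (n + 1))

end ModuleClasses



section Char

variable (R : Type u) [Ring R] (G : Type u) [AddCommGroup G]

section Left
variable (M : Type u) [AddCommGroup M] [Module R M]

/-- Right `R`-action on `Hom_ℤ(M, G)` for a left `R`-module `M`. -/
instance : SMul Rᵐᵒᵖ (M →+ G) :=
  ⟨fun r f => f.comp (DistribMulAction.toAddMonoidHom M r.unop)⟩

@[simp] lemma op_smul_addHom_apply (r : Rᵐᵒᵖ) (f : M →+ G) (m : M) :
    (r • f) m = f (r.unop • m) := rfl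

instance charRight : Module Rᵐᵒᵖ (M →+ G) where
  one_smul f := AddMonoidHom.ext fun m => by simp
  mul_smul r s f := AddMonoidHom.ext fun m => by simp [mul_smul]
  smul_zero r := AddMonoidHom.ext fun m => rfl
  smul_add r f g := AddMonoidHom.ext fun m => rfl
  add_smul r s f := AddMonoidHom.ext fun m => by simp [add_smul]
  zero_smul f := AddMonoidHom.ext fun m => by simp

end Left

section Right
variable (N : Type u) [AddCommGroup N] [Module Rᵐᵒᵖ N]

/-- Left `R`-action on `Hom_ℤ(N, G)` for a right `R`-module `N`. -/
instance : SMul R (N →+ G) :=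
  ⟨fun r f => f.comp (DistribMulAction.toAddMonoidHom N (MulOpposite.op r))⟩

@[simp] lemma smul_addHom_apply (r : R) (f : N →+ G) (n : N) :
    (r • f) n = f (MulOpposite.op r • n) := rfl

instance charLeft : Module R (N →+ G) where
  one_smul f := AddMonoidHom.ext fun n => by simp
  mul_smul r s f := AddMonoidHom.ext fun n => by simp [MulOpposite.op_mul, mul_smul]
  smul_zero r := AddMonoidHom.ext fun n => rfl
  smul_add r f g := AddMonoidHom.ext fun n => rfl
  add_smul r s f := AddMonoidHom.ext fun n => by simp [add_smul]
  zero_smul f := AddMonoidHom.ext fun n => by simp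

end Right

section Precomp

variable {R G}
variable {M N : Type u} [AddCommGroup M] [AddCommGroup N] [Module R M] [Module R N]

/-- Precomposition, as an `Rᵐᵒᵖ`-linear map between character modules. -/
def precompHom (h : M →ₗ[R] N) : (N →+ G) →ₗ[Rᵐᵒᵖ] (M →+ G) where
  toFun f := f.comp h.toAddMonoidHom
  map_add' f g := rfl
  map_smul' r f := AddMonoidHom.ext fun m => by simp [map_smul]

variable {P Q : Type u} [AddCommGroup P] [AddCommGroup Q] [Module Rᵐᵒᵖ P] [Module Rᵐᵒᵖ Q]

/-- Precomposition, as an `R`-linear map between character modules of right modules. -/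
def precompHomOp (h : P →ₗ[Rᵐᵒᵖ] Q) : (Q →+ G) →ₗ[R] (P →+ G) where
  toFun f := f.comp h.toAddMonoidHom
  map_add' f g := rfl
  map_smul' r f := AddMonoidHom.ext fun p => by simp [map_smul]

end Precomp

end Char


section Reps

variable (V : Type u) [Quiver.{u} V] (R : Type u) [Ring R]

/-- The category of representations of the quiver `V` with values in left `R`-modules. -/
abbrev RepL := Paths V ⥤ ModuleCat.{u} R

/-- The category of representations of the opposite quiver with values in right `R`-modules. -/
abbrev RepR := Paths Vᵒᵖ ⥤ ModuleCat.{u} Rᵐᵒᵖ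

/-- A vertex of `V`, seen as an object of the path category. -/
abbrev vtx' {V : Type u} [Quiver.{u} V] (i : V) : Paths V := i

/-- The representation `Hom(X, G) ∈ Rep(Qᵒᵖ, Rᵒᵖ)`, given vertexwise by `Hom_ℤ(X(i), G)`. -/
noncomputable def HomRepObj (X : RepL V R) (G : Type u) [AddCommGroup G] : RepR V R :=
  Paths.lift
    { obj := fun x => ModuleCat.of Rᵐᵒᵖ (↑(X.obj (vtx' x.unop)) →+ G)
      map := fun {x y} a =>
        ModuleCat.ofHom (precompHom (G := G) ((X.map a.unop.toPath).hom : ↑(X.obj (vtx' y.unop)) →ₗ[R] ↑(X.obj (vtx' x.unop))) :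
          _ →ₗ[Rᵐᵒᵖ] _) }

/-- The representation `Hom(Y, G) ∈ Rep(Q, R)` for `Y ∈ Rep(Qᵒᵖ, Rᵒᵖ)`. -/
noncomputable def HomRepObjOp (Y : RepR V R) (G : Type u) [AddCommGroup G] : RepL V R :=
  Paths.lift
    { obj := fun i => ModuleCat.of R (↑(Y.obj (vtx' (op i))) →+ G)
      map := fun {i j} a =>
        ModuleCat.ofHom (precompHomOp (G := G) ((Y.map a.op.toPath).hom : ↑(Y.obj (vtx' (op j))) →ₗ[Rᵐᵒᵖ] ↑(Y.obj (vtx' (op i)))) :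
          _ →ₗ[R] _) }

/-- The character representation `X⁺ = Hom(X, ℚ/ℤ)`. -/
noncomputable def charRep (X : RepL V R) : RepR V R :=
  HomRepObj V R X (ULift.{u} (AddCircle (1 : ℚ)))

section Tensor

variable {V R}

/-- The underlying group of the tensor product of representations before dividing out
by the relations coming from arrows. -/
noncomputable abbrev repTensorBase (Y : RepR V R) (X : RepL V R) : Type u :=
  ⨁ (i : V), NcTensor R (↑(Y.obj (vtx' (op i)))) (↑(X.obj (vtx' i)))

/-- Shortcut, so that `Submodule ℤ (repTensorBase Y X)` is stated for the structure that
comes from the additive group. -/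
noncomputable instance (Y : RepR V R) (X : RepL V R) : AddCommMonoid (repTensorBase Y X) :=
  AddCommGroup.toAddCommMonoid

open scoped Classical in
/-- The relations defining the tensor product of representations. -/
noncomputable def repTensorRel (Y : RepR V R) (X : RepL V R) :
    Submodule ℤ (repTensorBase Y X) :=
  Submodule.span ℤ {z | ∃ (i j : V) (a : i ⟶ j) (y : ↑(Y.obj (vtx' (op j)))) (x : ↑(X.obj (vtx' i))),
    z = DirectSum.of _ i (NcTensor.tmul R _ _ (Y.map a.op.toPath y) x)
      - DirectSum.of _ j (NcTensor.tmul R _ _ y (X.map a.toPath x))}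

/-- The tensor product `Y ⊗_Q X` of representations, for `Y ∈ Rep(Qᵒᵖ, Rᵒᵖ)` and
`X ∈ Rep(Q, R)`. -/
noncomputable abbrev RepTensor (Y : RepR V R) (X : RepL V R) : Type u :=
  repTensorBase Y X ⧸ repTensorRel Y X

open scoped Classical in
/-- Functoriality of the tensor product of representations. -/
noncomputable def RepTensor.map {Y Y' : RepR V R} {X X' : RepL V R}
    (g : Y ⟶ Y') (f : X ⟶ X') : RepTensor Y X →ₗ[ℤ] RepTensor Y' X' :=
  Submodule.mapQ _ _
    (DirectSum.toModule ℤ V (repTensorBase Y' X') fun i =>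
      (DirectSum.lof ℤ V _ i).comp
        (NcTensor.map R ((g.app (vtx' (op i))).hom : _ →ₗ[Rᵐᵒᵖ] _) ((f.app (vtx' i)).hom : _ →ₗ[R] _)))
    (by
      refine Submodule.span_le.2 ?_
      rintro z ⟨i, j, a, y, x, rfl⟩
      refine Submodule.mem_comap.2 ?_
      refine Submodule.subset_span ?_
      refine ⟨i, j, a, g.app (vtx' (op j)) y, f.app (vtx' i) x, ?_⟩
      have hg : g.app (vtx' (op i)) (Y.map a.op.toPath y)
          = Y'.map a.op.toPath (g.app (vtx' (op j)) y) := by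
        have h := g.naturality (a.op.toPath : vtx' (op j) ⟶ vtx' (op i))
        exact LinearMap.congr_fun (congrArg ModuleCat.Hom.hom h) y
      have hf : f.app (vtx' j) (X.map a.toPath x)
          = X'.map a.toPath (f.app (vtx' i) x) := by
        have h := f.naturality (a.toPath : vtx' i ⟶ vtx' j)
        exact LinearMap.congr_fun (congrArg ModuleCat.Hom.hom h) x
      refine (LinearMap.map_sub _ _ _).trans (congrArg₂ (· - ·) ?_ ?_)
      · refine (DirectSum.toModule_lof ℤ (M := fun i : V =>
          NcTensor R (↑(Y.obj (vtx' (op i)))) (↑(X.obj (vtx' i)))) i _).trans ?_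
        rw [← hg]
        rfl
      · refine (DirectSum.toModule_lof ℤ (M := fun i : V =>
          NcTensor R (↑(Y.obj (vtx' (op i)))) (↑(X.obj (vtx' i)))) j _).trans ?_
        rw [← hf]
        rfl)

end Tensor

end Reps




section More

variable (V : Type u) [Quiver.{u} V] (R : Type u) [Ring R]

/-- Cotorsion left `R`-modules. -/
def IsCotorsionModule (M : ModuleCat.{u} R) : Prop :=
  ∀ F : ModuleCat.{u} R, IsFlatModule R F → ext1Zero F M

/-- A right coherent ring: every finitely generated right ideal is finitely presented. -/
def RightCoherent : Prop :=
  ∀ I : Submodule Rᵐᵒᵖ R, I.FG → Module.FinitePresentation Rᵐᵒᵖ ↥I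

/-- Flat representations: colimits of projective representations. -/
def IsFlatRep (Xr : RepL V R) : Prop :=
  ∃ (J : Cat.{u, u}) (D : ↥J ⥤ RepL V R) (c : Limits.Cocone D),
    (∀ j, Projective (D.obj j)) ∧ Nonempty (Limits.IsColimit c) ∧ Nonempty (c.pt ≅ Xr)

/-- Gorenstein flat representations. -/
def IsGorensteinFlatRep (Xr : RepL V R) : Prop :=
  ∃ (F : ℤ → RepL V R) (d : ∀ n : ℤ, F (n + 1) ⟶ F n),
    (∀ n, IsFlatRep V R (F n)) ∧
    (∀ n, ∃ w : d (n + 1) ≫ d n = 0, (ShortComplex.mk (d (n + 1)) (d n) w).Exact) ∧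
    Nonempty (Xr ≅ cokernel (d 0)) ∧
    ∀ (E : RepR V R), Injective E → ∀ n : ℤ,
      Function.Exact (RepTensor.map (𝟙 E) (d (n + 1))) (RepTensor.map (𝟙 E) (d n))

/-- Projectively coresolved Gorenstein flat representations. -/
def IsPGFRep (Xr : RepL V R) : Prop :=
  ∃ (P : ℤ → RepL V R) (d : ∀ n : ℤ, P (n + 1) ⟶ P n),
    (∀ n, Projective (P n)) ∧
    (∀ n, ∃ w : d (n + 1) ≫ d n = 0, (ShortComplex.mk (d (n + 1)) (d n) w).Exact) ∧
    Nonempty (Xr ≅ cokernel (d 0)) ∧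
    ∀ (E : RepR V R), Injective E → ∀ n : ℤ,
      Function.Exact (RepTensor.map (𝟙 E) (d (n + 1))) (RepTensor.map (𝟙 E) (d n))

end More

section Swap

variable (R : Type u) [Ring R]
variable (M : Type u) [AddCommGroup M] [Module R M]
variable (E : Type u) [AddCommGroup E] [Module Rᵐᵒᵖ E]

/-- Relations for the tensor product `M ⊗_{Rᵒᵖ} E` of a right `Rᵒᵖ`-module `M`
and a left `Rᵒᵖ`-module `E`. -/
def ncRel' : Submodule ℤ (TensorProduct ℤ M E) :=
  Submodule.span ℤ {z | ∃ (m : M) (r : R) (e : E),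
    z = (r • m) ⊗ₜ[ℤ] e - m ⊗ₜ[ℤ] (MulOpposite.op r • e)}

/-- The tensor product `M ⊗_{Rᵒᵖ} E`. -/
abbrev NcTensorSwap := TensorProduct ℤ M E ⧸ ncRel' R M E

variable {M E}

/-- The generator `m ⊗ e` of `M ⊗_{Rᵒᵖ} E`. -/
noncomputable def NcTensorSwap.tmul (m : M) (e : E) : NcTensorSwap R M E :=
  Submodule.Quotient.mk (m ⊗ₜ[ℤ] e)

variable (V : Type u) [Quiver.{u} V]

/-- The base of the tensor product `X ⊗_{Qᵒᵖ} Y`. -/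
noncomputable abbrev repTensorSwapBase (X : RepL V R) (Y : RepR V R) : Type u :=
  ⨁ (i : V), NcTensorSwap R (↑(X.obj i)) (↑(Y.obj (op i)))

/-- Shortcut, so that `Submodule ℤ (repTensorSwapBase R V X Y)` is stated for the structure that
comes from the additive group. -/
noncomputable instance (X : RepL V R) (Y : RepR V R) : AddCommMonoid (repTensorSwapBase R V X Y) :=
  AddCommGroup.toAddCommMonoid

open scoped Classical in
/-- The relations of the tensor product `X ⊗_{Qᵒᵖ} Y`. -/
noncomputable def repTensorSwapRel (X : RepL V R) (Y : RepR V R) :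
    Submodule ℤ (repTensorSwapBase R V X Y) :=
  Submodule.span ℤ {z | ∃ (j i : V) (a : j ⟶ i) (x : ↑(X.obj j)) (y : ↑(Y.obj (op i))),
    z = DirectSum.of _ i (NcTensorSwap.tmul R (X.map a.toPath x) y)
      - DirectSum.of _ j (NcTensorSwap.tmul R x (Y.map a.op.toPath y))}

/-- The tensor product `X ⊗_{Qᵒᵖ} Y` of representations, i.e. the tensor product over the
opposite quiver of the opposite ring. -/
noncomputable abbrev RepTensorSwap (X : RepL V R) (Y : RepR V R) : Type u :=
  repTensorSwapBase R V X Y ⧸ repTensorSwapRel R V X Y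

end Swap

section Eval

variable {V : Type u} [Quiver.{u} V] {R : Type u} [Ring R]

/-- Evaluation helper identifying the vertex value of `Hom(X, G)` with `Hom_ℤ(X(i), G)`. -/
def homRepEval (X : RepL V R) (G : Type u) [AddCommGroup G] {v : Vᵒᵖ}
    (s : ↑((HomRepObj V R X G).obj v)) : ↑(X.obj v.unop) →+ G := s

/-- Evaluation helper identifying the vertex value of `Hom(Y, G)` with `Hom_ℤ(Y(i), G)`. -/
def homRepOpEval (Y : RepR V R) (G : Type u) [AddCommGroup G] {i : V}
    (s : ↑((HomRepObjOp V R Y G).obj i)) : ↑(Y.obj (op i)) →+ G := s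

end Eval

end QuiverGF

/-!
By character duality, a sequence of representations stays exact under `E ⊗ -` if and only if it
stays exact under `Hom(-, E⁺)`, where `E⁺ = Hom(E, ℚ/ℤ)`. Hence the projectively coresolved
Gorenstein flat (PGF) objects are the Gorenstein projective objects relative to the duals of
injectives, and they form a class in which every object is both a syzygy and a cosyzygy.

For a left rooted quiver the vertex modules of a PGF representation are PGF. Indeed, `E ⊗ X(i)`
embeds into the tensor product of `X` with the representation of products of copies of `E` over
paths: a relation of the tensor product involves finitely many arrows, and left rootedness makes
sums over the paths along these arrows finite. The latter representation is vertexwise injective,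
so it has injective dimension at most one. The obstruction to gluing vertexwise lifts then shows
that the right orthogonal of the PGF representations is computed vertexwise.

Over a ring, the sum of the terms of a complex of projective modules is, up to contractible
summands, a free module whose differential is a square-zero matrix. Closing up finite sets of
indices shows that such a matrix is a transfinite extension of matrices of size at most
`max ℵ₀ #R`, so the right orthogonal of the PGF modules, and with it that of the PGF representations, is
the right orthogonal of a set. A countable matrix remains exact under `Hom(-, N)` if `N⁺` is
injective, by a Mittag-Leffler argument, so projective modules are orthogonal to PGF modules. By
the Eklof–Trlifaj theorem special preenvelopes exist, and since the class is closed under syzygies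
and cosyzygies, the left orthogonal of its right orthogonal is the class itself.
-/

namespace QuiverGF

/-! ### Short exact sequences and `Ext¹`-vanishing -/

section ShortExact

variable {A : Type u} [Category.{v} A] [Abelian A]

/-- `0 ⟶ X ⟶ Y ⟶ Z ⟶ 0` is a short exact sequence; `f ≫ g = 0` is part of the statement, so that
no `ShortComplex` has to be built beforehand. -/
def IsShortExact {X Y Z : A} (f : X ⟶ Y) (g : Y ⟶ Z) : Prop :=
  ∃ w : f ≫ g = 0, (ShortComplex.mk f g w).ShortExact

namespace IsShortExact

variable {X Y Z : A} {f : X ⟶ Y} {g : Y ⟶ Z}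

lemma comp_eq_zero (h : IsShortExact f g) : f ≫ g = 0 := h.1

lemma mono (h : IsShortExact f g) : Mono f := h.2.mono_f

lemma epi (h : IsShortExact f g) : Epi g := h.2.epi_g

lemma exists_lift (h : IsShortExact f g) {T : A} (k : T ⟶ Y) (hk : k ≫ g = 0) :
    ∃ l : T ⟶ X, l ≫ f = k := by
  obtain ⟨w, h⟩ := h
  have := h.mono_f
  exact ⟨h.exact.lift k hk, h.exact.lift_f k hk⟩

lemma exists_desc (h : IsShortExact f g) {T : A} (k : Y ⟶ T) (hk : f ≫ k = 0) :
    ∃ l : Z ⟶ T, g ≫ l = k := by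
  obtain ⟨w, h⟩ := h
  have := h.epi_g
  exact ⟨h.exact.desc k hk, h.exact.g_desc k hk⟩

lemma of_exists_lift [Mono f] [Epi g] (w : f ≫ g = 0)
    (h : ∀ (T : A) (k : T ⟶ Y), k ≫ g = 0 → ∃ l : T ⟶ X, l ≫ f = k) : IsShortExact f g :=
  ⟨w, { exact := ShortComplex.exact_of_f_is_kernel _ <| KernelFork.IsLimit.ofι' f w
          fun k hk => ⟨(h _ k hk).choose, (h _ k hk).choose_spec⟩
        mono_f := ‹_›
        epi_g := ‹_› }⟩

lemma of_exists_desc [Mono f] [Epi g] (w : f ≫ g = 0)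
    (h : ∀ (T : A) (k : Y ⟶ T), f ≫ k = 0 → ∃ l : Z ⟶ T, g ≫ l = k) : IsShortExact f g :=
  ⟨w, { exact := ShortComplex.exact_of_g_is_cokernel _ <| CokernelCofork.IsColimit.ofπ' g w
          fun k hk => ⟨(h _ k hk).choose, (h _ k hk).choose_spec⟩
        mono_f := ‹_›
        epi_g := ‹_› }⟩

lemma cokernel_π (f : X ⟶ Y) [Mono f] : IsShortExact f (cokernel.π f) :=
  of_exists_desc (by simp) fun _ k hk => ⟨cokernel.desc f k hk, by simp⟩

lemma kernel_ι (g : Y ⟶ Z) [Epi g] : IsShortExact (kernel.ι g) g :=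
  of_exists_lift (by simp) fun _ k hk => ⟨kernel.lift g k hk, by simp⟩

lemma of_iso_left (h : IsShortExact f g) {X' : A} (e : X' ≅ X) : IsShortExact (e.hom ≫ f) g := by
  have := h.mono
  have := h.epi
  refine of_exists_lift (by simp [h.comp_eq_zero]) fun T k hk => ?_
  obtain ⟨l, hl⟩ := h.exists_lift k hk
  exact ⟨l ≫ e.inv, by simpa using hl⟩

lemma of_iso_right (h : IsShortExact f g) {Z' : A} (e : Z ≅ Z') : IsShortExact f (g ≫ e.hom) := by
  have := h.mono
  have := h.epi
  refine of_exists_desc (by simp [reassoc_of% h.comp_eq_zero]) fun T k hk => ?_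
  obtain ⟨l, hl⟩ := h.exists_desc k hk
  exact ⟨e.inv ≫ l, by simpa using hl⟩

lemma exists_of_isPushout (h : IsShortExact f g) {N E : A} {φ : X ⟶ N} {a : Y ⟶ E} {b : N ⟶ E}
    (sq : IsPushout f φ a b) : ∃ q : E ⟶ Z, a ≫ q = g ∧ IsShortExact b q := by
  have hb : Mono b := (MorphismProperty.monomorphisms A).of_isPushout sq.flip
    (MorphismProperty.monomorphisms.infer_property (hf := h.mono) f)
  have := h.epi
  let q := sq.desc g 0 (by simp [h.comp_eq_zero])
  have haq : a ≫ q = g := sq.inl_desc _ _ _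
  have hbq : b ≫ q = 0 := sq.inr_desc _ _ _
  have : Epi q := by
    have : Epi (a ≫ q) := by rwa [haq]
    exact epi_of_epi a q
  refine ⟨q, haq, of_exists_desc hbq fun T t ht => ?_⟩
  obtain ⟨l, hl⟩ := h.exists_desc (a ≫ t) (by rw [← Category.assoc, sq.w, Category.assoc, ht,
    comp_zero])
  exact ⟨l, sq.hom_ext (by rw [reassoc_of% haq, hl]) (by rw [reassoc_of% hbq, ht, zero_comp])⟩

lemma exists_of_isPullback (h : IsShortExact f g) {N E : A} {φ : N ⟶ Z} {a : E ⟶ Y} {b : E ⟶ N}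
    (sq : IsPullback a b g φ) : ∃ q : X ⟶ E, q ≫ a = f ∧ IsShortExact q b := by
  have := h.mono
  have := h.epi
  have : Epi b := by
    have := Abelian.epi_pullback_of_epi_f g φ
    rw [← sq.isoPullback_hom_snd]
    infer_instance
  let q := sq.lift f 0 (by simp [h.comp_eq_zero])
  have hqa : q ≫ a = f := sq.lift_fst _ _ _
  have hqb : q ≫ b = 0 := sq.lift_snd _ _ _
  have : Mono q := by
    have : Mono (q ≫ a) := by rwa [hqa]
    exact mono_of_mono q a
  refine ⟨q, hqa, of_exists_lift hqb fun T t ht => ?_⟩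
  obtain ⟨l, hl⟩ := h.exists_lift (t ≫ a) (by rw [Category.assoc, sq.w, reassoc_of% ht, zero_comp])
  exact ⟨l, sq.hom_ext (by rw [Category.assoc, hqa, hl])
    (by rw [Category.assoc, hqb, ht, comp_zero])⟩

lemma exists_retraction (h : IsShortExact f g) {s : Z ⟶ Y} (hs : s ≫ g = 𝟙 Z) :
    ∃ r : Y ⟶ X, f ≫ r = 𝟙 X :=
  let σ := ShortComplex.Splitting.ofExactOfSection _ h.2.exact s hs h.2.mono_f
  ⟨σ.r, σ.f_r⟩

lemma exists_section (h : IsShortExact f g) {r : Y ⟶ X} (hr : f ≫ r = 𝟙 X) :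
    ∃ s : Z ⟶ Y, s ≫ g = 𝟙 Z :=
  let σ := ShortComplex.Splitting.ofExactOfRetraction _ h.2.exact r hr h.2.epi_g
  ⟨σ.s, σ.s_g⟩

lemma exact_comp (h : IsShortExact f g) {P W : A} (q : P ⟶ X) (j : Z ⟶ W) [Epi q] [Mono j] :
    ∃ w : (q ≫ f) ≫ g ≫ j = 0, (ShortComplex.mk (q ≫ f) (g ≫ j) w).Exact := by
  have w : (q ≫ f) ≫ g ≫ j = 0 := by simp [reassoc_of% h.comp_eq_zero]
  refine ⟨w, ?_⟩
  rw [ShortComplex.exact_iff_exact_up_to_refinements]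
  intro T k hk
  have hkg : k ≫ g = 0 := by rw [← cancel_mono j]; simpa using hk
  obtain ⟨l, hl⟩ := h.exists_lift k hkg
  refine ⟨Limits.pullback l q, pullback.fst l q, inferInstance, pullback.snd l q, ?_⟩
  rw [← hl, ← Category.assoc, pullback.condition, Category.assoc]

end IsShortExact

variable {X N : A}

lemma ext1Zero.exists_lift (h : ext1Zero X N) {E B : A} {f : N ⟶ E} {g : E ⟶ B}
    (s : IsShortExact f g) (φ : X ⟶ B) : ∃ l : X ⟶ E, l ≫ g = φ := by
  obtain ⟨q, -, sq⟩ := s.exists_of_isPullback (IsPullback.of_hasPullback g φ)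
  obtain ⟨t, ht⟩ := h _ _ _ sq.1 sq.2
  exact ⟨t ≫ pullback.fst g φ, by rw [Category.assoc, pullback.condition, reassoc_of% ht]⟩

lemma ext1Zero.exists_extend (h : ext1Zero X N) {K P : A} {k : K ⟶ P} {p : P ⟶ X}
    (s : IsShortExact k p) (φ : K ⟶ N) : ∃ ψ : P ⟶ N, k ≫ ψ = φ := by
  obtain ⟨q, -, sq⟩ := s.exists_of_isPushout (IsPushout.of_hasPushout k φ)
  obtain ⟨t, ht⟩ := h _ _ _ sq.1 sq.2
  obtain ⟨r, hr⟩ := sq.exists_retraction ht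
  exact ⟨pushout.inl k φ ≫ r, by rw [pushout.condition_assoc, hr, Category.comp_id]⟩

lemma ext1Zero_of_exists_lift
    (h : ∀ (E B : A) (f : N ⟶ E) (g : E ⟶ B), IsShortExact f g →
      ∀ φ : X ⟶ B, ∃ l : X ⟶ E, l ≫ g = φ) : ext1Zero X N :=
  fun E f g w s => h E X f g ⟨w, s⟩ (𝟙 X)

lemma ext1Zero_of_projective_presentation {K P : A} [Projective P] {k : K ⟶ P} {p : P ⟶ X}
    (s : IsShortExact k p) (h : ∀ φ : K ⟶ N, ∃ ψ : P ⟶ N, k ≫ ψ = φ) : ext1Zero X N := by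
  intro E f g w hE
  have se : IsShortExact f g := ⟨w, hE⟩
  have := se.epi
  have := s.epi
  obtain ⟨φ, hφ⟩ := se.exists_lift (k ≫ Projective.factorThru p g) (by simp [s.comp_eq_zero])
  obtain ⟨ψ, hψ⟩ := h φ
  obtain ⟨t, ht⟩ := s.exists_desc (Projective.factorThru p g - ψ ≫ f) (by
    rw [Preadditive.comp_sub, reassoc_of% hψ, hφ, sub_self])
  exact ⟨t, by rw [← cancel_epi p, reassoc_of% ht]; simp [w]⟩

lemma ext1Zero_of_injective_copresentation {I C : A} [Injective I] {k : N ⟶ I} {p : I ⟶ C}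
    (s : IsShortExact k p) (h : ∀ φ : X ⟶ C, ∃ ψ : X ⟶ I, ψ ≫ p = φ) : ext1Zero X N := by
  intro E f g w hE
  have se : IsShortExact f g := ⟨w, hE⟩
  have := se.mono
  have := s.mono
  obtain ⟨φ, hφ⟩ := se.exists_desc (Injective.factorThru k f ≫ p) (by simp [s.comp_eq_zero])
  obtain ⟨ψ, hψ⟩ := h φ
  obtain ⟨r, hr⟩ := s.exists_lift (Injective.factorThru k f - g ≫ ψ) (by simp [hψ, hφ])
  exact se.exists_section (r := r) (by
    rw [← cancel_mono k, Category.assoc, hr]; simp [reassoc_of% w])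

lemma ext1Zero_of_projective [Projective X] : ext1Zero X N := fun _ _ g _ s =>
  have := s.epi_g
  ⟨Projective.factorThru (𝟙 X) g, Projective.factorThru_comp _ _⟩

lemma ext1Zero_of_injective [Injective N] : ext1Zero X N := fun _ f _ w s =>
  have := s.mono_f
  IsShortExact.exists_section ⟨w, s⟩ (r := Injective.factorThru (𝟙 N) f) (by simp)

lemma ext1Zero.of_retract {X' : A} (h : ext1Zero X' N) (e : Retract X X') : ext1Zero X N :=
  ext1Zero_of_exists_lift fun _ _ _ _ s φ => by
    obtain ⟨l, hl⟩ := h.exists_lift s (e.r ≫ φ)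
    exact ⟨e.i ≫ l, by simp [hl]⟩

lemma ext1Zero.of_isShortExact [EnoughInjectives A] {Y Z : A} {f : X ⟶ Y} {g : Y ⟶ Z}
    (s : IsShortExact f g) (hX : ext1Zero X N) (hZ : ext1Zero Z N) : ext1Zero Y N := by
  have t := IsShortExact.cokernel_π (Injective.ι N)
  have := s.mono
  refine ext1Zero_of_injective_copresentation t fun φ => ?_
  obtain ⟨l, hl⟩ := hX.exists_lift t (f ≫ φ)
  obtain ⟨m, hm⟩ := s.exists_desc (φ - Injective.factorThru l f ≫ cokernel.π (Injective.ι N)) (by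
    simp [hl])
  obtain ⟨n, hn⟩ := hZ.exists_lift t m
  exact ⟨g ≫ n + Injective.factorThru l f, by simp [hn, hm]⟩

lemma ext1Zero_cokernel_of_syzygy {K P M C : A} [Projective P] {k : K ⟶ P} {p : P ⟶ X}
    (s : IsShortExact k p) {f : M ⟶ N} {g : N ⟶ C} (t : IsShortExact f g)
    (hK : ext1Zero K M) (hX : ext1Zero X N) : ext1Zero X C :=
  ext1Zero_of_projective_presentation s fun φ => by
    obtain ⟨l, hl⟩ := hK.exists_lift t φ
    obtain ⟨m, hm⟩ := hX.exists_extend s l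
    exact ⟨m ≫ g, by rw [reassoc_of% hm, hl]⟩

lemma ext1Zero_kernel_of_cosyzygy [EnoughProjectives A] {P X' M C : A} [Projective P] {k : X ⟶ P}
    {p : P ⟶ X'} (s : IsShortExact k p) {f : M ⟶ N} {g : N ⟶ C} (t : IsShortExact f g)
    (hX : ext1Zero X N) (hX' : ext1Zero X' C) : ext1Zero X M := by
  have r := IsShortExact.kernel_ι (Projective.π X)
  have := t.epi
  have := t.mono
  refine ext1Zero_of_projective_presentation r fun a => ?_
  obtain ⟨b, hb⟩ := hX.exists_extend r (a ≫ f)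
  obtain ⟨c, hc⟩ := r.exists_desc (b ≫ g) (by simp [reassoc_of% hb, t.comp_eq_zero])
  obtain ⟨d, hd⟩ := hX'.exists_extend s c
  obtain ⟨e, he⟩ := t.exists_lift (b - Projective.π X ≫ k ≫ Projective.factorThru d g) (by
    simp [hd, hc])
  exact ⟨e, by rw [← cancel_mono f, Category.assoc, he, Preadditive.comp_sub, hb]; simp⟩

lemma ext1Zero_iff_hom_exact {Q W P Y P' Z : A} {q : Q ⟶ W} {f : W ⟶ P} {g : P ⟶ Y} {f' : Y ⟶ P'}
    {g' : P' ⟶ Z} [Epi q] [Projective P'] (s : IsShortExact f g) (s' : IsShortExact f' g') :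
    ext1Zero Z N ↔
      ∀ β : P ⟶ N, (q ≫ f) ≫ β = 0 → ∃ γ : P' ⟶ N, (g ≫ f') ≫ γ = β := by
  have := s.epi
  refine ⟨fun h β hβ => ?_, fun h => ext1Zero_of_projective_presentation s' fun φ => ?_⟩
  · have hfβ : f ≫ β = 0 := by rw [← cancel_epi q]; simpa using hβ
    obtain ⟨l, hl⟩ := s.exists_desc β hfβ
    obtain ⟨γ, hγ⟩ := h.exists_extend s' l
    exact ⟨γ, by rw [Category.assoc, hγ, hl]⟩
  · obtain ⟨γ, hγ⟩ := h (g ≫ φ) (by simp [reassoc_of% s.comp_eq_zero])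
    exact ⟨γ, by rw [← cancel_epi g, ← hγ, Category.assoc]⟩

end ShortExact

/-! ### Relative Gorenstein projective objects -/

section RelGorensteinProjective

variable {A : Type u} [Category.{v} A] [Abelian A]

/-- `X` is a (first) syzygy of `Y`: there is a short exact sequence `0 ⟶ X ⟶ P ⟶ Y ⟶ 0` with `P`
projective. -/
def IsSyzygy (X Y : A) : Prop :=
  ∃ (P : A) (f : X ⟶ P) (g : P ⟶ Y), Projective P ∧ IsShortExact f g

/-- A class each of whose members is both a syzygy and a cosyzygy of members. -/
def IsSyzygyClosed (L : Set A) : Prop :=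
  ∀ X ∈ L, (∃ Y ∈ L, IsSyzygy X Y) ∧ ∃ Y ∈ L, IsSyzygy Y X

/-- The Gorenstein projective objects relative to `T`: the cycles of the exact complexes of
projective objects that stay exact under `Hom(-, N)` for all `N ∈ T`. Instead of a complex we ask
for the class of its cycles (see `relGorensteinProj_of_ascending` and its companions). -/
def relGorensteinProj (T : Set A) : Set A :=
  {X | ∃ L, IsSyzygyClosed L ∧ X ∈ L ∧ L ⊆ leftPerp T}

lemma isSyzygyClosed_relGorensteinProj (T : Set A) : IsSyzygyClosed (relGorensteinProj T) := by
  rintro X ⟨L, hL, hX, hT⟩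
  obtain ⟨⟨Y, hY, hXY⟩, ⟨Z, hZ, hZX⟩⟩ := hL X hX
  exact ⟨⟨Y, ⟨L, hL, hY, hT⟩, hXY⟩, ⟨Z, ⟨L, hL, hZ, hT⟩, hZX⟩⟩

lemma relGorensteinProj_subset_leftPerp (T : Set A) : relGorensteinProj T ⊆ leftPerp T := by
  rintro X ⟨L, -, hX, hT⟩
  exact hT hX

lemma relGorensteinProj_of_family {T : Set A} {ι : Type*} (x : ι → A)
    (hsyz : ∀ i, ∃ j, IsSyzygy (x i) (x j)) (hcosyz : ∀ i, ∃ j, IsSyzygy (x j) (x i))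
    (hT : ∀ i, x i ∈ leftPerp T) (i : ι) : x i ∈ relGorensteinProj T := by
  refine ⟨Set.range x, ?_, ⟨i, rfl⟩, Set.range_subset_iff.2 hT⟩
  rintro _ ⟨i, rfl⟩
  obtain ⟨j, hj⟩ := hsyz i
  obtain ⟨k, hk⟩ := hcosyz i
  exact ⟨⟨x j, ⟨j, rfl⟩, hj⟩, ⟨x k, ⟨k, rfl⟩, hk⟩⟩

lemma relGorensteinProj_of_iso {T : Set A} {X Y : A} (e : X ≅ Y) (hY : Y ∈ relGorensteinProj T) :
    X ∈ relGorensteinProj T := by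
  refine ⟨insert X (relGorensteinProj T), ?_, Set.mem_insert _ _, Set.insert_subset ?_ ?_⟩
  · have hG := isSyzygyClosed_relGorensteinProj T
    rintro W (rfl | hW)
    · obtain ⟨⟨Z, hZ, P, f, g, hP, s⟩, ⟨Z', hZ', P', f', g', hP', s'⟩⟩ := hG Y hY
      exact ⟨⟨Z, Or.inr hZ, P, _, g, hP, s.of_iso_left e⟩,
        ⟨Z', Or.inr hZ', P', f', _, hP', s'.of_iso_right e.symm⟩⟩
    · obtain ⟨⟨Z, hZ, h⟩, ⟨Z', hZ', h'⟩⟩ := hG W hW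
      exact ⟨⟨Z, Or.inr hZ, h⟩, ⟨Z', Or.inr hZ', h'⟩⟩
  · exact fun N hN => (relGorensteinProj_subset_leftPerp T hY N hN).of_retract (.ofIso e)
  · exact relGorensteinProj_subset_leftPerp T

lemma exists_int_seq {α : Type*} {r : α → α → Prop} (hnext : ∀ a, ∃ b, r a b)
    (hprev : ∀ a, ∃ b, r b a) (a : α) : ∃ x : ℤ → α, x 0 = a ∧ ∀ n, r (x n) (x (n + 1)) := by
  choose s hs using hnext
  choose p hp using hprev
  refine ⟨fun n => Int.rec (fun k => s^[k] a) (fun k => p^[k + 1] a) n, rfl, fun n => ?_⟩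
  match n with
  | .ofNat k =>
    change r (s^[k] a) (s^[k + 1] a)
    rw [Function.iterate_succ_apply']
    exact hs _
  | .negSucc 0 => exact hp a
  | .negSucc (k + 1) =>
    rw [show Int.negSucc (k + 1) + 1 = Int.negSucc k by lia]
    change r (p^[k + 1 + 1] a) (p^[k + 1] a)
    rw [Function.iterate_succ_apply' p (k + 1)]
    exact hp _

lemma exists_ascending_of_relGorensteinProj {T : Set A} {X : A} (hX : X ∈ relGorensteinProj T) :
    ∃ (P : ℤ → A) (d : ∀ n : ℤ, P n ⟶ P (n + 1)), (∀ n, Projective (P n)) ∧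
    (∀ n, ∃ w : d n ≫ d (n + 1) = 0, (ShortComplex.mk (d n) (d (n + 1)) w).Exact) ∧
    Nonempty (X ≅ kernel (d 0)) ∧ ∀ N ∈ T, ∀ (n : ℤ) (β : P (n + 1) ⟶ N),
      d n ≫ β = 0 → ∃ γ : P (n + 1 + 1) ⟶ N, d (n + 1) ≫ γ = β := by
  have hG := isSyzygyClosed_relGorensteinProj T
  obtain ⟨x, hx0, hx⟩ := exists_int_seq (α := relGorensteinProj T) (r := fun a b => IsSyzygy a.1 b)
    (fun a => by simpa using (hG a a.2).1) (fun a => by simpa using (hG a a.2).2) ⟨X, hX⟩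
  choose P f g hP s using hx
  have hg n : Epi (g n) := (s n).epi
  have hf n : Mono (f n) := (s n).mono
  refine ⟨P, fun n => g n ≫ f (n + 1), hP, fun n => (s (n + 1)).exact_comp _ _, ?_, ?_⟩
  · rw [← show (x 0).1 = X by rw [hx0]]
    exact ⟨((kernelCompMono _ _).trans
      ((kernelIsKernel (g 0)).conePointUniqueUpToIso (s 0).2.fIsKernel)).symm⟩
  · exact fun N hN n => (ext1Zero_iff_hom_exact (s (n + 1)) (s (n + 1 + 1))).1
      (relGorensteinProj_subset_leftPerp T (x _).2 N hN)

lemma exists_descending_of_relGorensteinProj {T : Set A} {X : A} (hX : X ∈ relGorensteinProj T) :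
    ∃ (P : ℤ → A) (d : ∀ n : ℤ, P (n + 1) ⟶ P n), (∀ n, Projective (P n)) ∧
    (∀ n, ∃ w : d (n + 1) ≫ d n = 0, (ShortComplex.mk (d (n + 1)) (d n) w).Exact) ∧
    Nonempty (X ≅ cokernel (d 0)) ∧ ∀ N ∈ T, ∀ (n : ℤ) (β : P (n + 1) ⟶ N),
      d (n + 1) ≫ β = 0 → ∃ γ : P n ⟶ N, d n ≫ γ = β := by
  have hG := isSyzygyClosed_relGorensteinProj T
  obtain ⟨x, hx0, hx⟩ := exists_int_seq (α := relGorensteinProj T) (r := fun a b => IsSyzygy b.1 a)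
    (fun a => by simpa using (hG a a.2).2) (fun a => by simpa using (hG a a.2).1) ⟨X, hX⟩
  choose P f g hP s using hx
  have hg n : Epi (g n) := (s n).epi
  have hf n : Mono (f n) := (s n).mono
  refine ⟨P, fun n => g (n + 1) ≫ f n, hP, fun n => (s (n + 1)).exact_comp _ _, ?_, ?_⟩
  · rw [← show (x 0).1 = X by rw [hx0]]
    exact ⟨((cokernelEpiComp _ _).trans
      ((cokernelIsCokernel (f 0)).coconePointUniqueUpToIso (s 0).2.gIsCokernel)).symm⟩
  · exact fun N hN n => (ext1Zero_iff_hom_exact (s (n + 1)) (s n)).1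
      (relGorensteinProj_subset_leftPerp T (x n).2 N hN)

lemma isShortExact_kernel_lift {X Y Z : A} {d : X ⟶ Y} {d' : Y ⟶ Z} (w : d ≫ d' = 0)
    (h : (ShortComplex.mk d d' w).Exact) : IsShortExact (kernel.ι d) (kernel.lift d' d w) := by
  have : Epi (kernel.lift d' d w) := (ShortComplex.mk d d' w).exact_iff_epi_kernel_lift.1 h
  refine .of_exists_lift (by simp [← cancel_mono (kernel.ι d')]) fun T k hk => ?_
  exact ⟨kernel.lift d k (by simpa using congr($hk ≫ kernel.ι _)), kernel.lift_ι _ _ _⟩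

lemma isShortExact_cokernel_desc {X Y Z : A} {d : X ⟶ Y} {d' : Y ⟶ Z} (w : d ≫ d' = 0)
    (h : (ShortComplex.mk d d' w).Exact) :
    IsShortExact (cokernel.desc d d' w) (cokernel.π d') := by
  have : Mono (cokernel.desc d d' w) :=
    (ShortComplex.mk d d' w).exact_iff_mono_cokernel_desc.1 h
  refine .of_exists_desc (by simp [← cancel_epi (cokernel.π d)]) fun T k hk => ?_
  exact ⟨cokernel.desc d' k (by simpa using congr(cokernel.π _ ≫ $hk)), cokernel.π_desc _ _ _⟩

lemma relGorensteinProj_of_ascending {T : Set A} (P : ℤ → A) (d : ∀ n : ℤ, P n ⟶ P (n + 1))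
    (hP : ∀ n, Projective (P n))
    (hd : ∀ n, ∃ w : d n ≫ d (n + 1) = 0, (ShortComplex.mk (d n) (d (n + 1)) w).Exact)
    (hT : ∀ N ∈ T, ∀ (n : ℤ) (β : P (n + 1) ⟶ N),
      d n ≫ β = 0 → ∃ γ : P (n + 1 + 1) ⟶ N, d (n + 1) ≫ γ = β) (n : ℤ) :
    kernel (d n) ∈ relGorensteinProj T := by
  choose w hd using hd
  have s n : IsShortExact (kernel.ι (d n)) (kernel.lift (d (n + 1)) (d n) (w n)) :=
    isShortExact_kernel_lift (w n) (hd n)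
  have hcosyz n : ∃ m, IsSyzygy (kernel (d m)) (kernel (d n)) := by
    obtain ⟨m, rfl⟩ : ∃ m, n = m + 1 := ⟨n - 1, by ring⟩
    exact ⟨m, _, _, _, hP m, s m⟩
  refine relGorensteinProj_of_family (fun n => kernel (d n))
    (fun n => ⟨n + 1, _, _, _, hP n, s n⟩) hcosyz (fun n N hN => ?_) n
  obtain ⟨m, rfl⟩ : ∃ m, n = m + 1 + 1 + 1 := ⟨n - 3, by ring⟩
  have := (s m).epi
  refine (ext1Zero_iff_hom_exact (q := kernel.lift (d (m + 1)) (d m) (w m))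
    (s (m + 1)) (s (m + 1 + 1))).2 fun β hβ => ?_
  obtain ⟨γ, hγ⟩ := hT N hN m β (by simpa using hβ)
  exact ⟨γ, by simpa using hγ⟩

lemma relGorensteinProj_of_descending {T : Set A} (P : ℤ → A) (d : ∀ n : ℤ, P (n + 1) ⟶ P n)
    (hP : ∀ n, Projective (P n))
    (hd : ∀ n, ∃ w : d (n + 1) ≫ d n = 0, (ShortComplex.mk (d (n + 1)) (d n) w).Exact)
    (hT : ∀ N ∈ T, ∀ (n : ℤ) (β : P (n + 1) ⟶ N),
      d (n + 1) ≫ β = 0 → ∃ γ : P n ⟶ N, d n ≫ γ = β) (n : ℤ) :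
    cokernel (d n) ∈ relGorensteinProj T := by
  choose w hd using hd
  have s n : IsShortExact (cokernel.desc (d (n + 1)) (d n) (w n)) (cokernel.π (d n)) :=
    isShortExact_cokernel_desc (w n) (hd n)
  have hsyz n : ∃ m, IsSyzygy (cokernel (d n)) (cokernel (d m)) := by
    obtain ⟨m, rfl⟩ : ∃ m, n = m + 1 := ⟨n - 1, by ring⟩
    exact ⟨m, _, _, _, hP m, s m⟩
  refine relGorensteinProj_of_family (fun n => cokernel (d n)) hsyz
    (fun n => ⟨n + 1, _, _, _, hP n, s n⟩) (fun n N hN => ?_) n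
  refine (ext1Zero_iff_hom_exact (q := cokernel.π (d (n + 1 + 1)))
    (s (n + 1)) (s n)).2 fun β hβ => ?_
  obtain ⟨γ, hγ⟩ := hT N hN n β (by simpa using hβ)
  exact ⟨γ, by simpa using hγ⟩

end RelGorensteinProjective

/-! ### Cotorsion pairs generated by syzygy-closed classes -/

section CotorsionPair

variable {A : Type u} [Category.{v} A] [Abelian A] {G : Set A}

lemma rightPerp_of_cokernel (hG : IsSyzygyClosed G) {M N C : A} {f : M ⟶ N} {g : N ⟶ C}
    (t : IsShortExact f g) (hM : M ∈ rightPerp G) (hN : N ∈ rightPerp G) : C ∈ rightPerp G := by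
  intro X hX
  obtain ⟨-, Z, hZ, P, k, p, _, s⟩ := hG X hX
  exact ext1Zero_cokernel_of_syzygy s t (hM Z hZ) (hN X hX)

lemma rightPerp_of_kernel [EnoughProjectives A] (hG : IsSyzygyClosed G) {M N C : A} {f : M ⟶ N}
    {g : N ⟶ C} (t : IsShortExact f g) (hN : N ∈ rightPerp G) (hC : C ∈ rightPerp G) :
    M ∈ rightPerp G := by
  intro X hX
  obtain ⟨⟨Z, hZ, P, k, p, _, s⟩, -⟩ := hG X hX
  exact ext1Zero_kernel_of_cosyzygy s t (hN X hX) (hC Z hZ)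

lemma isHereditaryCP_rightPerp (hG : IsSyzygyClosed G) {L : Set A}
    (hL : L ⊆ leftPerp (rightPerp G)) : IsHereditaryCP L (rightPerp G) := by
  intro X hX N hN n
  induction n generalizing N with
  | zero => exact hL hX N hN
  | succ _ ih =>
    intro I Z f g w hI s
    exact ih Z (rightPerp_of_cokernel hG ⟨w, s⟩ hN fun X _ => ext1Zero_of_injective)

lemma leftPerp_of_isShortExact [EnoughInjectives A] {S : Set A} {X Y Z : A} {f : X ⟶ Y}
    {g : Y ⟶ Z} (s : IsShortExact f g) (hX : X ∈ leftPerp S) (hZ : Z ∈ leftPerp S) :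
    Y ∈ leftPerp S :=
  fun N hN => .of_isShortExact s (hX N hN) (hZ N hN)

lemma projective_of_mem_leftPerp_of_mem_rightPerp [EnoughProjectives A] (hG : IsSyzygyClosed G)
    (hP : ∀ P : A, Projective P → P ∈ rightPerp G) {Y : A} (hl : Y ∈ leftPerp (rightPerp G))
    (hr : Y ∈ rightPerp G) : Projective Y := by
  have s := IsShortExact.kernel_ι (Projective.π Y)
  obtain ⟨t, ht⟩ := hl _ (rightPerp_of_kernel hG s (hP _ inferInstance) hr) _ _ _ s.1 s.2
  exact Retract.projective ⟨t, _, ht⟩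

lemma leftPerp_rightPerp_of_syzygy [EnoughInjectives A] (hG : IsSyzygyClosed G) {K P X : A}
    [Projective P] {k : K ⟶ P} {p : P ⟶ X} (s : IsShortExact k p)
    (hX : X ∈ leftPerp (rightPerp G)) : K ∈ leftPerp (rightPerp G) := by
  intro N hN
  have t := IsShortExact.cokernel_π (Injective.ι N)
  have hC : cokernel (Injective.ι N) ∈ rightPerp G :=
    rightPerp_of_cokernel hG t hN fun X _ => ext1Zero_of_injective
  refine ext1Zero_of_injective_copresentation t fun φ => ?_
  obtain ⟨ψ, hψ⟩ := (hX _ hC).exists_extend s φ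
  exact ⟨k ≫ Projective.factorThru ψ (cokernel.π (Injective.ι N)), by simp [hψ]⟩

/-- Every object `M` has a special `Y`-preenvelope with respect to `X`: a short exact sequence
`0 ⟶ M ⟶ YM ⟶ XM ⟶ 0` with `YM ∈ Y` and `XM ∈ X`. This is the first half of `IsCompleteCP X Y`. -/
def HasSpecialPreenvelopes (X Y : Set A) : Prop :=
  ∀ M : A, ∃ (YM XM : A) (f : M ⟶ YM) (g : YM ⟶ XM), IsShortExact f g ∧ YM ∈ Y ∧ XM ∈ X

variable [EnoughProjectives A] [EnoughInjectives A]

-- Salce's trick: push out `0 ⟶ K ⟶ P ⟶ M ⟶ 0` along a special preenvelope of `K`.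
lemma isCompleteCP_of_hasSpecialPreenvelopes {S : Set A}
    (h : HasSpecialPreenvelopes (leftPerp S) S) : IsCompleteCP (leftPerp S) S := by
  refine ⟨fun M => ?_, fun M => ?_⟩
  · obtain ⟨Y, X, f, g, s, hY, hX⟩ := h M
    exact ⟨Y, X, f, g, s.1, s.2, hY, hX⟩
  · obtain ⟨Y, X, f, g, s, hY, hX⟩ := h (kernel (Projective.π M))
    have sq := IsPushout.of_hasPushout (kernel.ι (Projective.π M)) f
    obtain ⟨q, -, sYM⟩ := (IsShortExact.kernel_ι (Projective.π M)).exists_of_isPushout sq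
    obtain ⟨q', -, sPX⟩ := s.exists_of_isPushout sq.flip
    exact ⟨Y, _, _, _, sYM.1, sYM.2, hY,
      leftPerp_of_isShortExact sPX (fun N _ => ext1Zero_of_projective) hX⟩

lemma isSyzygyClosed_leftPerp_rightPerp (hG : IsSyzygyClosed G)
    (hP : ∀ P : A, Projective P → P ∈ rightPerp G)
    (h : HasSpecialPreenvelopes (leftPerp (rightPerp G)) (rightPerp G)) :
    IsSyzygyClosed (leftPerp (rightPerp G)) := by
  refine fun X hX => ⟨?_, ?_⟩
  · obtain ⟨Y, X', f, g, s, hY, hX'⟩ := h X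
    have hYl := leftPerp_of_isShortExact s hX hX'
    exact ⟨X', hX', Y, f, g, projective_of_mem_leftPerp_of_mem_rightPerp hG hP hYl hY, s⟩
  · have s := IsShortExact.kernel_ι (Projective.π X)
    exact ⟨_, leftPerp_rightPerp_of_syzygy hG s hX, _, _, _, inferInstance, s⟩

end CotorsionPair
/-! ### Character duality for tensor products -/

section Characters

/-- The group `ℚ/ℤ`, lifted to universe `u`; homomorphisms into it are the characters. -/
abbrev QZ : Type u := ULift.{u} (AddCircle (1 : ℚ))

variable {A B C : Type u} [AddCommGroup A] [AddCommGroup B] [AddCommGroup C]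

lemma exists_character_extension {f : A →+ B} (hf : Function.Injective f) (χ : A →+ QZ.{u}) :
    ∃ ξ : B →+ QZ.{u}, ξ.comp f = χ := by
  obtain ⟨ξ, hξ⟩ := CharacterModule.dual_surjective_of_injective f.toIntLinearMap hf
    ((AddEquiv.ulift.toAddMonoidHom.comp χ : A →+ AddCircle (1 : ℚ)) : CharacterModule A)
  refine ⟨AddEquiv.ulift.symm.toAddMonoidHom.comp (ξ : B →+ AddCircle (1 : ℚ)),
    AddMonoidHom.ext fun a => ?_⟩
  exact ULift.ext _ _ (DFunLike.congr_fun hξ a)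

lemma exists_character_ne_zero {a : A} (ha : a ≠ 0) : ∃ χ : A →+ QZ.{u}, χ a ≠ 0 := by
  obtain ⟨χ, hχ⟩ := CharacterModule.exists_character_apply_ne_zero_of_ne_zero ha
  refine ⟨AddEquiv.ulift.symm.toAddMonoidHom.comp (χ : A →+ AddCircle (1 : ℚ)), fun h => hχ ?_⟩
  exact congrArg ULift.down h

lemma exists_character_of_notMem {S : AddSubgroup A} {a : A} (ha : a ∉ S) :
    ∃ χ : A →+ QZ.{u}, χ a ≠ 0 ∧ ∀ s ∈ S, χ s = 0 := by
  obtain ⟨χ, hχ⟩ := exists_character_ne_zero (a := (a : A ⧸ S)) (by simpa using ha)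
  refine ⟨χ.comp (QuotientAddGroup.mk' S), hχ, fun s hs => ?_⟩
  simp [(QuotientAddGroup.eq_zero_iff s).2 hs]

lemma exists_character_comp_eq (g : B →+ C) (χ : B →+ QZ.{u}) (h : g.ker ≤ χ.ker) :
    ∃ ξ : C →+ QZ.{u}, ξ.comp g = χ := by
  obtain ⟨ξ, hξ⟩ := exists_character_extension (QuotientAddGroup.kerLift_injective g)
    (QuotientAddGroup.lift g.ker χ h)
  exact ⟨ξ, AddMonoidHom.ext fun b => DFunLike.congr_fun hξ (b : B ⧸ g.ker)⟩

lemma exact_iff_characters (f : A →+ B) (g : B →+ C) : Function.Exact f g ↔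
    ∀ χ : B →+ QZ.{u}, χ.comp f = 0 ↔ ∃ ξ : C →+ QZ.{u}, ξ.comp g = χ := by
  refine ⟨fun h χ => ⟨fun hχ => exists_character_comp_eq g χ fun b hb => ?_, ?_⟩,
    fun h b => ⟨fun hb => ?_, ?_⟩⟩
  · obtain ⟨a, rfl⟩ := (h b).1 hb
    exact DFunLike.congr_fun hχ a
  · rintro ⟨ξ, rfl⟩
    exact AddMonoidHom.ext fun a => by simp [h.apply_apply_eq_zero]
  · by_contra hb'
    obtain ⟨χ, hχb, hχf⟩ := exists_character_of_notMem (S := f.range) hb'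
    obtain ⟨ξ, rfl⟩ := (h χ).1 (AddMonoidHom.ext fun a => hχf _ ⟨a, rfl⟩)
    exact hχb (by simp [hb])
  · rintro ⟨a, rfl⟩
    by_contra ha
    obtain ⟨χ, hχ⟩ := exists_character_ne_zero ha
    exact hχ (DFunLike.congr_fun ((h (χ.comp g)).2 ⟨χ, rfl⟩) a)

end Characters

namespace NcTensor

variable {R : Type u} [Ring R] {E : Type u} [AddCommGroup E] [Module Rᵐᵒᵖ E]
  {M : Type u} [AddCommGroup M] [Module R M] {G : Type u} [AddCommGroup G]

lemma tmul_add (e : E) (m m' : M) :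
    tmul R E M e (m + m') = tmul R E M e m + tmul R E M e m' := by
  simp only [tmul, TensorProduct.tmul_add, Submodule.Quotient.mk_add]

lemma add_tmul (e e' : E) (m : M) :
    tmul R E M (e + e') m = tmul R E M e m + tmul R E M e' m := by
  simp only [tmul, TensorProduct.add_tmul, Submodule.Quotient.mk_add]

lemma smul_tmul (e : E) (r : R) (m : M) :
    tmul R E M (MulOpposite.op r • e) m = tmul R E M e (r • m) :=
  (Submodule.Quotient.eq _).2 (Submodule.subset_span ⟨e, r, m, rfl⟩)

lemma addMonoidHom_ext {χ ξ : NcTensor R E M →+ G}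
    (h : ∀ e m, χ (tmul R E M e m) = ξ (tmul R E M e m)) : χ = ξ := by
  refine AddMonoidHom.ext fun z => ?_
  obtain ⟨z, rfl⟩ := Submodule.Quotient.mk_surjective _ z
  induction z with
  | zero => simp
  | tmul e m => exact h e m
  | add x y hx hy => simp [hx, hy]

/-- The homomorphism out of `E ⊗_R M` induced by an `R`-balanced biadditive map. -/
noncomputable def lift (β : M →ₗ[R] (E →+ G)) : NcTensor R E M →+ G :=
  (Submodule.liftQ (ncRel R E M) (TensorProduct.lift
    (LinearMap.mk₂ ℤ (fun e m => β m e) (fun a b c => by simp) (fun n a b => by simp)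
      (fun a b c => by simp) (fun n a b => by simp))) (by
    refine Submodule.span_le.2 ?_
    rintro z ⟨e, r, m, rfl⟩
    refine LinearMap.mem_ker.2 ((map_sub _ _ _).trans (sub_eq_zero.2 ?_))
    change β m (MulOpposite.op r • e) = β (r • m) e
    rw [β.map_smul, smul_addHom_apply])).toAddMonoidHom

/-- The tensor-hom adjunction over a noncommutative ring, on the level of underlying sets. -/
noncomputable def homEquiv : (NcTensor R E M →+ G) ≃ (M →ₗ[R] (E →+ G)) where
  toFun χ :=
    { toFun m := AddMonoidHom.mk' (fun e => χ (tmul R E M e m)) fun a b => by simp [add_tmul]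
      map_add' m m' := AddMonoidHom.ext fun e => by simp [tmul_add]
      map_smul' r m := AddMonoidHom.ext fun e => by simp [smul_tmul] }
  invFun := lift
  left_inv _ := addMonoidHom_ext fun _ _ => rfl
  right_inv _ := rfl

lemma exact_map_iff {M₁ M₂ M₃ : Type u} [AddCommGroup M₁] [AddCommGroup M₂] [AddCommGroup M₃]
    [Module R M₁] [Module R M₂] [Module R M₃] (f : M₁ →ₗ[R] M₂) (g : M₂ →ₗ[R] M₃) :
    Function.Exact (map R (LinearMap.id (M := E)) f) (map R (LinearMap.id (M := E)) g) ↔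
    ∀ β : M₂ →ₗ[R] (E →+ QZ.{u}), β.comp f = 0 ↔ ∃ γ : M₃ →ₗ[R] (E →+ QZ.{u}), γ.comp g = β := by
  refine (exact_iff_characters (map R (LinearMap.id (M := E)) f).toAddMonoidHom
    (map R (LinearMap.id (M := E)) g).toAddMonoidHom).trans
    (homEquiv.forall_congr fun {χ} => iff_congr ?_ (homEquiv.exists_congr fun {ξ} => ?_))
  · exact homEquiv.injective.eq_iff.symm
  · exact homEquiv.injective.eq_iff.symm

end NcTensor

section HomRep

variable {V : Type u} [Quiver.{u} V] {R : Type u} [Ring R]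
  {Y : RepR V R} {X : RepL V R} {G : Type u} [AddCommGroup G]

lemma homRepObjOp_map_toPath (Y : RepR V R) (G : Type u) [AddCommGroup G] {i j : V} (a : i ⟶ j) :
    (HomRepObjOp V R Y G).map (X := vtx' i) (Y := vtx' j) a.toPath =
    ModuleCat.ofHom (precompHomOp (G := G)
      ((Y.map a.op.toPath).hom : ↑(Y.obj (vtx' (op j))) →ₗ[Rᵐᵒᵖ] ↑(Y.obj (vtx' (op i))))) :=
  Paths.lift_toPath _ a

/-- The component at the vertex `i` of a morphism into a dual representation. -/
noncomputable def homRepApp (β : X ⟶ HomRepObjOp V R Y G) (i : V) :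
    ↑(X.obj (vtx' i)) →ₗ[R] (↑(Y.obj (vtx' (op i))) →+ G) := (β.app (vtx' i)).hom

lemma homRepApp_map (β : X ⟶ HomRepObjOp V R Y G) {i j : V} (a : i ⟶ j)
    (y : ↑(Y.obj (vtx' (op j)))) (x : ↑(X.obj (vtx' i))) :
    homRepApp β j (X.map a.toPath x) y = homRepApp β i x (Y.map a.op.toPath y) := by
  have h := β.naturality (X := vtx' i) (Y := vtx' j) a.toPath
  rw [homRepObjOp_map_toPath] at h
  exact congrArg (fun t : ↑(Y.obj (vtx' (op j))) →+ G => t y)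
    (LinearMap.congr_fun (congrArg ModuleCat.Hom.hom h) x)

lemma homRep_hom_ext {β γ : X ⟶ HomRepObjOp V R Y G}
    (h : ∀ (i : V) x y, homRepApp β i x y = homRepApp γ i x y) : β = γ := by
  ext i x
  exact AddMonoidHom.ext fun y => h i x y

end HomRep

namespace RepTensor

variable {V : Type u} [Quiver.{u} V] {R : Type u} [Ring R]
  {Y : RepR V R} {X : RepL V R} {G : Type u} [AddCommGroup G]

open scoped Classical in
/-- The canonical map `Y(i) ⊗_R X(i) → Y ⊗_Q X`. -/
noncomputable def ofVertex (Y : RepR V R) (X : RepL V R) (i : V) :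
    NcTensor R ↑(Y.obj (vtx' (op i))) ↑(X.obj (vtx' i)) →+ RepTensor Y X :=
  (repTensorRel Y X).mkQ.toAddMonoidHom.comp
    (DirectSum.of (fun i => NcTensor R ↑(Y.obj (vtx' (op i))) ↑(X.obj (vtx' i))) i)

/-- The canonical generator `y ⊗ x` of `Y ⊗_Q X` at the vertex `i`. -/
noncomputable def tmul (i : V) (y : ↑(Y.obj (vtx' (op i)))) (x : ↑(X.obj (vtx' i))) :
    RepTensor Y X :=
  ofVertex Y X i (NcTensor.tmul R _ _ y x)

lemma map_tmul_eq_tmul_map {i j : V} (a : i ⟶ j) (y : ↑(Y.obj (vtx' (op j))))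
    (x : ↑(X.obj (vtx' i))) :
    (tmul i (Y.map a.op.toPath y) x : RepTensor Y X) = tmul j y (X.map a.toPath x) :=
  (Submodule.Quotient.eq _).2 (Submodule.subset_span ⟨i, j, a, y, x, rfl⟩)

open scoped Classical in
lemma map_tmul {Y' : RepR V R} {X' : RepL V R} (g : Y ⟶ Y') (f : X ⟶ X') (i : V)
    (y : ↑(Y.obj (vtx' (op i)))) (x : ↑(X.obj (vtx' i))) :
    map g f (tmul i y x) = tmul i (g.app (vtx' (op i)) y) (f.app (vtx' i) x) :=
  congrArg Submodule.Quotient.mk (DirectSum.toModule_lof ℤ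
    (M := fun i : V => NcTensor R ↑(Y.obj (vtx' (op i))) ↑(X.obj (vtx' i))) i _)

lemma addMonoidHom_ext {χ ξ : RepTensor Y X →+ G}
    (h : ∀ i y x, χ (tmul i y x) = ξ (tmul i y x)) : χ = ξ := by
  refine AddMonoidHom.ext fun z => ?_
  obtain ⟨z, rfl⟩ := Submodule.Quotient.mk_surjective _ z
  classical
  induction z using DirectSum.induction_on with
  | zero => simp
  | of i z =>
    exact DFunLike.congr_fun (NcTensor.addMonoidHom_ext
      (χ := χ.comp (ofVertex Y X i)) (ξ := ξ.comp (ofVertex Y X i)) (h i)) z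
  | add x y hx hy => simp [hx, hy]

open scoped Classical in
/-- The homomorphism out of `Y ⊗_Q X` induced by a morphism `X ⟶ Hom(Y, G)`. -/
noncomputable def lift (β : X ⟶ HomRepObjOp V R Y G) : RepTensor Y X →+ G :=
  (Submodule.liftQ (repTensorRel Y X) (DirectSum.toAddMonoid fun i =>
    NcTensor.lift (homRepApp β i) : repTensorBase Y X →+ G).toIntLinearMap (by
    refine Submodule.span_le.2 ?_
    rintro z ⟨i, j, a, y, x, rfl⟩
    simp only [SetLike.mem_coe, LinearMap.mem_ker, AddMonoidHom.coe_toIntLinearMap]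
    refine (map_sub (DirectSum.toAddMonoid fun i => NcTensor.lift (homRepApp β i)) _ _).trans
      (sub_eq_zero.2 ?_)
    rw [DirectSum.toAddMonoid_of, DirectSum.toAddMonoid_of]
    exact (homRepApp_map β a y x).symm)).toAddMonoidHom

open scoped Classical in
lemma lift_tmul (β : X ⟶ HomRepObjOp V R Y G) (i : V) (y : ↑(Y.obj (vtx' (op i))))
    (x : ↑(X.obj (vtx' i))) : lift β (tmul i y x) = homRepApp β i x y :=
  (DirectSum.toAddMonoid_of (fun i => NcTensor.lift (homRepApp β i)) i _).trans rfl

/-- The tensor-hom adjunction for representations, on the level of underlying sets. -/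
noncomputable def homEquiv : (RepTensor Y X →+ G) ≃ (X ⟶ HomRepObjOp V R Y G) where
  toFun χ := Paths.liftNatTrans
    (fun i => (ModuleCat.ofHom (NcTensor.homEquiv (χ.comp (ofVertex Y X i))) :
      X.obj (vtx' i) ⟶ ModuleCat.of R _)) fun {i j} a => by
    rw [homRepObjOp_map_toPath]
    exact ModuleCat.hom_ext (LinearMap.ext fun x => AddMonoidHom.ext fun y =>
      congrArg χ (map_tmul_eq_tmul_map a y x).symm)
  invFun := lift
  left_inv χ := addMonoidHom_ext fun i y x => lift_tmul _ i y x
  right_inv β := homRep_hom_ext fun i x y => lift_tmul β i y x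

lemma homEquiv_comp_map {X' : RepL V R} (χ : RepTensor Y X' →+ G) (f : X ⟶ X') :
    homEquiv (χ.comp (map (𝟙 Y) f).toAddMonoidHom) = f ≫ homEquiv χ :=
  homRep_hom_ext fun i x y => congrArg χ (map_tmul (𝟙 Y) f i y x)

lemma homEquiv_zero : homEquiv (0 : RepTensor Y X →+ G) = 0 :=
  homRep_hom_ext fun _ _ _ => rfl

lemma exact_map_iff {X₁ X₂ X₃ : RepL V R} (f : X₁ ⟶ X₂) (g : X₂ ⟶ X₃) :
    Function.Exact (map (𝟙 Y) f) (map (𝟙 Y) g) ↔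
    ∀ β : X₂ ⟶ HomRepObjOp V R Y QZ.{u}, f ≫ β = 0 ↔
      ∃ γ : X₃ ⟶ HomRepObjOp V R Y QZ.{u}, g ≫ γ = β := by
  refine (exact_iff_characters (map (𝟙 Y) f).toAddMonoidHom (map (𝟙 Y) g).toAddMonoidHom).trans
    (homEquiv.forall_congr fun {χ} => iff_congr ?_ (homEquiv.exists_congr fun {ξ} => ?_))
  · rw [← homEquiv_comp_map, ← homEquiv_zero, homEquiv.injective.eq_iff]
  · rw [← homEquiv_comp_map, homEquiv.injective.eq_iff]

end RepTensor

section Duals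

variable (V : Type u) [Quiver.{u} V] (R : Type u) [Ring R]

/-- The character duals of the injective representations in `Rep(Qᵒᵖ, Rᵒᵖ)`. -/
def dualInjReps : Set (RepL V R) :=
  {N | ∃ E : RepR V R, Injective E ∧ N = HomRepObjOp V R E QZ.{u}}

/-- The character duals of the injective right `R`-modules. -/
def dualInjModules : Set (ModuleCat.{u} R) :=
  {N | ∃ E : ModuleCat.{u} Rᵐᵒᵖ, Injective E ∧ N = ModuleCat.of R (E →+ QZ.{u})}

variable {V R}

lemma isPGFRep_iff (X : RepL V R) :
    IsPGFRep V R X ↔ X ∈ relGorensteinProj (dualInjReps V R) := by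
  constructor
  · rintro ⟨P, d, hP, hd, ⟨e⟩, h⟩
    refine relGorensteinProj_of_iso e (relGorensteinProj_of_descending P d hP hd ?_ 0)
    rintro _ ⟨E, hE, rfl⟩ n β hβ
    exact ((RepTensor.exact_map_iff _ _).1 (h E hE n) β).1 hβ
  · intro h
    obtain ⟨P, d, hP, hd, e, h⟩ := exists_descending_of_relGorensteinProj h
    refine ⟨P, d, hP, hd, e, fun E hE n => (RepTensor.exact_map_iff _ _).2 fun β =>
      ⟨h _ ⟨E, hE, rfl⟩ n β, ?_⟩⟩
    rintro ⟨γ, rfl⟩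
    rw [reassoc_of% (hd n).1, zero_comp]

lemma isPGFModule_iff (M : ModuleCat.{u} R) :
    IsPGFModule R M ↔ M ∈ relGorensteinProj (dualInjModules R) := by
  constructor
  · rintro ⟨P, d, hP, hd, ⟨e⟩, h⟩
    have hd' n : ∃ w : d n ≫ d (n + 1) = 0, (ShortComplex.mk (d n) (d (n + 1)) w).Exact :=
      ⟨ModuleCat.hom_ext (LinearMap.ext (hd n).apply_apply_eq_zero),
        (ShortComplex.ShortExact.moduleCat_exact_iff_function_exact _).2 (hd n)⟩
    refine relGorensteinProj_of_iso (e.toModuleIso ≪≫ (ModuleCat.kernelIsoKer (d 0)).symm)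
      (relGorensteinProj_of_ascending P d hP hd' ?_ 0)
    rintro _ ⟨E, hE, rfl⟩ n β hβ
    obtain ⟨γ, hγ⟩ := ((NcTensor.exact_map_iff (d n).hom (d (n + 1)).hom).1 (h E hE n) β.hom).1
      (congrArg ModuleCat.Hom.hom hβ)
    exact ⟨ModuleCat.ofHom γ, ModuleCat.hom_ext hγ⟩
  · intro h
    obtain ⟨P, d, hP, hd, ⟨e⟩, h⟩ := exists_ascending_of_relGorensteinProj h
    have hd' n : Function.Exact (d n) (d (n + 1)) :=
      (ShortComplex.ShortExact.moduleCat_exact_iff_function_exact _).1 (hd n).2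
    refine ⟨P, d, hP, hd', ⟨(e ≪≫ ModuleCat.kernelIsoKer (d 0)).toLinearEquiv⟩, fun E hE n =>
      (NcTensor.exact_map_iff _ _).2 fun β => ⟨fun hβ => ?_, ?_⟩⟩
    · obtain ⟨γ, hγ⟩ := h _ ⟨E, hE, rfl⟩ n (ModuleCat.ofHom β) (ModuleCat.hom_ext hβ)
      exact ⟨γ.hom, congrArg ModuleCat.Hom.hom hγ⟩
    · rintro ⟨γ, rfl⟩
      exact LinearMap.ext fun x => by simp [(hd' n).apply_apply_eq_zero x]

end Duals

/-! ### Extensions of representations -/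

section Exactness

variable {A : Type*} [Category* A] [Abelian A] {B : Type*} [Category* B] [Abelian B]

lemma IsShortExact.app {C : Type*} [Category* C] {X Y Z : C ⥤ A} {f : X ⟶ Y} {g : Y ⟶ Z}
    (s : IsShortExact f g) (c : C) : IsShortExact (f.app c) (g.app c) :=
  ⟨NatTrans.congr_app s.1 c, s.2.map_of_exact ((evaluation C A).obj c)⟩

variable {F : A ⥤ B} {G : B ⥤ A} (adj : F ⊣ G)
include adj

lemma IsShortExact.map_leftAdjoint [F.PreservesMonomorphisms] {X Y Z : A} {f : X ⟶ Y} {g : Y ⟶ Z}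
    (s : IsShortExact f g) : IsShortExact (F.map f) (F.map g) := by
  obtain ⟨w, s⟩ := s
  have := adj.isLeftAdjoint
  have := F.preservesHomology_of_preservesMonos_and_cokernels
  have := s.mono_f
  have := s.epi_g
  exact ⟨_, s.map F⟩

lemma ext1Zero_leftAdjoint_iff [EnoughProjectives A] [F.PreservesMonomorphisms]
    [G.PreservesEpimorphisms] {M : A} {N : B} :
    ext1Zero (F.obj M) N ↔ ext1Zero M (G.obj N) := by
  have s := IsShortExact.kernel_ι (Projective.π M)
  have s' := s.map_leftAdjoint adj
  have := adj.map_projective (Projective.over M) inferInstance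
  refine ⟨fun h => ext1Zero_of_projective_presentation s fun φ => ?_,
    fun h => ext1Zero_of_projective_presentation s' fun φ => ?_⟩
  · obtain ⟨ψ, hψ⟩ := h.exists_extend s' ((adj.homEquiv _ _).symm φ)
    exact ⟨adj.homEquiv _ _ ψ, by
      rw [← adj.homEquiv_naturality_left, hψ, Equiv.apply_symm_apply]⟩
  · obtain ⟨ψ, hψ⟩ := h.exists_extend s (adj.homEquiv _ _ φ)
    exact ⟨(adj.homEquiv _ _).symm ψ, by
      rw [← adj.homEquiv_naturality_left_symm, hψ, Equiv.symm_apply_apply]⟩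

end Exactness

section Cocycle

variable {V : Type w} [Quiver.{w} V] {A : Type u} [Category.{v} A]

/-- A family of morphisms `P(i) ⟶ N(j)` indexed by the arrows `i ⟶ j`. As `Paths V` is free on `V`,
these are the 1-cocycles classifying the vertexwise split extensions of `P` by `N`. -/
abbrev ArrowCochain (P N : Paths V ⥤ A) :=
  ∀ ⦃i j : V⦄, (i ⟶ j) → (P.obj (vtx i) ⟶ N.obj (vtx j))

lemma naturality_toPath {X Y : Paths V ⥤ A} (f : X ⟶ Y) {i j : V} (a : i ⟶ j) :
    X.map a.toPath ≫ f.app (vtx j) = f.app (vtx i) ≫ Y.map a.toPath :=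
  f.naturality (X := vtx i) (Y := vtx j) a.toPath

variable [Abelian A]

/-- The extension of `P` by `N` with underlying objects `N(i) ⊞ P(i)` whose arrows are twisted
by the cochain `c`. -/
noncomputable def cocycleExtension {P N : Paths V ⥤ A} (c : ArrowCochain P N) : Paths V ⥤ A :=
  Paths.lift
    { obj i := N.obj (vtx i) ⊞ P.obj (vtx i)
      map a := Biprod.ofComponents (N.map a.toPath) 0 (c a) (P.map a.toPath) }

lemma cocycleExtension_map_toPath {P N : Paths V ⥤ A} (c : ArrowCochain P N) {i j : V}
    (a : i ⟶ j) : (cocycleExtension c).map (X := vtx i) (Y := vtx j) a.toPath =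
      Biprod.ofComponents (N.map a.toPath) 0 (c a) (P.map a.toPath) :=
  Paths.lift_toPath _ a

lemma exists_coboundary (P N : Paths V ⥤ A) [Projective P] (c : ArrowCochain P N) :
    ∃ ψ : ∀ i : V, P.obj (vtx i) ⟶ N.obj (vtx i), ∀ ⦃i j : V⦄ (a : i ⟶ j),
      P.map a.toPath ≫ ψ j = ψ i ≫ N.map a.toPath + c a := by
  let π : cocycleExtension c ⟶ P := Paths.liftNatTrans
    (fun i => (biprod.snd : N.obj (vtx i) ⊞ P.obj (vtx i) ⟶ _)) fun a =>
      (congrArg (· ≫ biprod.snd) (cocycleExtension_map_toPath c a)).trans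
        ((Biprod.ofComponents_snd _ _ _ _).trans (by rw [comp_zero, zero_add]; rfl))
  have : ∀ i, Epi (π.app i) := fun i =>
    inferInstanceAs (Epi (biprod.snd : N.obj i ⊞ P.obj i ⟶ _))
  have := NatTrans.epi_of_epi_app π
  let s := Projective.factorThru (𝟙 P) π
  let t (i : V) : P.obj (vtx i) ⟶ N.obj (vtx i) ⊞ P.obj (vtx i) := s.app (vtx i)
  have ht (i : V) : t i ≫ biprod.snd = 𝟙 _ :=
    NatTrans.congr_app (Projective.factorThru_comp (𝟙 P) π) (vtx i)
  refine ⟨fun i => t i ≫ biprod.fst, fun i j a => ?_⟩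
  have h : P.map a.toPath ≫ t j =
      t i ≫ Biprod.ofComponents (N.map a.toPath) 0 (c a) (P.map a.toPath) := by
    rw [← cocycleExtension_map_toPath c]
    exact naturality_toPath s a
  rw [reassoc_of% h, Biprod.ofComponents_fst, Preadditive.comp_add, reassoc_of% ht, Category.assoc]

/-- The obstruction to gluing vertexwise lifts is an `N`-valued arrow cochain on `X`; once extended
along `m` to the projective `P` it becomes a coboundary. -/
lemma exists_lift_of_vertexwise {N E B X P : Paths V ⥤ A} {f : N ⟶ E} {g : E ⟶ B}
    (s : IsShortExact f g) (φ : X ⟶ B) (m : X ⟶ P) [Projective P]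
    (hlift : ∀ i : V, ∃ t : X.obj (vtx i) ⟶ E.obj (vtx i), t ≫ g.app (vtx i) = φ.app (vtx i))
    (hext : ∀ (i j : V) (c : X.obj (vtx i) ⟶ N.obj (vtx j)),
      ∃ c' : P.obj (vtx i) ⟶ N.obj (vtx j), m.app (vtx i) ≫ c' = c) :
    ∃ l : X ⟶ E, l ≫ g = φ := by
  choose t ht using hlift
  have hobs : ∀ ⦃i j : V⦄ (a : i ⟶ j), ∃ c : P.obj (vtx i) ⟶ N.obj (vtx j),
      m.app (vtx i) ≫ c ≫ f.app (vtx j) = X.map a.toPath ≫ t j - t i ≫ E.map a.toPath := by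
    intro i j a
    obtain ⟨c', hc'⟩ := (s.app (vtx j)).exists_lift
      (X.map a.toPath ≫ t j - t i ≫ E.map a.toPath) (by
        rw [Preadditive.sub_comp, Category.assoc, Category.assoc, ht, naturality_toPath,
          naturality_toPath, reassoc_of% ht, sub_self])
    obtain ⟨c, hc⟩ := hext i j c'
    exact ⟨c, by rw [reassoc_of% hc, hc']⟩
  choose c hc using hobs
  obtain ⟨ψ, hψ⟩ := exists_coboundary P N c
  refine ⟨Paths.liftNatTrans (fun i => t i - m.app (vtx i) ≫ ψ i ≫ f.app (vtx i)) fun {i j} a => ?_,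
    ?_⟩
  · have h : X.map a.toPath ≫ m.app (vtx j) ≫ ψ j ≫ f.app (vtx j) =
        m.app (vtx i) ≫ ψ i ≫ f.app (vtx i) ≫ E.map a.toPath +
          (X.map a.toPath ≫ t j - t i ≫ E.map a.toPath) := by
      rw [← hc a, ← naturality_toPath f a, reassoc_of% naturality_toPath m a, reassoc_of% hψ a]
      simp only [Preadditive.add_comp, Preadditive.comp_add, Category.assoc]
    rw [Preadditive.comp_sub, h, Preadditive.sub_comp]
    simp only [Category.assoc]
    abel
  · have hg (i : V) : (t i - m.app (vtx i) ≫ ψ i ≫ f.app (vtx i)) ≫ g.app (vtx i) =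
        φ.app (vtx i) := by
      rw [Preadditive.sub_comp, Category.assoc, Category.assoc, (s.app (vtx i)).comp_eq_zero, ht,
        comp_zero, comp_zero, sub_zero]
    exact NatTrans.ext (funext hg)

lemma ext1Zero_of_vertexwise {X P X' N : Paths V ⥤ A} {m : X ⟶ P} {p : P ⟶ X'}
    (s : IsShortExact m p) [Projective P]
    (hX : ∀ i : V, ext1Zero (X.obj (vtx i)) (N.obj (vtx i)))
    (hX' : ∀ i j : V, ext1Zero (X'.obj (vtx i)) (N.obj (vtx j))) : ext1Zero X N :=
  ext1Zero_of_exists_lift fun _ _ _ _ t φ => exists_lift_of_vertexwise t φ m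
    (fun i => (hX i).exists_lift (t.app (vtx i)) _)
    fun i j => (hX' i j).exists_extend (s.app (vtx i))

lemma injective_of_isShortExact_of_injective_obj [EnoughProjectives (Paths V ⥤ A)]
    {H I₀ I₁ : Paths V ⥤ A} {f : H ⟶ I₀} {g : I₀ ⟶ I₁} (s : IsShortExact f g)
    (hH : ∀ i : V, Injective (H.obj (vtx i)))
    [Injective I₀] : Injective I₁ := by
  refine ⟨fun {K B} φ k _ => ?_⟩
  let p := pullback.fst (Projective.π B) k
  let q := pullback.snd (Projective.π B) k
  have : ∀ i, Mono (p.app i) := fun i => inferInstance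
  obtain ⟨l, hl⟩ := exists_lift_of_vertexwise s (q ≫ φ) p
    (fun i => ext1Zero_of_injective.exists_lift (s.app (vtx i)) _)
    (fun i j c => ⟨Injective.factorThru c _, Injective.comp_factorThru _ _⟩)
  let l' : Projective.over B ⟶ I₀ := Injective.factorThru l p
  have hl' : p ≫ l' = l := Injective.comp_factorThru l p
  have hker : kernel.ι (Projective.π B) =
      pullback.lift (kernel.ι _) 0 ((kernel.condition _).trans zero_comp.symm) ≫ p :=
    (pullback.lift_fst _ _ _).symm
  obtain ⟨r, hr⟩ := (IsShortExact.kernel_ι (Projective.π B)).exists_desc (l' ≫ g) (by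
    rw [hker, Category.assoc, reassoc_of% hl', hl, pullback.lift_snd_assoc, zero_comp])
  refine ⟨r, ?_⟩
  rw [← cancel_epi q, ← pullback.condition_assoc, hr, reassoc_of% hl', hl]

end Cocycle

section FunctorCategory

variable {C : Type v} [SmallCategory C] {A : Type u} [Category.{v} A] [Abelian A]

section LeftAdjoint

lemma mono_sigma_map {J : Type*} [HasColimitsOfShape (Discrete J) A]
    [HasExactColimitsOfShape (Discrete J) A] {X Y : J → A} (f : ∀ j, X j ⟶ Y j)
    [∀ j, Mono (f j)] : Mono (Limits.Sigma.map f) := by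
  let α : Discrete.functor X ⟶ Discrete.functor Y := Discrete.natTrans fun j => f j.as
  have (j : Discrete J) : Mono (α.app j) := ‹∀ j, Mono (f j)› j.as
  have := NatTrans.mono_of_mono_app α
  exact inferInstanceAs (Mono (colim.map α))

variable [HasCoproducts A]

instance [AB4 A] (c : C) : (evaluationLeftAdjoint A c).PreservesMonomorphisms where
  preserves {X Y} f _ := by
    have (d : C) : Mono (((evaluationLeftAdjoint A c).map f).app d) := by
      have h : (Limits.Sigma.desc fun h : c ⟶ d => f ≫ Limits.Sigma.ι (fun _ => Y) h) =
        Limits.Sigma.map fun _ => f := Limits.Sigma.hom_ext _ _ fun h => by simp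
      exact (congrArg Mono h).mpr (mono_sigma_map _)
    exact NatTrans.mono_of_mono_app _

instance [EnoughProjectives A] : EnoughProjectives (C ⥤ A) where
  presentation X := by
    let P (c : C) := (evaluationLeftAdjoint A c).obj (Projective.over (X.obj c))
    let adj (c : C) := evaluationAdjunctionRight A c
    let π (c : C) : P c ⟶ X := ((adj c).homEquiv _ _).symm (Projective.π (X.obj c))
    have (c : C) : Projective (P c) := (adj c).map_projective _ inferInstance
    have (c : C) : Epi ((Limits.Sigma.desc π).app c) := by
      have h : (adj c).unit.app _ ≫ (Limits.Sigma.ι P c).app c ≫ (Limits.Sigma.desc π).app c =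
          Projective.π (X.obj c) := by
        rw [← NatTrans.comp_app, Limits.Sigma.ι_desc]
        exact ((adj c).homEquiv_unit _ _ _).symm.trans (Equiv.apply_symm_apply _ _)
      rw [← Category.assoc] at h
      exact epi_of_epi_fac h
    exact ⟨{ p := ∐ P, f := Limits.Sigma.desc π, epi := NatTrans.epi_of_epi_app _ }⟩

lemma injective_obj [AB4 A] (X : C ⥤ A) [hX : Injective X] (c : C) :
    Injective (X.obj c) :=
  (evaluationAdjunctionRight A c).map_injective X hX

lemma projective_evaluationLeftAdjoint_obj (c : C) (M : A) [hM : Projective M] :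
    Projective ((evaluationLeftAdjoint A c).obj M) :=
  (evaluationAdjunctionRight A c).map_projective M hM

lemma isShortExact_evaluationLeftAdjoint_map [AB4 A] (c : C) {X Y Z : A} {f : X ⟶ Y}
    {g : Y ⟶ Z} (s : IsShortExact f g) :
    IsShortExact ((evaluationLeftAdjoint A c).map f) ((evaluationLeftAdjoint A c).map g) :=
  s.map_leftAdjoint (evaluationAdjunctionRight A c)

lemma ext1Zero_evaluationLeftAdjoint_iff [AB4 A] [EnoughProjectives A] (c : C) {M : A}
    {N : C ⥤ A} : ext1Zero ((evaluationLeftAdjoint A c).obj M) N ↔ ext1Zero M (N.obj c) :=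
  ext1Zero_leftAdjoint_iff (evaluationAdjunctionRight A c)

end LeftAdjoint

section RightAdjoint

lemma epi_pi_map {J : Type*} [HasLimitsOfShape (Discrete J) A]
    [HasExactLimitsOfShape (Discrete J) A] {X Y : J → A} (f : ∀ j, X j ⟶ Y j)
    [∀ j, Epi (f j)] : Epi (Limits.Pi.map f) := by
  let α : Discrete.functor X ⟶ Discrete.functor Y := Discrete.natTrans fun j => f j.as
  have (j : Discrete J) : Epi (α.app j) := ‹∀ j, Epi (f j)› j.as
  have := NatTrans.epi_of_epi_app α
  exact inferInstanceAs (Epi (lim.map α))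

variable [HasProducts A] [AB4Star A]

instance (c : C) : (evaluationRightAdjoint A c).PreservesEpimorphisms where
  preserves {X Y} f _ := by
    have (d : C) : Epi (((evaluationRightAdjoint A c).map f).app d) := by
      have h : (Limits.Pi.lift fun h : d ⟶ c => Limits.Pi.π (fun _ => X) h ≫ f) =
        Limits.Pi.map fun _ => f := Limits.Pi.hom_ext _ _ fun h => by simp
      exact (congrArg Epi h).mpr (epi_pi_map _)
    exact NatTrans.epi_of_epi_app _

lemma projective_obj (X : C ⥤ A) [hX : Projective X] (c : C) : Projective (X.obj c) :=
  (evaluationAdjunctionLeft A c).map_projective X hX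

end RightAdjoint

instance {R : Type u} [Ring R] {C : Type u} [SmallCategory C] :
    IsGrothendieckAbelian.{u} (C ⥤ ModuleCat.{u} R) where
  ab5OfSize := ⟨fun _ _ _ => inferInstance⟩
  hasSeparator := HasSeparator.of_equivalence (opOpEquivalence C).congrLeft

end FunctorCategory

section VertexwiseOrthogonality

variable {V : Type u} [Quiver.{u} V] {R : Type u} [Ring R]

lemma evaluationLeftAdjoint_obj_mem (i : V) {M : ModuleCat.{u} R}
    (hM : M ∈ relGorensteinProj (dualInjModules R)) :
    (evaluationLeftAdjoint _ (vtx i)).obj M ∈ relGorensteinProj (dualInjReps V R) := by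
  refine ⟨(evaluationLeftAdjoint _ (vtx i)).obj '' relGorensteinProj (dualInjModules R), ?_,
    ⟨M, hM, rfl⟩, ?_⟩
  · rintro _ ⟨M, hM, rfl⟩
    obtain ⟨⟨Y, hY, P, f, g, _, s⟩, ⟨Z, hZ, Q, f', g', _, t⟩⟩ :=
      isSyzygyClosed_relGorensteinProj _ M hM
    exact ⟨⟨_, ⟨Y, hY, rfl⟩, _, _, _, projective_evaluationLeftAdjoint_obj _ P,
        isShortExact_evaluationLeftAdjoint_map _ s⟩,
      ⟨_, ⟨Z, hZ, rfl⟩, _, _, _, projective_evaluationLeftAdjoint_obj _ Q,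
        isShortExact_evaluationLeftAdjoint_map _ t⟩⟩
  · rintro _ ⟨M, hM, rfl⟩ _ ⟨E, hE, rfl⟩
    refine (ext1Zero_evaluationLeftAdjoint_iff _).2 ?_
    exact relGorensteinProj_subset_leftPerp _ hM _ ⟨_, injective_obj E (vtx (op i)), rfl⟩

lemma rightPerp_relGorensteinProj_eq_repClass
    (h : ∀ X ∈ relGorensteinProj (dualInjReps V R), ∀ i : V,
      X.obj (vtx i) ∈ leftPerp (dualInjModules R)) :
    rightPerp (relGorensteinProj (dualInjReps V R)) =
      RepClass (rightPerp (relGorensteinProj (dualInjModules R))) := by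
  have hobj : ∀ X ∈ relGorensteinProj (dualInjReps V R), ∀ i : V,
      X.obj (vtx i) ∈ relGorensteinProj (dualInjModules R) := by
    intro X hX i
    refine ⟨(fun X => X.obj (vtx i)) '' relGorensteinProj (dualInjReps V R), ?_, ⟨X, hX, rfl⟩, ?_⟩
    · rintro _ ⟨M, hM, rfl⟩
      obtain ⟨⟨Y, hY, P, f, g, _, s⟩, ⟨Z, hZ, Q, f', g', _, t⟩⟩ :=
        isSyzygyClosed_relGorensteinProj _ M hM
      exact ⟨⟨_, ⟨Y, hY, rfl⟩, _, _, _, projective_obj P _, s.app (vtx i)⟩,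
        ⟨_, ⟨Z, hZ, rfl⟩, _, _, _, projective_obj Q _, t.app (vtx i)⟩⟩
    · rintro _ ⟨X, hX, rfl⟩
      exact h X hX i
  refine Set.Subset.antisymm (fun N hN i M hM => ?_) fun N hN X hX => ?_
  · exact (ext1Zero_evaluationLeftAdjoint_iff _).1 (hN _ (evaluationLeftAdjoint_obj_mem i hM))
  · obtain ⟨⟨Y, hY, P, f, g, _, s⟩, -⟩ := isSyzygyClosed_relGorensteinProj _ X hX
    exact ext1Zero_of_vertexwise s (fun i => hN i _ (hobj X hX i))
      fun i j => hN j _ (hobj Y hY i)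

end VertexwiseOrthogonality

/-! ### Duals of vertexwise injective representations -/

section Dual

variable {V : Type u} [Quiver.{u} V] {R : Type u} [Ring R]

lemma IsShortExact.of_app {C : Type*} [Category* C] {A : Type*} [Category* A] [Abelian A]
    {X Y Z : C ⥤ A} {f : X ⟶ Y} {g : Y ⟶ Z} (s : ∀ c, IsShortExact (f.app c) (g.app c)) :
    IsShortExact f g := by
  have := fun c => (s c).mono
  have := fun c => (s c).epi
  have := NatTrans.mono_of_mono_app f
  have := NatTrans.epi_of_epi_app g
  refine .of_exists_lift (NatTrans.ext (funext fun c => (s c).comp_eq_zero)) fun T k hk => ?_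
  choose l hl using fun c => (s c).exists_lift (k.app c) (NatTrans.congr_app hk c)
  refine ⟨⟨l, fun c d a => ?_⟩, NatTrans.ext (funext hl)⟩
  simp only [← cancel_mono (f.app d), Category.assoc, hl, f.naturality, reassoc_of% hl,
    k.naturality]

lemma isShortExact_moduleCat_iff {X Y Z : ModuleCat.{u} R} {f : X ⟶ Y} {g : Y ⟶ Z} :
    IsShortExact f g ↔ Function.Injective f ∧ Function.Exact f g ∧ Function.Surjective g := by
  refine ⟨fun ⟨_, s⟩ => ⟨s.moduleCat_injective_f,
    (ShortComplex.ShortExact.moduleCat_exact_iff_function_exact _).1 s.exact,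
    s.moduleCat_surjective_g⟩, fun ⟨hf, he, hg⟩ => ?_⟩
  exact ⟨ModuleCat.hom_ext (LinearMap.ext he.apply_apply_eq_zero),
    { exact := (ShortComplex.ShortExact.moduleCat_exact_iff_function_exact _).2 he
      mono_f := (ModuleCat.mono_iff_injective f).2 hf
      epi_g := (ModuleCat.epi_iff_surjective g).2 hg }⟩

lemma isShortExact_precompHomOp {X Y Z : ModuleCat.{u} Rᵐᵒᵖ} {f : X ⟶ Y} {g : Y ⟶ Z}
    (s : IsShortExact f g) :
    IsShortExact (ModuleCat.ofHom (precompHomOp (R := R) (G := QZ.{u}) g.hom))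
      (ModuleCat.ofHom (precompHomOp (R := R) (G := QZ.{u}) f.hom)) := by
  obtain ⟨hf, he, hg⟩ := isShortExact_moduleCat_iff.1 s
  refine isShortExact_moduleCat_iff.2 ⟨fun χ ξ h => ?_, fun χ => ?_, fun χ => ?_⟩
  · exact (AddMonoidHom.cancel_right (f := g.hom.toAddMonoidHom) hg).1 h
  · exact (exact_iff_characters f.hom.toAddMonoidHom g.hom.toAddMonoidHom).1 he χ
  · exact exists_character_extension (f := f.hom.toAddMonoidHom) hf χ

/-- The dual `Hom(Y', ℚ/ℤ) ⟶ Hom(Y, ℚ/ℤ)` of a morphism of representations. -/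
noncomputable def dualMap {Y Y' : RepR V R} (θ : Y ⟶ Y') :
    HomRepObjOp V R Y' QZ.{u} ⟶ HomRepObjOp V R Y QZ.{u} :=
  Paths.liftNatTrans
    (fun i => (ModuleCat.ofHom (precompHomOp (R := R) (G := QZ.{u}) (θ.app (vtx' (op i))).hom) :
      ModuleCat.of R (↑(Y'.obj (vtx' (op i))) →+ QZ.{u}) ⟶
        ModuleCat.of R (↑(Y.obj (vtx' (op i))) →+ QZ.{u}))) fun {i j} a => by
    rw [homRepObjOp_map_toPath, homRepObjOp_map_toPath]
    refine ModuleCat.hom_ext (LinearMap.ext fun χ => AddMonoidHom.ext fun y =>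
      congrArg (DFunLike.coe (F := ↑(Y'.obj (vtx' (op i))) →+ QZ.{u}) χ) ?_)
    exact (ConcreteCategory.congr_hom (naturality_toPath θ a.op) y).symm

lemma isShortExact_dualMap {X Y Z : RepR V R} {f : X ⟶ Y} {g : Y ⟶ Z} (s : IsShortExact f g) :
    IsShortExact (dualMap g) (dualMap f) :=
  .of_app fun i => isShortExact_precompHomOp (s.app (vtx' (op i)))

lemma ext1Zero_dual_of_vertexwise_injective {X : RepL V R}
    (hX : X ∈ relGorensteinProj (dualInjReps V R)) {H : RepR V R}
    (hH : ∀ i : Vᵒᵖ, Injective (H.obj (vtx i))) : ext1Zero X (HomRepObjOp V R H QZ.{u}) := by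
  have t := IsShortExact.cokernel_π (Injective.ι H)
  have hC : Injective (cokernel (Injective.ι H)) :=
    injective_of_isShortExact_of_injective_obj t hH
  obtain ⟨-, ⟨K, hK, P, k, p, _, s⟩⟩ := isSyzygyClosed_relGorensteinProj _ X hX
  exact ext1Zero_cokernel_of_syzygy s (isShortExact_dualMap t)
    (relGorensteinProj_subset_leftPerp _ hK _ ⟨_, hC, rfl⟩)
    (relGorensteinProj_subset_leftPerp _ hX _ ⟨_, inferInstance, rfl⟩)

lemma RepTensor.injective_map_of_ext1Zero {X K P : RepL V R} {k : K ⟶ P} {p : P ⟶ X}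
    (s : IsShortExact k p) {Y : RepR V R} (h : ext1Zero X (HomRepObjOp V R Y QZ.{u})) :
    Function.Injective (RepTensor.map (𝟙 Y) k) := by
  refine (injective_iff_map_eq_zero _).2 fun z hz => ?_
  by_contra hne
  obtain ⟨χ, hχ⟩ := exists_character_ne_zero hne
  obtain ⟨ψ, hψ⟩ := h.exists_extend s (RepTensor.homEquiv χ)
  have hψχ : (RepTensor.homEquiv.symm ψ).comp (RepTensor.map (𝟙 Y) k).toAddMonoidHom = χ := by
    apply RepTensor.homEquiv.injective
    rw [RepTensor.homEquiv_comp_map, Equiv.apply_symm_apply, hψ]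
  apply hχ
  rw [← hψχ]
  exact (congrArg (RepTensor.homEquiv.symm ψ) hz).trans (map_zero _)

lemma ext1Zero_dual_of_injective_map {X K P : ModuleCat.{u} R} [Projective P] {k : K ⟶ P}
    {p : P ⟶ X} (s : IsShortExact k p) {E : ModuleCat.{u} Rᵐᵒᵖ}
    (h : Function.Injective (NcTensor.map R (LinearMap.id (M := E)) k.hom)) :
    ext1Zero X (ModuleCat.of R (E →+ QZ.{u})) := by
  refine ext1Zero_of_projective_presentation s fun φ => ?_
  obtain ⟨ξ, hξ⟩ := exists_character_extension
    (f := (NcTensor.map R (LinearMap.id (M := E)) k.hom).toAddMonoidHom) h (NcTensor.lift φ.hom)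
  exact ⟨ModuleCat.ofHom (NcTensor.homEquiv ξ), ModuleCat.hom_ext (LinearMap.ext fun x =>
    AddMonoidHom.ext fun e => DFunLike.congr_fun hξ (NcTensor.tmul R E _ e x))⟩

end Dual

/-! ### Vertices of left rooted quivers -/

/-- Extension by zero of `E`-valued functions along `f`, as a linear map. It complements
`Function.ExtendByZero.linearMap`, where the values lie in the ring of scalars. -/
noncomputable def extendByZero (S : Type*) [Semiring S] {ι κ : Type*} (E : Type*) [AddCommMonoid E]
    [Module S E] (f : ι → κ) : (ι → E) →ₗ[S] (κ → E) where
  toFun h := Function.extend f h 0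
  map_add' h h' := by simpa using Function.extend_add f h h' (0 : κ → E) 0
  map_smul' r h := by simpa using Function.extend_smul r f h (0 : κ → E)

section PathRep

section Cons

variable {W : Type*} [Quiver W] (S : Type*) [Semiring S] (E : Type*) [AddCommMonoid E] [Module S E]
  {w x y : W} (a : x ⟶ y) (h : Quiver.Path w x → E)

lemma extendByZero_cons_apply_cons (p : Quiver.Path w x) :
    extendByZero S E (fun p : Quiver.Path w x => p.cons a) h (p.cons a) = h p :=
  Function.Injective.extend_apply
    (fun _ _ hpq => eq_of_heq (Quiver.Path.heq_of_cons_eq_cons hpq)) h 0 p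

lemma extendByZero_cons_apply_cons_of_ne {x' : W} {b : x' ⟶ y}
    (hab : (⟨x, a⟩ : Σ x, x ⟶ y) ≠ ⟨x', b⟩) (p : Quiver.Path w x') :
    extendByZero S E (fun p : Quiver.Path w x => p.cons a) h (p.cons b) = 0 := by
  refine Function.extend_apply' _ _ _ ?_
  rintro ⟨q, hq⟩
  exact hab (Sigma.ext (Quiver.Path.obj_eq_of_cons_eq_cons hq)
    (Quiver.Path.hom_heq_of_cons_eq_cons hq))

lemma extendByZero_cons_apply_nil {a : x ⟶ w} :
    extendByZero S E (fun p : Quiver.Path w x => p.cons a) h Quiver.Path.nil = 0 :=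
  Function.extend_apply' _ _ _ fun ⟨q, hq⟩ => q.cons_ne_nil a hq

end Cons

variable {W : Type u} [Quiver.{u} W] {S : Type u} [Ring S]

/-- The representation whose value at `x` is the product of copies of `E` over all paths from
`w` to `x`. It is the completed version of the representation induced by `E` at `w`, where direct
sums take the place of products; the products make it vertexwise injective for injective `E`. -/
noncomputable def pathRep (w : W) (E : ModuleCat.{u} S) : Paths W ⥤ ModuleCat.{u} S :=
  Paths.lift
    { obj := fun x => ModuleCat.of S (Quiver.Path w x → E)
      map := fun {_ _} a => ModuleCat.ofHom (extendByZero S E fun p => p.cons a) }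

variable (w : W) (E : ModuleCat.{u} S)

lemma pathRep_map_toPath {x y : W} (a : x ⟶ y) :
    (pathRep w E).map (X := vtx x) (Y := vtx y) a.toPath =
      ModuleCat.ofHom (extendByZero S E fun p => p.cons a) :=
  Paths.lift_toPath _ a

lemma injective_pathRep_obj [Injective E] (x : W) : Injective ((pathRep w E).obj (vtx x)) :=
  have : Injective (∏ᶜ fun _ : Quiver.Path w x => E) := inferInstance
  Injective.of_iso (ModuleCat.piIsoPi fun _ : Quiver.Path w x => E) this

open scoped Classical in
/-- The unit of the path representation: `E` sits at `w` as the factor of the trivial path. -/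
noncomputable def pathRepUnit : E →ₗ[S] ↑((pathRep w E).obj (vtx w)) :=
  (LinearMap.single S (fun _ : Quiver.Path w w => (E : Type u)) Quiver.Path.nil :
    E →ₗ[S] (Quiver.Path w w → E))

end PathRep

section Balanced

variable {V : Type u} [Quiver.{u} V] {R : Type u} [Ring R] {Y : RepR V R} {X : RepL V R}
  {G : Type u} [AddCommGroup G]

/-- A family of `R`-balanced maps `Y(i) × X(i) → G` that is compatible with the arrows in `A`.
Families compatible with all arrows are the homomorphisms `Y ⊗_Q X → G`. -/
def IsBalancedOn (A : ∀ i : V, Finset (Σ j, i ⟶ j))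
    (t : ∀ i : V, ↑(X.obj (vtx' i)) →ₗ[R] (↑(Y.obj (vtx' (op i))) →+ G)) : Prop :=
  ∀ (i j : V) (a : i ⟶ j), ⟨j, a⟩ ∈ A i → ∀ x y,
    t i x (Y.map a.op.toPath y) = t j (X.map a.toPath x) y

lemma IsBalancedOn.mono {A B : ∀ i : V, Finset (Σ j, i ⟶ j)} (h : A ≤ B)
    {t : ∀ i : V, ↑(X.obj (vtx' i)) →ₗ[R] (↑(Y.obj (vtx' (op i))) →+ G)} (ht : IsBalancedOn B t) :
    IsBalancedOn A t :=
  fun i j a ha => ht i j a (h i ha)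

open scoped Classical in
/-- A relation of the tensor product involves only finitely many arrows. -/
lemma exists_forall_isBalancedOn_eq_zero {z : repTensorBase Y X} (hz : z ∈ repTensorRel Y X) :
    ∃ A : ∀ i : V, Finset (Σ j, i ⟶ j),
      ∀ t : ∀ i : V, ↑(X.obj (vtx' i)) →ₗ[R] (↑(Y.obj (vtx' (op i))) →+ G), IsBalancedOn A t →
        DirectSum.toAddMonoid (fun i => NcTensor.lift (t i)) z = 0 := by
  induction hz using Submodule.span_induction with
  | mem z hz =>
    obtain ⟨i, j, a, y, x, rfl⟩ := hz
    refine ⟨Function.update (fun i => (∅ : Finset (Σ j, i ⟶ j))) i {⟨j, a⟩}, fun t ht => ?_⟩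
    refine (map_sub (DirectSum.toAddMonoid fun i => NcTensor.lift (t i)) _ _).trans ?_
    rw [DirectSum.toAddMonoid_of, DirectSum.toAddMonoid_of]
    exact sub_eq_zero.2 (ht i j a (by simp) x y)
  | zero => exact ⟨⊥, fun t _ => map_zero _⟩
  | add z z' _ _ hz hz' =>
    obtain ⟨A, hA⟩ := hz
    obtain ⟨B, hB⟩ := hz'
    refine ⟨A ⊔ B, fun t ht => (map_add _ _ _).trans ?_⟩
    rw [hA t (ht.mono le_sup_left), hB t (ht.mono le_sup_right), add_zero]
  | smul n z _ hz =>
    obtain ⟨A, hA⟩ := hz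
    exact ⟨A, fun t ht => (map_zsmul _ n z).trans (by rw [hA t ht, smul_zero])⟩

end Balanced

section LeftRooted

variable {V : Type u} [Quiver.{u} V] {R : Type u} [Ring R]

lemma LeftRooted.wellFounded (hV : LeftRooted V) :
    WellFounded fun j i : V => Nonempty (i ⟶ j) :=
  wellFounded_iff_isEmpty_descending_chain.2 ⟨fun f => hV ⟨f.1, f.2⟩⟩

lemma exists_sum_recursion (hV : LeftRooted V) {X : RepL V R} {w : Vᵒᵖ} {E : ModuleCat.{u} Rᵐᵒᵖ}
    {G : Type u} [AddCommGroup G]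
    (φ : ∀ j : V, ↑(X.obj (vtx' j)) →ₗ[R] ((Quiver.Path w (op j) → E) →+ G))
    (A : ∀ j : V, Finset (Σ k, j ⟶ k)) :
    ∃ t : ∀ j : V, ↑(X.obj (vtx' j)) →ₗ[R] ((Quiver.Path w (op j) → E) →+ G), ∀ j x h,
      t j x h = φ j x h + ∑ b ∈ A j, t b.1 (X.map b.2.toPath x) fun p => h (p.cons b.2.op) := by
  refine ⟨hV.wellFounded.fix fun j rec => φ j + ∑ b ∈ A j,
    (precompHomOp (R := R) (LinearMap.funLeft Rᵐᵒᵖ E fun p => p.cons b.2.op)).comp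
      ((rec b.1 ⟨b.2⟩).comp (X.map b.2.toPath).hom), fun j x h => ?_⟩
  rw [hV.wellFounded.fix_eq]
  simp only [LinearMap.add_apply, LinearMap.sum_apply, AddMonoidHom.add_apply,
    AddMonoidHom.finsetSum_apply]
  rfl

/-- The value of the extension at `(x, h)` is the sum of `φ (X(p) x) (h p)` over those paths `p`
to `i` that use only arrows in `A`. -/
lemma exists_isBalancedOn_pathRep (hV : LeftRooted V) {X : RepL V R} {i : V}
    {E : ModuleCat.{u} Rᵐᵒᵖ} {G : Type u} [AddCommGroup G] (φ : ↑(X.obj (vtx' i)) →ₗ[R] (E →+ G))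
    (A : ∀ j : V, Finset (Σ k, j ⟶ k)) :
    ∃ t : ∀ j : V, ↑(X.obj (vtx' j)) →ₗ[R] (↑((pathRep (op i) E).obj (vtx' (op j))) →+ G),
      IsBalancedOn A t ∧ ∀ x e, t i x (pathRepUnit (op i) E e) = φ x e := by
  classical
  let φ₀ : ∀ j : V, ↑(X.obj (vtx' j)) →ₗ[R] ((Quiver.Path (op i) (op j) → E) →+ G) :=
    Pi.single i ((precompHomOp (LinearMap.proj Quiver.Path.nil)).comp φ)
  have hφ₀_self (x) (h : Quiver.Path (op i) (op i) → E) : φ₀ i x h = φ x (h .nil) := by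
    simp only [φ₀, Pi.single_eq_same]
    rfl
  have hφ₀_cons {j k : V} (a : j ⟶ k) (x) (y : Quiver.Path (op i) (op k) → E) :
      φ₀ j x (extendByZero Rᵐᵒᵖ E (fun p => p.cons a.op) y) = 0 := by
    obtain rfl | hij := eq_or_ne i j
    · rw [hφ₀_self, extendByZero_cons_apply_nil, map_zero]
    · simp only [φ₀, Pi.single_eq_of_ne' hij]
      rfl
  obtain ⟨t, ht⟩ := exists_sum_recursion hV φ₀ A
  have ht_cons {j k : V} {a : j ⟶ k} (ha : ⟨k, a⟩ ∈ A j) (x)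
      (y : Quiver.Path (op i) (op k) → E) :
      t j x (extendByZero Rᵐᵒᵖ E (fun p => p.cons a.op) y) = t k (X.map a.toPath x) y := by
    rw [ht, hφ₀_cons, zero_add, Finset.sum_eq_single ⟨k, a⟩ _ fun h => absurd ha h]
    · exact congrArg _ (funext fun p => extendByZero_cons_apply_cons _ _ _ _ p)
    · rintro ⟨k', b⟩ - hb
      refine (congrArg _ (funext fun p => ?_)).trans (map_zero _)
      refine extendByZero_cons_apply_cons_of_ne _ _ _ _ (fun h => hb ?_) p
      cases h
      rfl
  refine ⟨t, fun j k a ha x y => ?_, fun x e => ?_⟩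
  · rw [pathRep_map_toPath]
    exact ht_cons ha x y
  · refine (ht i x (Pi.single Quiver.Path.nil e)).trans ?_
    rw [hφ₀_self, Pi.single_eq_same, Finset.sum_eq_zero, add_zero]
    intro b _
    have hb : (fun p => Pi.single (M := fun _ => (E : Type u)) Quiver.Path.nil e
        (Quiver.Path.cons p b.2.op)) = 0 :=
      funext fun p => Pi.single_eq_of_ne (M := fun _ => (E : Type u)) (p.cons_ne_nil _) e
    rw [hb, map_zero]

open scoped Classical in
/-- The comparison of `E ⊗ X(i)` with the tensor product of `X` and the path representation. -/
noncomputable def tensorPathRepUnit (X : RepL V R) (i : V) (E : ModuleCat.{u} Rᵐᵒᵖ) :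
    NcTensor R E ↑(X.obj (vtx' i)) →+ RepTensor (pathRep (op i) E) X :=
  (RepTensor.ofVertex (pathRep (op i) E) X i).comp
    (NcTensor.map R (pathRepUnit (op i) E) (LinearMap.id (M := ↑(X.obj (vtx' i))))).toAddMonoidHom

lemma map_tensorPathRepUnit {X X' : RepL V R} (f : X ⟶ X') (i : V) (E : ModuleCat.{u} Rᵐᵒᵖ) (z) :
    RepTensor.map (𝟙 _) f (tensorPathRepUnit X i E z) =
      tensorPathRepUnit X' i E
        (NcTensor.map R (LinearMap.id (M := E)) (f.app (vtx' i)).hom z) :=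
  DFunLike.congr_fun (NcTensor.addMonoidHom_ext
    (χ := (RepTensor.map (𝟙 _) f).toAddMonoidHom.comp (tensorPathRepUnit X i E))
    (ξ := (tensorPathRepUnit X' i E).comp
      (NcTensor.map R (LinearMap.id (M := E)) (f.app (vtx' i)).hom).toAddMonoidHom)
    fun e x => RepTensor.map_tmul (𝟙 _) f i (pathRepUnit (op i) E e) x) z

lemma injective_tensorPathRepUnit (hV : LeftRooted V) (X : RepL V R) (i : V)
    (E : ModuleCat.{u} Rᵐᵒᵖ) : Function.Injective (tensorPathRepUnit X i E) := by
  classical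
  refine (injective_iff_map_eq_zero _).2 fun z hz => ?_
  by_contra hne
  obtain ⟨χ, hχ⟩ := exists_character_ne_zero hne
  obtain ⟨A, hA⟩ := exists_forall_isBalancedOn_eq_zero (G := QZ.{u})
    ((Submodule.Quotient.mk_eq_zero _).1 hz)
  obtain ⟨t, ht, htχ⟩ := exists_isBalancedOn_pathRep hV (NcTensor.homEquiv χ) A
  let T : repTensorBase (pathRep (op i) E) X →+ QZ.{u} :=
    DirectSum.toAddMonoid fun j => NcTensor.lift (t j)
  have hTχ : (T.comp (DirectSum.of
      (fun j : V => NcTensor R ↑((pathRep (op i) E).obj (vtx' (op j))) ↑(X.obj (vtx' j))) i)).comp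
      (NcTensor.map R (pathRepUnit (op i) E)
        (LinearMap.id (M := ↑(X.obj (vtx' i))))).toAddMonoidHom = χ :=
    NcTensor.addMonoidHom_ext fun e x =>
      (DirectSum.toAddMonoid_of (fun j => NcTensor.lift (t j)) i _).trans (htχ x e)
  exact hχ ((DFunLike.congr_fun hTχ z).symm.trans (hA t ht))

lemma obj_mem_leftPerp_dualInjModules (hV : LeftRooted V) {X : RepL V R}
    (hX : X ∈ relGorensteinProj (dualInjReps V R)) (i : V) :
    X.obj (vtx i) ∈ leftPerp (dualInjModules R) := by
  rintro _ ⟨E, hE, rfl⟩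
  obtain ⟨-, ⟨K, -, P, k, p, hP, s⟩⟩ := isSyzygyClosed_relGorensteinProj _ X hX
  have := projective_obj P (vtx i)
  have hdual : ext1Zero X (HomRepObjOp V R (pathRep (op i) E) QZ.{u}) :=
    ext1Zero_dual_of_vertexwise_injective hX fun j => injective_pathRep_obj _ E j
  refine ext1Zero_dual_of_injective_map (s.app (vtx i)) (.of_comp (f := tensorPathRepUnit P i E) ?_)
  rw [← (funext (map_tensorPathRepUnit k i E) : _ ∘ _ = _ ∘ _)]
  exact (RepTensor.injective_map_of_ext1Zero s hdual).comp (injective_tensorPathRepUnit hV K i E)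

end LeftRooted

/-! ### Matrices as differentials on free modules -/

section ShortExact

variable {A X Q : Type*} [AddCommGroup A] [AddCommGroup X] [AddCommGroup Q]
  {i : A →+ X} {p : X →+ Q} {dA : A →+ A} {dX : X →+ X} {dQ : Q →+ Q}

lemma exact_self_of_quotient (hi : Function.Injective i) (hip : Function.Exact i p)
    (hp : Function.Surjective p) (hiA : ∀ a, i (dA a) = dX (i a)) (hpX : ∀ x, p (dX x) = dQ (p x))
    (hA : Function.Exact dA dA) (hX : Function.Exact dX dX) : Function.Exact dQ dQ := by
  intro q
  obtain ⟨x, rfl⟩ := hp q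
  constructor
  · intro hx
    obtain ⟨a, ha⟩ := (hip _).1 ((hpX x).trans hx)
    obtain ⟨a', rfl⟩ := (hA a).1 (hi (by rw [hiA, ha, hX.apply_apply_eq_zero, map_zero]))
    obtain ⟨x', hx'⟩ := (hX (x - i a')).1 (by rw [map_sub, ← hiA, ha, sub_self])
    exact ⟨p x', by rw [← hpX, hx', map_sub, hip.apply_apply_eq_zero, sub_zero]⟩
  · rintro ⟨q', hq'⟩
    obtain ⟨x', rfl⟩ := hp q'
    rw [← hq', ← hpX, ← hpX, hX.apply_apply_eq_zero, map_zero]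

lemma exact_self_of_extension (hi : Function.Injective i) (hip : Function.Exact i p)
    (hp : Function.Surjective p) (hiA : ∀ a, i (dA a) = dX (i a)) (hpX : ∀ x, p (dX x) = dQ (p x))
    (hdX : ∀ x, dX (dX x) = 0) (hA : Function.Exact dA dA) (hQ : Function.Exact dQ dQ) :
    Function.Exact dX dX := by
  refine fun x => ⟨fun hx => ?_, by rintro ⟨x', rfl⟩; exact hdX x'⟩
  obtain ⟨q, hq⟩ := (hQ (p x)).1 (by rw [← hpX, hx, map_zero])
  obtain ⟨x', rfl⟩ := hp q
  obtain ⟨a, ha⟩ := (hip (x - dX x')).1 (by rw [map_sub, hpX, hq, sub_self])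
  obtain ⟨a', rfl⟩ := (hA a).1 (hi (by rw [hiA, ha, map_sub, hx, hdX, sub_zero, map_zero]))
  exact ⟨x' + i a', by rw [map_add, ← hiA, ha, add_sub_cancel]⟩

end ShortExact

section Matrix

variable {R : Type*} [Ring R] {B : Type*} (m : B → B →₀ R)
variable {E : Type*} [AddCommGroup E] [Module Rᵐᵒᵖ E] {N : Type*} [AddCommGroup N] [Module R N]

/-- The homomorphism `r ↦ e r` of right modules. -/
def smulRightHom (e : E) : R →ₗ[Rᵐᵒᵖ] E where
  toFun r := MulOpposite.op r • e
  map_add' r s := by simp [add_smul]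
  map_smul' r s := by simp [mul_smul]

/-- The endomorphism `E ⊗ D` of `E^(B)`, where `D` is the endomorphism of the free left module
`R^(B)` with rows `m b`. -/
noncomputable def tensorDiff : (B →₀ E) →+ (B →₀ E) :=
  Finsupp.liftAddHom fun b =>
    AddMonoidHom.mk' (fun e => (m b).mapRange (smulRightHom e) (map_zero _)) fun x y => by
      ext; simp [smulRightHom]

/-- The endomorphism `Hom(D, N)` of `N^B`, where `D` is the endomorphism of the free left module
`R^(B)` with rows `m b`. -/
noncomputable def homDiff : (B → N) →+ (B → N) where
  toFun f b := Finsupp.linearCombination R f (m b)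
  map_zero' := by ext; simp
  map_add' f g := by ext; simp [Finsupp.linearCombination_apply, Finsupp.sum_add]

/-- The endomorphism of the free module with rows `m b` has square zero. -/
def IsDifferential : Prop := ∀ b, Finsupp.linearCombination R m (m b) = 0

variable (E N) in
/-- The endomorphism with rows `m b` becomes exact under `E ⊗ -`. -/
def TensorExact : Prop := Function.Exact (tensorDiff m (E := E)) (tensorDiff m)

variable (E N) in
/-- The endomorphism with rows `m b` becomes exact under `Hom(-, N)`. -/
def HomExact : Prop := Function.Exact (homDiff m (N := N)) (homDiff m)

lemma tensorDiff_single (b : B) (e : E) :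
    tensorDiff m (Finsupp.single b e) = (m b).mapRange (smulRightHom e) (map_zero _) :=
  Finsupp.liftAddHom_apply_single _ _ _

lemma homDiff_apply (f : B → N) (b : B) : homDiff m f b = Finsupp.linearCombination R f (m b) :=
  rfl

lemma tensorDiff_eq_linearCombination (y : B →₀ R) :
    tensorDiff m y = Finsupp.linearCombination R m y := by
  induction y using Finsupp.induction_linear with
  | zero => simp
  | add x y hx hy => rw [map_add, hx, hy, map_add]
  | single b r => ext; simp [tensorDiff_single, smulRightHom]

lemma tensorDiff_mapRange {E' : Type*} [AddCommGroup E'] [Module Rᵐᵒᵖ E'] (φ : E →ₗ[Rᵐᵒᵖ] E')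
    (y : B →₀ E) :
    tensorDiff m (y.mapRange φ (map_zero φ)) = (tensorDiff m y).mapRange φ (map_zero φ) := by
  induction y using Finsupp.induction_linear with
  | zero => simp
  | add x y hx hy => simp only [Finsupp.mapRange_add (map_add φ), map_add, hx, hy]
  | single b e => ext; simp [tensorDiff_single, smulRightHom]

lemma homDiff_eq_of_eqOn {f g : B → N} {b : B} (h : Set.EqOn f g (m b).support) :
    homDiff m f b = homDiff m g b := by
  simp only [homDiff_apply, Finsupp.linearCombination_apply]
  exact Finset.sum_congr rfl fun c hc => congrArg (_ • ·) (h hc)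

variable {m}

lemma IsDifferential.tensorDiff_tensorDiff (hm : IsDifferential m) (y : B →₀ E) :
    tensorDiff m (tensorDiff m y) = 0 := by
  induction y using Finsupp.induction_linear with
  | zero => simp
  | add x y hx hy => rw [map_add, map_add, hx, hy, add_zero]
  | single b e =>
    rw [tensorDiff_single, tensorDiff_mapRange, tensorDiff_eq_linearCombination, hm b,
      Finsupp.mapRange_zero]

lemma IsDifferential.homDiff_homDiff (hm : IsDifferential m) (f : B → N) :
    homDiff m (homDiff m f) = 0 := by
  have h : Finsupp.linearCombination R (homDiff m f) =
      (Finsupp.linearCombination R f).comp (Finsupp.linearCombination R m) := by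
    ext; simp [homDiff_apply]
  ext b
  simp [homDiff_apply m (homDiff m f), h, hm b]

lemma isDifferential_iff_tensorDiff :
    IsDifferential m ↔ ∀ y : B →₀ R, tensorDiff m (tensorDiff m y) = 0 :=
  ⟨fun hm => hm.tensorDiff_tensorDiff, fun h b => by
    simpa only [tensorDiff_eq_linearCombination, Finsupp.linearCombination_single, one_smul] using
      h (Finsupp.single b 1)⟩

lemma IsDifferential.tensorExact (hm : IsDifferential m)
    (h : ∀ y : B →₀ E, tensorDiff m y = 0 → ∃ x, tensorDiff m x = y) : TensorExact m E :=
  fun y => ⟨h y, by rintro ⟨x, rfl⟩; exact hm.tensorDiff_tensorDiff x⟩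

lemma IsDifferential.homExact (hm : IsDifferential m)
    (h : ∀ f : B → N, homDiff m f = 0 → ∃ g, homDiff m g = f) : HomExact m N :=
  fun f => ⟨h f, by rintro ⟨g, rfl⟩; exact hm.homDiff_homDiff g⟩

end Matrix


section Character

variable {R : Type u} [Ring R] {E : Type u} [AddCommGroup E] [Module Rᵐᵒᵖ E]

lemma liftAddHom_comp_tensorDiff {G : Type u} [AddCommGroup G] {B : Type*} (m : B → B →₀ R)
    (f : B → (E →+ G)) :
    (Finsupp.liftAddHom f).comp (tensorDiff m) = Finsupp.liftAddHom (homDiff m f) := by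
  ext b e
  change Finsupp.liftAddHom f (tensorDiff m (Finsupp.single b e)) =
    Finsupp.liftAddHom (homDiff m f) (Finsupp.single b e)
  rw [tensorDiff_single, Finsupp.liftAddHom_apply_single, Finsupp.liftAddHom_apply,
    Finsupp.sum_mapRange_index (by simp)]
  simp [homDiff_apply, Finsupp.linearCombination_apply, Finsupp.sum, smulRightHom]

lemma tensorExact_iff_homExact {B : Type u} {m : B → B →₀ R} :
    TensorExact m E ↔ HomExact m (E →+ QZ.{u}) := by
  refine (exact_iff_characters _ _).trans
    ((Finsupp.liftAddHom (α := B) (M := E) (N := QZ.{u})).surjective.forall.trans ?_)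
  refine forall_congr' fun f => iff_congr ?_ ?_
  · rw [liftAddHom_comp_tensorDiff, map_eq_zero_iff _ (AddEquiv.injective _)]
  · refine Finsupp.liftAddHom.surjective.exists.trans (exists_congr fun g => ?_)
    rw [liftAddHom_comp_tensorDiff, (AddEquiv.injective _).eq_iff]

end Character

section Restrict

variable {R : Type*} [Ring R] {B S T : Type*} (m : B → B →₀ R) (j : S ↪ B)

/-- The square submatrix of `m` on the rows and columns in the image of `j`. -/
noncomputable def restrict (s : S) : S →₀ R := (m (j s)).comapDomain j j.injective.injOn

/-- The coordinates in `C` span a subobject: all rows in `C` are supported in `C`. -/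
def IsSupportClosed (C : Set B) : Prop := ∀ b ∈ C, ↑(m b).support ⊆ C

lemma restrict_restrict (k : T ↪ S) : restrict (restrict m j) k = restrict m (k.trans j) := by
  ext; rfl

variable {m j}
variable {E : Type*} [AddCommGroup E] [Module Rᵐᵒᵖ E] {N : Type*} [AddCommGroup N] [Module R N]

lemma mapDomain_eq_zero_iff {y : S →₀ E} : y.mapDomain j = 0 ↔ y = 0 :=
  (Finsupp.mapDomain_injective j.injective).eq_iff' Finsupp.mapDomain_zero

lemma support_mapDomain_subset_range (y : S →₀ E) : ↑(y.mapDomain j).support ⊆ Set.range j := by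
  classical
  exact (Finset.coe_subset.2 Finsupp.mapDomain_support).trans (by simp)

lemma mapDomain_eq_iff {y : S →₀ E} {z : B →₀ E} :
    y.mapDomain j = z ↔
      ↑z.support ⊆ Set.range j ∧ y = Finsupp.comapDomain.addMonoidHom j.injective z := by
  constructor
  · rintro rfl
    exact ⟨support_mapDomain_subset_range y, (Finsupp.comapDomain_mapDomain j j.injective y).symm⟩
  · rintro ⟨hz, rfl⟩
    exact Finsupp.mapDomain_comapDomain j j.injective z hz

lemma tensorDiff_restrict (y : S →₀ E) :
    tensorDiff (restrict m j) y =
      Finsupp.comapDomain.addMonoidHom j.injective (tensorDiff m (y.mapDomain j)) := by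
  induction y using Finsupp.induction_linear with
  | zero => simp
  | add x y hx hy => rw [map_add, hx, hy, Finsupp.mapDomain_add, map_add, map_add]
  | single b e => ext; simp [tensorDiff_single, restrict]

lemma homDiff_restrict (f : S → N) :
    homDiff (restrict m j) f = homDiff m (Function.extend j f 0) ∘ j := by
  ext s
  have h := Finset.sum_preimage j (m (j s)).support j.injective.injOn
    (fun b => m (j s) b • Function.extend j f 0 b) fun b _ hb => by
      rw [Function.extend_apply' _ _ _ hb, Pi.zero_apply, smul_zero]
  simp only [j.injective.extend_apply] at h
  rw [homDiff_apply, restrict, Finsupp.linearCombination_comapDomain, h, Function.comp_apply,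
    homDiff_apply, Finsupp.linearCombination_apply, Finsupp.sum]

lemma homDiff_restrict_comp {f : B → N} (h : ∀ b ∉ Set.range j, f b = 0) :
    homDiff (restrict m j) (f ∘ j) = homDiff m f ∘ j := by
  have hf : Function.extend j (f ∘ j) 0 = f := by
    ext b
    by_cases hb : b ∈ Set.range j
    · obtain ⟨s, rfl⟩ := hb
      exact j.injective.extend_apply _ _ _
    · rw [Function.extend_apply' _ _ _ hb, h b hb, Pi.zero_apply]
  rw [homDiff_restrict, hf]

lemma IsSupportClosed.support_tensorDiff_subset {C : Set B} (hC : IsSupportClosed m C)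
    {y : B →₀ E} (hy : ↑y.support ⊆ C) : ↑(tensorDiff m y).support ⊆ C := by
  rw [tensorDiff, Finsupp.liftAddHom_apply]
  refine (Finsupp.supported E ℤ C).sum_mem fun b hb => ?_
  exact Set.Subset.trans (Finset.coe_subset.2 (Finsupp.support_mapRange (hf := map_zero _)))
    (hC b (hy hb))

lemma IsSupportClosed.restrict (k : T ↪ S) (h : IsSupportClosed m (Set.range (k.trans j))) :
    IsSupportClosed (restrict m j) (Set.range k) := by
  rintro _ ⟨t, rfl⟩ s hs
  obtain ⟨t', ht'⟩ := h _ ⟨t, rfl⟩ (a := j s) (by simpa [QuiverGF.restrict] using hs)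
  exact ⟨t', j.injective ht'⟩

lemma exact_mapDomain_comapDomain {p : T ↪ B} (hp : Set.range p = (Set.range j)ᶜ) :
    Function.Exact (Finsupp.mapDomain.addMonoidHom (M := E) j)
      (Finsupp.comapDomain.addMonoidHom (M := E) p.injective) := by
  refine fun z => ⟨fun hz => ⟨_, mapDomain_eq_iff.2 ⟨fun b hb => ?_, rfl⟩⟩, ?_⟩
  · by_contra hbj
    obtain ⟨t, rfl⟩ := hp.ge hbj
    exact Finsupp.mem_support_iff.1 hb (DFunLike.congr_fun hz t)
  · rintro ⟨y, rfl⟩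
    ext t
    exact Finsupp.mapDomain_of_notMem_range _ _ (hp.le ⟨t, rfl⟩)

section Closed

variable (hj : IsSupportClosed m (Set.range j))
include hj

lemma mapDomain_tensorDiff_restrict (y : S →₀ E) :
    (tensorDiff (restrict m j) y).mapDomain j = tensorDiff m (y.mapDomain j) :=
  mapDomain_eq_iff.2
    ⟨hj.support_tensorDiff_subset (support_mapDomain_subset_range y), tensorDiff_restrict y⟩

lemma IsDifferential.restrict (hm : IsDifferential m) : IsDifferential (restrict m j) :=
  isDifferential_iff_tensorDiff.2 fun y => by
    rw [← mapDomain_eq_zero_iff (j := j), mapDomain_tensorDiff_restrict hj,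
      mapDomain_tensorDiff_restrict hj, hm.tensorDiff_tensorDiff]

lemma homDiff_restrict_comp_of_isSupportClosed (f : B → N) :
    homDiff (QuiverGF.restrict m j) (f ∘ j) = homDiff m f ∘ j := by
  rw [homDiff_restrict]
  ext s
  refine homDiff_eq_of_eqOn m fun b hb => ?_
  obtain ⟨s', rfl⟩ := hj _ ⟨s, rfl⟩ hb
  exact j.injective.extend_apply _ _ _

lemma tensorExact_restrict_iff (hm : IsDifferential m) :
    TensorExact (QuiverGF.restrict m j) E ↔ ∀ y : B →₀ E, ↑y.support ⊆ Set.range j →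
      tensorDiff m y = 0 → ∃ x : B →₀ E, ↑x.support ⊆ Set.range j ∧ tensorDiff m x = y := by
  constructor
  · intro h y hy h0
    obtain ⟨y, rfl⟩ : ∃ y', Finsupp.mapDomain j y' = y := ⟨_, mapDomain_eq_iff.2 ⟨hy, rfl⟩⟩
    obtain ⟨x, rfl⟩ := (h y).1
      (mapDomain_eq_zero_iff.1 ((mapDomain_tensorDiff_restrict hj y).trans h0))
    exact ⟨_, support_mapDomain_subset_range x, (mapDomain_tensorDiff_restrict hj x).symm⟩
  · refine fun h => (hm.restrict hj).tensorExact fun y hy => ?_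
    obtain ⟨x, hx, hxy⟩ := h _ (support_mapDomain_subset_range y) (by
      rw [← mapDomain_tensorDiff_restrict hj, hy, Finsupp.mapDomain_zero])
    obtain ⟨x, rfl⟩ : ∃ x', Finsupp.mapDomain j x' = x := ⟨_, mapDomain_eq_iff.2 ⟨hx, rfl⟩⟩
    exact ⟨x, Finsupp.mapDomain_injective j.injective
      ((mapDomain_tensorDiff_restrict hj x).trans hxy)⟩

variable {p : T ↪ B} (hp : Set.range p = (Set.range j)ᶜ)
include hp

lemma comapDomain_tensorDiff (y : B →₀ E) :
    Finsupp.comapDomain.addMonoidHom p.injective (tensorDiff m y) =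
      tensorDiff (QuiverGF.restrict m p) (Finsupp.comapDomain.addMonoidHom p.injective y) := by
  have hpj := exact_mapDomain_comapDomain (E := E) hp
  set y' := Finsupp.comapDomain.addMonoidHom p.injective y with hy'
  obtain ⟨a, ha⟩ := (hpj (y - y'.mapDomain p)).1 (by
    rw [map_sub, ← hy', sub_eq_zero]
    exact (Finsupp.comapDomain_mapDomain p p.injective y').symm)
  rw [tensorDiff_restrict, ← sub_eq_zero, ← map_sub, ← map_sub, ← ha]
  exact (hpj _).2 ⟨_, mapDomain_tensorDiff_restrict hj a⟩

lemma TensorExact.restrict_compl (h : TensorExact m E)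
    (hjE : TensorExact (QuiverGF.restrict m j) E) : TensorExact (QuiverGF.restrict m p) E :=
  exact_self_of_quotient (Finsupp.mapDomain_injective j.injective)
    (exact_mapDomain_comapDomain hp) (fun y => ⟨_, Finsupp.comapDomain_mapDomain p p.injective y⟩)
    (mapDomain_tensorDiff_restrict hj) (comapDomain_tensorDiff hj hp) hjE h

lemma tensorExact_of_restrict (hm : IsDifferential m)
    (hjE : TensorExact (QuiverGF.restrict m j) E) (hpE : TensorExact (QuiverGF.restrict m p) E) :
    TensorExact m E :=
  exact_self_of_extension (Finsupp.mapDomain_injective j.injective)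
    (exact_mapDomain_comapDomain hp) (fun y => ⟨_, Finsupp.comapDomain_mapDomain p p.injective y⟩)
    (mapDomain_tensorDiff_restrict hj) (comapDomain_tensorDiff hj hp) hm.tensorDiff_tensorDiff
    hjE hpE

lemma IsDifferential.restrict_compl (hm : IsDifferential m) :
    IsDifferential (QuiverGF.restrict m p) :=
  isDifferential_iff_tensorDiff.2 fun y => by
    obtain ⟨y, rfl⟩ : ∃ y', Finsupp.comapDomain.addMonoidHom p.injective y' = y :=
      ⟨_, Finsupp.comapDomain_mapDomain p p.injective y⟩
    rw [← comapDomain_tensorDiff hj hp, ← comapDomain_tensorDiff hj hp,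
      hm.tensorDiff_tensorDiff, map_zero]

end Closed

end Restrict

section Zorn

variable {R : Type u} [Ring R] {B : Type v} {m : B → B →₀ R} {N : Type w} [AddCommGroup N]
  [Module R N]

/-- Matrices of square zero that become exact under `E ⊗ -` for all `E` in `𝓔`. -/
structure IsExactFor (𝓔 : Set (ModuleCat.{u} Rᵐᵒᵖ)) (m : B → B →₀ R) : Prop where
  isDifferential : IsDifferential m
  tensorExact : ∀ E ∈ 𝓔, TensorExact m E

/-- The restriction of `m` to the rows and columns in `C`. -/
noncomputable abbrev restrictSet (m : B → B →₀ R) (C : Set B) : C → C →₀ R :=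
  restrict m (.subtype (· ∈ C))

lemma range_embedding_subtype (C : Set B) :
    Set.range (Function.Embedding.subtype (· ∈ C)) = C :=
  Subtype.range_coe

lemma range_embedding_subtype_compl (C : Set B) :
    Set.range (Function.Embedding.subtype (· ∈ Cᶜ)) =
      (Set.range (Function.Embedding.subtype (· ∈ C)))ᶜ := by
  simp only [range_embedding_subtype]

section Union

variable {C : Set B} {D : Set ↥Cᶜ}

lemma IsSupportClosed.union (hC : IsSupportClosed m C)
    (hD : IsSupportClosed (restrictSet m Cᶜ) D) : IsSupportClosed m (C ∪ Subtype.val '' D) := by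
  rintro b (hb | ⟨b, hb, rfl⟩) c hc
  · exact .inl (hC b hb hc)
  · by_cases hcC : c ∈ C
    · exact .inl hcC
    · exact .inr ⟨⟨c, hcC⟩,
        hD b hb (Finsupp.mem_support_iff.2 (Finsupp.mem_support_iff.1 hc :)), rfl⟩

lemma TensorExact.restrictSet_union {E : Type*} [AddCommGroup E] [Module Rᵐᵒᵖ E]
    (hCE : TensorExact (restrictSet m C) E) (hm : IsDifferential m) (hC : IsSupportClosed m C)
    (hD : IsSupportClosed (restrictSet m Cᶜ) D)
    (hDE : TensorExact (restrictSet (restrictSet m Cᶜ) D) E) :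
    TensorExact (restrictSet m (C ∪ Subtype.val '' D)) E := by
  let j : ↥C ↪ ↥(C ∪ Subtype.val '' D) := Set.embeddingOfSubset _ _ Set.subset_union_left
  let p : D ↪ ↥(C ∪ Subtype.val '' D) :=
    ⟨fun b => ⟨b.1.1, .inr ⟨b.1, b.2, rfl⟩⟩,
      fun b c h => Subtype.ext (Subtype.ext (congrArg (fun x => x.1) h))⟩
  have hp : Set.range p = (Set.range j)ᶜ := by
    ext ⟨b, hb⟩
    refine ⟨?_, fun hbC => ?_⟩
    · rintro ⟨d, hd⟩ ⟨c, hc⟩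
      have hdc : d.1.1 = c.1 := congrArg Subtype.val (hd.trans hc.symm)
      exact d.1.2 (hdc ▸ c.2)
    · obtain hb | ⟨d, hd, rfl⟩ := hb
      · exact (hbC ⟨⟨b, hb⟩, rfl⟩).elim
      · exact ⟨⟨d, hd⟩, rfl⟩
  rw [restrictSet, restrictSet, restrict_restrict] at hDE
  refine tensorExact_of_restrict (m := restrictSet m (C ∪ Subtype.val '' D)) (j := j) (p := p)
    (.restrict j ?_) hp (hm.restrict ?_) (by rwa [restrict_restrict])
    (by rwa [restrict_restrict])
  · rw [← range_embedding_subtype C] at hC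
    exact hC
  · rw [range_embedding_subtype]
    exact hC.union hD

end Union

/-- A solution `toFun` of the equation `homDiff m g = f` on a set `carrier` of rows that spans a
subobject and that remains exact under `𝓔`. -/
structure PartialSolution (𝓔 : Set (ModuleCat.{u} Rᵐᵒᵖ)) (m : B → B →₀ R) (f : B → N) where
  carrier : Set B
  toFun : B → N
  isSupportClosed : IsSupportClosed m carrier
  tensorExact : ∀ E ∈ 𝓔, TensorExact (restrictSet m carrier) E
  eqOn : Set.EqOn (homDiff m toFun) f carrier

namespace PartialSolution

variable {𝓔 : Set (ModuleCat.{u} Rᵐᵒᵖ)} {f : B → N}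

instance : Preorder (PartialSolution 𝓔 m f) where
  le s t := s.carrier ⊆ t.carrier ∧ Set.EqOn s.toFun t.toFun s.carrier
  le_refl s := ⟨subset_rfl, Set.eqOn_refl _ _⟩
  le_trans s t u hst htu := ⟨hst.1.trans htu.1, hst.2.trans (htu.2.mono hst.1)⟩

instance : Nonempty (PartialSolution 𝓔 m f) :=
  ⟨{carrier := ∅, toFun := 0, isSupportClosed := fun _ h => h.elim,
    tensorExact := fun _ _ _ => iff_of_true (Subsingleton.elim _ _) ⟨0, Subsingleton.elim _ _⟩,
    eqOn := Set.eqOn_empty _ _}⟩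

lemma exists_eqOn_of_isChain {c : Set (PartialSolution 𝓔 m f)} (hc : IsChain (· ≤ ·) c) :
    ∃ H : B → N, ∀ s ∈ c, Set.EqOn s.toFun H s.carrier := by
  have h (b : B) : ∃ n, ∀ s ∈ c, b ∈ s.carrier → s.toFun b = n := by
    by_cases hb : ∃ s ∈ c, b ∈ s.carrier
    · obtain ⟨s, hs, hb⟩ := hb
      refine ⟨s.toFun b, fun t ht hbt => ?_⟩
      rcases hc.total hs ht with hst | hts
      · exact (hst.2 hb).symm
      · exact hts.2 hbt
    · exact ⟨0, fun s hs hbs => (hb ⟨s, hs, hbs⟩).elim⟩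
  choose H hH using h
  exact ⟨H, fun s hs b hb => hH b s hs hb⟩

lemma bddAbove_of_isChain (hm : IsDifferential m) {c : Set (PartialSolution 𝓔 m f)}
    (hc : IsChain (· ≤ ·) c) (hne : c.Nonempty) : BddAbove c := by
  obtain ⟨H, hH⟩ := exists_eqOn_of_isChain hc
  have hle {s} (hs : s ∈ c) : s.carrier ⊆ ⋃ t ∈ c, t.carrier :=
    Set.subset_biUnion_of_mem (u := carrier) hs
  have hcl : IsSupportClosed m (⋃ s ∈ c, s.carrier) := by
    intro b hb
    obtain ⟨s, hs, hb⟩ := Set.mem_iUnion₂.1 hb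
    exact (s.isSupportClosed b hb).trans (hle hs)
  refine ⟨⟨⋃ s ∈ c, s.carrier, H, hcl, fun E hE => ?_, fun b hb => ?_⟩,
    fun s hs => ⟨hle hs, hH s hs⟩⟩
  · rw [tensorExact_restrict_iff (by rwa [range_embedding_subtype]) hm, range_embedding_subtype]
    intro y hy h0
    obtain ⟨s, hs, hys⟩ := DirectedOn.exists_mem_subset_of_finset_subset_biUnion hne
      (hc.directedOn.mono fun {_ _} h => h.1) hy
    have hsE := s.tensorExact E hE
    rw [tensorExact_restrict_iff (by rw [range_embedding_subtype]; exact s.isSupportClosed) hm,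
      range_embedding_subtype] at hsE
    obtain ⟨x, hx, hxy⟩ := hsE y hys h0
    exact ⟨x, hx.trans (hle hs), hxy⟩
  · obtain ⟨s, hs, hb⟩ := Set.mem_iUnion₂.1 hb
    rw [← s.eqOn hb]
    exact homDiff_eq_of_eqOn m fun d hd => (hH s hs (s.isSupportClosed b hb hd)).symm

lemma exists_extension (hm : IsDifferential m) (hf : homDiff m f = 0) (s : PartialSolution 𝓔 m f)
    {D : Set ↥s.carrierᶜ} (hD : IsSupportClosed (restrictSet m s.carrierᶜ) D)
    (hDE : ∀ E ∈ 𝓔, TensorExact (restrictSet (restrictSet m s.carrierᶜ) D) E)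
    (hDN : HomExact (restrictSet (restrictSet m s.carrierᶜ) D) N) :
    ∃ t, s ≤ t ∧ Subtype.val '' D ⊆ t.carrier := by
  let r : D ↪ B := (Function.Embedding.subtype (· ∈ D)).trans (.subtype (· ∈ s.carrierᶜ))
  let f' := f - homDiff m s.toFun
  have hf' : homDiff m f' = 0 := by rw [map_sub, hf, hm.homDiff_homDiff, sub_zero]
  have hf'0 (b : B) (hb : b ∉ Set.range (Function.Embedding.subtype (· ∈ s.carrierᶜ))) :
      f' b = 0 := by
    rw [range_embedding_subtype, Set.notMem_compl_iff] at hb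
    exact sub_eq_zero.2 (s.eqOn hb).symm
  have hr : homDiff (restrictSet (restrictSet m s.carrierᶜ) D) (f' ∘ r) = 0 := by
    have hD' := hD
    rw [← range_embedding_subtype D] at hD'
    have h := homDiff_restrict_comp_of_isSupportClosed hD' (f' ∘ Subtype.val)
    rw [show homDiff (restrictSet m s.carrierᶜ) (f' ∘ Subtype.val) = _ from
      homDiff_restrict_comp hf'0, hf'] at h
    exact h
  obtain ⟨g, hg⟩ := (hDN (f' ∘ r)).1 hr
  have hgD : homDiff m (Function.extend r g 0) ∘ r = f' ∘ r := by
    rw [← homDiff_restrict, ← restrict_restrict, hg]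
  have hg0 : Set.EqOn (Function.extend r g 0) 0 s.carrier := fun b hb =>
    Function.extend_apply' _ _ _ fun ⟨d, hd⟩ => d.1.2 (by rwa [← hd] at hb)
  refine ⟨⟨s.carrier ∪ Subtype.val '' D, s.toFun + Function.extend r g 0,
    s.isSupportClosed.union hD, fun E hE => (s.tensorExact E hE).restrictSet_union hm
      s.isSupportClosed hD (hDE E hE), ?_⟩, ⟨Set.subset_union_left, fun b hb => ?_⟩,
    Set.subset_union_right⟩
  · rw [map_add]
    rintro b (hb | ⟨b, hb, rfl⟩)
    · rw [Pi.add_apply, s.eqOn hb, homDiff_eq_of_eqOn m (hg0.mono (s.isSupportClosed b hb)),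
        map_zero, Pi.zero_apply, add_zero]
    · exact (congrArg (_ + ·) (congrFun hgD ⟨b, hb⟩)).trans (add_sub_cancel _ _)
  · exact (left_eq_add.2 (hg0 hb))

end PartialSolution

theorem homExact_of_exists_restrictSet {𝓔 : Set (ModuleCat.{u} Rᵐᵒᵖ)}
    (h : ∀ {B : Type v} [Nonempty B] (m : B → B →₀ R), IsExactFor 𝓔 m → ∃ C : Set B,
      C.Nonempty ∧ IsSupportClosed m C ∧ IsExactFor 𝓔 (restrictSet m C) ∧
        HomExact (restrictSet m C) N)
    (hm : IsExactFor 𝓔 m) : HomExact m N := by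
  refine hm.isDifferential.homExact fun f hf => ?_
  obtain ⟨s, hs⟩ := zorn_le_nonempty (α := PartialSolution 𝓔 m f) fun c hc hne =>
    PartialSolution.bddAbove_of_isChain hm.isDifferential hc hne
  suffices hC : s.carrier = Set.univ from ⟨s.toFun, funext fun b => s.eqOn (hC ▸ trivial)⟩
  by_contra hC
  have : Nonempty ↥s.carrierᶜ := (Set.nonempty_compl.2 hC).to_subtype
  have hcl : IsSupportClosed m (Set.range (Function.Embedding.subtype (· ∈ s.carrier))) := by
    rw [range_embedding_subtype]
    exact s.isSupportClosed
  have hp := range_embedding_subtype_compl s.carrier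
  obtain ⟨D, ⟨b, hb⟩, hD, hDE, hDN⟩ := h (restrictSet m s.carrierᶜ)
    ⟨hm.isDifferential.restrict_compl hcl hp,
      fun E hE => (hm.tensorExact E hE).restrict_compl hcl hp (s.tensorExact E hE)⟩
  obtain ⟨t, hst, hDt⟩ := s.exists_extension hm.isDifferential hf hD hDE.tensorExact hDN
  exact b.2 ((hs hst).1 (hDt ⟨b, hb, rfl⟩))

end Zorn

section Closure

open Cardinal

/-- Closedness under a function assigning a subset of `B` to each finite subset of `B`. -/
def IsClosedUnder {B : Type*} (c : Finset B → Set B) (C : Set B) : Prop :=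
  ∀ K : Finset B, ↑K ⊆ C → c K ⊆ C

lemma IsClosedUnder.mono {B : Type*} {c c' : Finset B → Set B} {C : Set B}
    (hC : IsClosedUnder c' C) (h : ∀ K, c K ⊆ c' K) : IsClosedUnder c C :=
  fun K hK => (h K).trans (hC K hK)

/-- `c` is realised by `κ` many operations of each arity. -/
lemma exists_isClosedUnder {B : Type u} {κ : Cardinal.{u}} (hκ : ℵ₀ ≤ κ) {c : Finset B → Set B}
    (hc : ∀ K, #(c K) ≤ κ) (b : B) : ∃ C : Set B, b ∈ C ∧ IsClosedUnder c C ∧ #C ≤ κ := by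
  classical
  have e (K : Finset B) : Nonempty (c K ↪ κ.out) := (hc K).trans_eq (mk_out κ).symm
  replace e (K : Finset B) : c K ↪ κ.out := (e K).some
  let L : FirstOrder.Language.{u, 0} := ⟨fun _ => κ.out, fun _ => Empty⟩
  let _ : L.Structure B :=
    ⟨fun k v => Function.extend (e (Finset.univ.image v)) Subtype.val (fun _ => b) k,
      fun r => r.elim⟩
  let S := FirstOrder.Language.Substructure.closure L ({b} : Set B)
  refine ⟨S, FirstOrder.Language.Substructure.subset_closure rfl, fun K hK x hx => ?_, ?_⟩
  · let v (i : Fin K.card) : B := K.equivFin.symm i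
    have hv : Finset.univ.image v = K := by
      ext a
      simp only [Finset.mem_image, Finset.mem_univ, true_and, v]
      exact ⟨fun ⟨i, hi⟩ => hi ▸ (K.equivFin.symm i).2, fun ha =>
        ⟨K.equivFin ⟨a, ha⟩, by rw [Equiv.symm_apply_apply]⟩⟩
    have hfun (K' : Finset B) (hx' : x ∈ c K') (hK' : Finset.univ.image v = K') : x ∈ S := by
      subst hK'
      have h := S.fun_mem (n := K.card) (e _ ⟨x, hx'⟩) v fun i => hK (K.equivFin.symm i).2
      rwa [show FirstOrder.Language.Structure.funMap (L := L) _ v = x from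
        (e _).injective.extend_apply Subtype.val (fun _ => b) ⟨x, hx'⟩] at h
    exact hfun K hx hv
  · have h := FirstOrder.Language.Substructure.lift_card_closure_le (L := L) (s := ({b} : Set B))
    simp only [L, lift_id, mk_singleton, mk_sigma, sum_const, mk_out, mk_nat, lift_aleph0,
      lift_id'] at h
    exact h.trans (max_le hκ (add_le_of_le hκ (one_le_aleph0.trans hκ)
      (mul_le_of_le hκ hκ (by simp))))

end Closure

section Injective

variable {R : Type u} [Ring R] {B : Type u} {m : B → B →₀ R}

lemma injective_moduleCat_pi {S : Type u} [Ring S] {J : Type u} (E : J → ModuleCat.{u} S)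
    [∀ j, Injective (E j)] : Injective (ModuleCat.of S (∀ j, E j)) :=
  Injective.of_iso (ModuleCat.piIsoPi E) inferInstance

/-- Counterexamples over modules `E L`, one for each finite set `L`, assemble to one over the
product of the `E L`. -/
lemma exists_finset_support_subset
    (h : ∀ E : ModuleCat.{u} Rᵐᵒᵖ, Injective E → TensorExact m E) (K : Finset B) :
    ∃ L : Finset B, ∀ E : ModuleCat.{u} Rᵐᵒᵖ, Injective E → ∀ y : B →₀ E, y.support ⊆ K →
      tensorDiff m y = 0 → ∃ x : B →₀ E, x.support ⊆ L ∧ tensorDiff m x = y := by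
  by_contra hcon
  push Not at hcon
  choose E hE y hyK hy0 hx using hcon
  let π (L : Finset B) : (∀ L, E L) →ₗ[Rᵐᵒᵖ] E L := LinearMap.proj L
  obtain ⟨Y, hY⟩ : ∃ Y : B →₀ (∀ L, E L), ∀ L, Y.mapRange (π L) (map_zero _) = y L :=
    ⟨Finsupp.onFinset K (fun b L => y L b) fun b hb => by
      by_contra hbK
      exact hb (funext fun L => Finsupp.notMem_support_iff.1 fun h => hbK (hyK L h)),
    fun L => by ext; rfl⟩
  have hY0 : tensorDiff m Y = 0 := Finsupp.ext fun b => funext fun L => by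
    have hL := tensorDiff_mapRange m (π L) Y
    rw [hY, hy0] at hL
    exact (DFunLike.congr_fun hL b).symm
  obtain ⟨X, hX⟩ := (h _ (injective_moduleCat_pi E) Y).1 hY0
  refine hx X.support (X.mapRange (π X.support) (map_zero _)) Finsupp.support_mapRange ?_
  rw [tensorDiff_mapRange, ← hY]
  exact congrArg _ hX

variable {N : Type u} [AddCommGroup N] [Module R N]

lemma sum_tensorDiff_apply (y : B →₀ (N →+ QZ.{u})) (f : B → N) :
    ((tensorDiff m y).sum fun b χ => χ (f b)) = y.sum fun b χ => χ (homDiff m f b) := by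
  have h := DFunLike.congr_fun (liftAddHom_comp_tensorDiff m
    fun b => (AddMonoidHom.eval (f b) : (N →+ QZ.{u}) →+ QZ.{u})) y
  have hf : homDiff m (fun b => (AddMonoidHom.eval (f b) : (N →+ QZ.{u}) →+ QZ.{u})) =
      fun b => AddMonoidHom.eval (homDiff m f b) := by
    ext b χ
    simp [homDiff_apply, Finsupp.linearCombination_apply, Finsupp.sum]
  rw [hf] at h
  exact h

lemma exists_finset_homDiff_eqOn
    (h : ∀ E : ModuleCat.{u} Rᵐᵒᵖ, Injective E → TensorExact m E)
    (hN : Injective (ModuleCat.of Rᵐᵒᵖ (N →+ QZ.{u}))) (K : Finset B) :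
    ∃ L : Finset B, ∀ f : B → N, Set.EqOn (homDiff m f) 0 L →
      ∃ g : B → N, Set.EqOn (homDiff m g) f K := by
  classical
  obtain ⟨L, hL⟩ := exists_finset_support_subset h K
  refine ⟨L, fun f hf => ?_⟩
  by_contra! hfK
  let ρ : (B → N) →+ (K → N) := AddMonoidHom.mk' (fun f b => f b) fun _ _ => rfl
  obtain ⟨χ, hχf, hχ⟩ : ∃ χ : (K → N) →+ QZ.{u}, χ (ρ f) ≠ 0 ∧
      ∀ s ∈ (ρ.comp (homDiff m)).range, χ s = 0 :=
    exists_character_of_notMem <| by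
      rintro ⟨g, hg⟩
      exact hfK g fun b hb => congrFun hg ⟨b, hb⟩
  let y : B →₀ (N →+ QZ.{u}) := ∑ b : K, .single b (χ.comp (.single (fun _ => N) b))
  have hy (f : B → N) : (y.sum fun b ξ => ξ (f b)) = χ (ρ f) := by
    have h : (y.sum fun b ξ => ξ (f b)) = Finsupp.liftAddHom (fun b => AddMonoidHom.eval (f b)) y :=
      rfl
    rw [h, map_sum, ← Finset.univ_sum_single (ρ f), map_sum]
    simp only [Finsupp.liftAddHom_apply_single]
    rfl
  have hyK : y.support ⊆ K := by
    refine Finsupp.support_finsetSum.trans (Finset.biUnion_subset.2 fun b _ => ?_)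
    exact Finsupp.support_single_subset.trans (Finset.singleton_subset_iff.2 b.2)
  have hy0 : tensorDiff m y = 0 := by
    refine Finsupp.ext fun b => DFunLike.ext _ _ fun n => ?_
    have h := sum_tensorDiff_apply (m := m) y (Pi.single b n)
    rw [hy, show χ (ρ (homDiff m (Pi.single b n))) = 0 from hχ _ ⟨_, rfl⟩,
      Finsupp.sum_eq_single b (fun c _ hc => by rw [Pi.single_eq_of_ne hc, map_zero])
        (fun _ => rfl), Pi.single_eq_same] at h
    exact h
  obtain ⟨x, hxL, hxy⟩ := hL _ hN y hyK hy0
  rw [← hy, ← hxy, sum_tensorDiff_apply] at hχf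
  exact hχf (Finset.sum_eq_zero fun b hb => by
    beta_reduce
    rw [hf (hxL hb), Pi.zero_apply, map_zero])

lemma exists_finset_correction (hm : IsDifferential m)
    (h : ∀ E : ModuleCat.{u} Rᵐᵒᵖ, Injective E → TensorExact m E)
    (hN : Injective (ModuleCat.of Rᵐᵒᵖ (N →+ QZ.{u}))) (K : Finset B) :
    ∃ L : Finset B, ∀ f : B → N, homDiff m f = 0 → ∀ g : B → N, Set.EqOn (homDiff m g) f L →
      ∀ K' : Finset B, ∃ g' : B → N, Set.EqOn (homDiff m g') f K' ∧ Set.EqOn g' g K := by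
  classical
  obtain ⟨L, hL⟩ := exists_finset_homDiff_eqOn h hN K
  refine ⟨L, fun f hf g hg K' => ?_⟩
  obtain ⟨L', hL'⟩ := exists_finset_homDiff_eqOn h hN (L ∪ K')
  obtain ⟨k, hk⟩ := hL' f fun b _ => congrFun hf b
  obtain ⟨v, hv⟩ := hL (g - k) fun b hb => by
    rw [map_sub, Pi.sub_apply, hg hb, hk (Finset.mem_union_left _ hb), sub_self, Pi.zero_apply]
  refine ⟨k + homDiff m v, fun b hb => ?_, fun b hb => ?_⟩
  · rw [map_add, hm.homDiff_homDiff, add_zero, hk (Finset.mem_union_right _ hb)]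
  · rw [Pi.add_apply, hv hb, Pi.sub_apply, add_sub_cancel]

lemma exists_exhaustion {B : Type*} [Countable B] (L : Finset B → Finset B) :
    ∃ K : ℕ → Finset B, Monotone K ∧ (∀ n, L (K n) ⊆ K (n + 1)) ∧
      ∀ b, ∀ᶠ n in Filter.atTop, b ∈ K n := by
  classical
  obtain ⟨e, he⟩ := Countable.exists_injective_nat B
  let F (n : ℕ) : Finset B := (Finset.range n).preimage e he.injOn
  let K (n : ℕ) : Finset B := n.rec ∅ fun n K => K ∪ L K ∪ F n
  have hK (n) : K (n + 1) = K n ∪ L (K n) ∪ F n := rfl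
  have hmono : Monotone K := monotone_nat_of_le_succ fun n => by
    rw [hK, Finset.union_assoc]
    exact Finset.subset_union_left
  refine ⟨K, hmono, fun n => ?_, fun b => Filter.eventually_atTop.2 ⟨e b + 2, fun n hn => ?_⟩⟩
  · rw [hK]
    exact Finset.subset_union_right.trans Finset.subset_union_left
  · refine hmono hn ?_
    rw [hK (e b + 1)]
    exact Finset.mem_union_right _ (by simp [F])

/-- Mittag-Leffler: along an exhaustion of `B` by finite sets, successive corrections of an
approximate solution stabilize in every coordinate. -/
theorem homExact_of_countable [Countable B] (hm : IsDifferential m)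
    (h : ∀ E : ModuleCat.{u} Rᵐᵒᵖ, Injective E → TensorExact m E)
    (hN : Injective (ModuleCat.of Rᵐᵒᵖ (N →+ QZ.{u}))) : HomExact m N := by
  refine hm.homExact fun f hf => ?_
  choose L hL using exists_finset_correction hm h hN
  obtain ⟨K, hmono, hLK, hK⟩ := exists_exhaustion L
  obtain ⟨L₀, hL₀⟩ := exists_finset_homDiff_eqOn h hN (K 1)
  obtain ⟨g₀, hg₀⟩ := hL₀ f fun b _ => congrFun hf b
  choose next hnext hnextK using fun (n : ℕ) (g : {g // Set.EqOn (homDiff m g) f (K (n + 1))}) =>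
    hL (K n) f hf g.1 (g.2.mono (Finset.coe_subset.2 (hLK n))) (K (n + 2))
  let G (n : ℕ) : {g // Set.EqOn (homDiff m g) f (K (n + 1))} :=
    n.rec ⟨g₀, hg₀⟩ fun n g => ⟨next n g, hnext n g⟩
  have hstable (n : ℕ) {k : ℕ} (hk : n ≤ k) : Set.EqOn (G k).1 (G n).1 (K n) := by
    induction k, hk using Nat.le_induction with
    | base => exact Set.eqOn_refl _ _
    | succ k hk ih => exact ((hnextK k (G k)).mono (Finset.coe_subset.2 (hmono hk))).trans ih
  choose ν hν using fun b => (hK b).exists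
  have hlim (b : B) : ∀ᶠ n in Filter.atTop, (G n).1 b = (G (ν b)).1 b :=
    Filter.eventually_atTop.2 ⟨ν b, fun n hn => hstable _ hn (hν b)⟩
  refine ⟨fun b => (G (ν b)).1 b, funext fun b => ?_⟩
  obtain ⟨n, hn, hbn⟩ := (((m b).support.eventually_all.2 fun c _ => hlim c).and (hK b)).exists
  rw [← (G n).2 (hmono n.le_succ hbn)]
  exact homDiff_eq_of_eqOn m fun c hc => (hn c hc).symm

lemma exists_finset_forall_tensorExact_restrictSet (hm : IsExactFor {E | Injective E} m) :
    ∃ c : Finset B → Finset B, ∀ C, IsClosedUnder (fun K => c K) C →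
      IsSupportClosed m C ∧ IsExactFor {E | Injective E} (restrictSet m C) := by
  classical
  choose L hL using exists_finset_support_subset hm.tensorExact
  refine ⟨fun K => L K ∪ K.biUnion fun b => (m b).support, fun C hC => ?_⟩
  have hcl : IsSupportClosed m C := fun b hb c hc =>
    hC {b} (by simpa using hb) (by simp [Finsupp.mem_support_iff.1 hc])
  have hcl' : IsSupportClosed m (Set.range (Function.Embedding.subtype (· ∈ C))) := by
    rwa [range_embedding_subtype]
  refine ⟨hcl, hm.isDifferential.restrict hcl', fun E hE =>
    (tensorExact_restrict_iff hcl' hm.isDifferential).2 fun y hy h0 => ?_⟩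
  obtain ⟨x, hx, hxy⟩ := hL y.support E hE y subset_rfl h0
  rw [range_embedding_subtype] at hy ⊢
  exact ⟨x, fun b hb => hC _ hy (Finset.mem_union_left _ (hx hb)), hxy⟩

theorem homExact_of_injective_dual (hm : IsExactFor {E | Injective E} m)
    (hN : Injective (ModuleCat.of Rᵐᵒᵖ (N →+ QZ.{u}))) : HomExact m N := by
  refine homExact_of_exists_restrictSet (fun {B} ⟨b⟩ m hm => ?_) hm
  obtain ⟨c, hc⟩ := exists_finset_forall_tensorExact_restrictSet hm
  obtain ⟨C, hbC, hC, hcard⟩ := exists_isClosedUnder le_rfl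
    (fun K => Cardinal.le_aleph0_iff_set_countable.2 (c K).countable_toSet) b
  obtain ⟨hcl, hCE⟩ := hc C hC
  have : Countable C := Cardinal.mk_le_aleph0_iff.1 hcard
  exact ⟨C, ⟨b, hbC⟩, hcl, hCE, homExact_of_countable hCE.isDifferential hCE.tensorExact hN⟩

end Injective

section Small

open Cardinal

variable {R : Type u} [Ring R] {B : Type u} {m : B → B →₀ R}

lemma exists_forall_tensorExact_restrictSet {E : Type u} [AddCommGroup E] [Module Rᵐᵒᵖ E]
    (hm : IsDifferential m) (hE : TensorExact m E) {κ : Cardinal.{u}} (hκ : ℵ₀ ≤ κ)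
    (hEκ : #E ≤ κ) :
    ∃ c : Finset B → Set B, (∀ K, #(c K) ≤ κ) ∧ ∀ C, IsSupportClosed m C → IsClosedUnder c C →
      TensorExact (restrictSet m C) E := by
  choose! X hX using fun y => (hE y).1
  refine ⟨fun K => ⋃ y : K →₀ E, (X (y.mapDomain (Function.Embedding.subtype (· ∈ K)))).support,
    fun K => ?_, fun C hcl hC => ?_⟩
  · refine (mk_iUnion_le _).trans (mul_le_of_le hκ ?_ (ciSup_le' fun y => ?_))
    · rw [mk_finsupp_of_fintype]
      exact (power_le_power_right hEκ).trans (power_nat_le hκ)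
    · exact (le_aleph0_iff_set_countable.2 (Finset.countable_toSet _)).trans hκ
  · rw [← range_embedding_subtype C] at hcl
    refine (tensorExact_restrict_iff hcl hm).2 fun y hy h0 => ⟨X y, ?_, hX y h0⟩
    rw [range_embedding_subtype] at hy ⊢
    obtain ⟨y', hy'⟩ :
        ∃ y', Finsupp.mapDomain (Function.Embedding.subtype (· ∈ y.support)) y' = y :=
      ⟨_, mapDomain_eq_iff.2 ⟨(range_embedding_subtype (y.support : Set B)).ge, rfl⟩⟩
    refine Set.Subset.trans (fun b hb => Set.mem_iUnion.2 ⟨y', ?_⟩) (hC y.support hy)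
    rwa [hy']

variable (R) in
/-- Matrices of square zero, exact under tensoring with injective right modules and with `R`, and
of size at most `max ℵ₀ #R`; the rows are indexed by subsets of a fixed set, so that there is only
a set of these. -/
structure SmallMatrix where
  index : Set (max ℵ₀ #R).out
  rows : index → index →₀ R
  isExactFor : IsExactFor ({E | Injective E} ∪ {ModuleCat.of Rᵐᵒᵖ R}) rows

variable {N : Type w} [AddCommGroup N] [Module R N]

section Equiv

variable {S B : Type*} {m : B → B →₀ R} (hm : IsDifferential m) (e : S ≃ B)

lemma isSupportClosed_range_equiv (m : B → B →₀ R) (e : S ≃ B) :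
    IsSupportClosed m (Set.range e.toEmbedding) := by
  rintro b - c -
  exact ⟨e.symm c, e.apply_symm_apply c⟩

include hm

lemma TensorExact.restrict_equiv {E : Type*} [AddCommGroup E] [Module Rᵐᵒᵖ E]
    (h : TensorExact m E) : TensorExact (restrict m e.toEmbedding) E :=
  (tensorExact_restrict_iff (isSupportClosed_range_equiv m e) hm).2 fun y _ hy0 =>
    ((h y).1 hy0).imp fun _ hx => ⟨fun b _ => ⟨e.symm b, e.apply_symm_apply b⟩, hx⟩

lemma HomExact.of_restrict_equiv (h : HomExact (restrict m e.toEmbedding) N) : HomExact m N := by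
  have he := isSupportClosed_range_equiv m e
  refine hm.homExact fun f hf => ?_
  obtain ⟨g, hg⟩ := (h (f ∘ e)).1 ((homDiff_restrict_comp_of_isSupportClosed he f).trans (by
    rw [hf, Pi.zero_comp]))
  obtain ⟨g, rfl⟩ : ∃ g', g' ∘ e = g := ⟨g ∘ e.symm, by ext; simp⟩
  exact ⟨g, e.surjective.injective_comp_right
    ((homDiff_restrict_comp_of_isSupportClosed he g).symm.trans hg)⟩

end Equiv

lemma exists_smallMatrix {C : Type u} {m : C → C →₀ R}
    (hm : IsExactFor ({E | Injective E} ∪ {ModuleCat.of Rᵐᵒᵖ R}) m) (hC : #C ≤ max ℵ₀ #R) :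
    ∃ (s : SmallMatrix R) (e : s.index ≃ C), s.rows = restrict m e.toEmbedding := by
  rw [← mk_out (max ℵ₀ #R)] at hC
  obtain ⟨i⟩ := hC
  let e := (Equiv.ofInjective i i.injective).symm
  exact ⟨⟨Set.range i, restrict m e.toEmbedding,
    hm.isDifferential.restrict (isSupportClosed_range_equiv m e),
    fun E hE => (hm.tensorExact E hE).restrict_equiv hm.isDifferential e⟩, e, rfl⟩

theorem homExact_of_smallMatrix (h : ∀ s : SmallMatrix R, HomExact s.rows N)
    (hm : IsExactFor ({E | Injective E} ∪ {ModuleCat.of Rᵐᵒᵖ R}) m) : HomExact m N := by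
  refine homExact_of_exists_restrictSet (fun {B} ⟨b⟩ m hm => ?_) hm
  have hκ : ℵ₀ ≤ max ℵ₀ #R := le_max_left _ _
  obtain ⟨c, hc⟩ := exists_finset_forall_tensorExact_restrictSet
    ⟨hm.isDifferential, fun E hE => hm.tensorExact E (.inl hE)⟩
  obtain ⟨c', hc'κ, hc'⟩ := exists_forall_tensorExact_restrictSet hm.isDifferential
    (hm.tensorExact _ (.inr rfl)) hκ (le_max_right _ _)
  obtain ⟨C, hbC, hC, hcard⟩ := exists_isClosedUnder (c := fun K => ↑(c K) ∪ c' K) hκ (fun K =>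
    (mk_union_le _ _).trans (add_le_of_le hκ
      ((le_aleph0_iff_set_countable.2 (c K).countable_toSet).trans hκ) (hc'κ K))) b
  obtain ⟨hcl, hCE⟩ := hc C (hC.mono fun K => Set.subset_union_left)
  have hCR : IsExactFor ({E | Injective E} ∪ {ModuleCat.of Rᵐᵒᵖ R}) (restrictSet m C) :=
    ⟨hCE.isDifferential, by
      rintro E (hE | rfl)
      · exact hCE.tensorExact E hE
      · exact hc' C hcl (hC.mono fun K => Set.subset_union_right)⟩
  obtain ⟨s, e, hs⟩ := exists_smallMatrix hCR hcard
  exact ⟨C, ⟨b, hbC⟩, hcl, hCR, .of_restrict_equiv hCE.isDifferential e (hs ▸ h s)⟩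

end Small

/-! ### From complexes of projective modules to matrices -/

section IsHomExact

variable {A : Type*} [Category* A]

/-- The sequence `X ⟶ Y ⟶ Z` becomes exact under `Hom(-, N)`. -/
def IsHomExact [HasZeroMorphisms A] {X Y Z : A} (f : X ⟶ Y) (g : Y ⟶ Z) (N : A) : Prop :=
  ∀ β : Y ⟶ N, f ≫ β = 0 ↔ ∃ γ, g ≫ γ = β

lemma IsHomExact.of_comp_eq_zero [HasZeroMorphisms A] {X Y Z N : A} {f : X ⟶ Y} {g : Y ⟶ Z}
    (w : f ≫ g = 0) (h : ∀ β : Y ⟶ N, f ≫ β = 0 → ∃ γ, g ≫ γ = β) : IsHomExact f g N :=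
  fun β => ⟨h β, by rintro ⟨γ, rfl⟩; rw [reassoc_of% w, zero_comp]⟩

section Total

variable {P : ℤ → A} [HasCoproduct P]

/-- The differential of a complex, as an endomorphism of the coproduct of its terms. -/
noncomputable def totalDiff (d : ∀ n, P n ⟶ P (n + 1)) : ∐ P ⟶ ∐ P :=
  Sigma.desc fun n => d n ≫ Sigma.ι P (n + 1)

variable (d : ∀ n, P n ⟶ P (n + 1))

lemma ι_totalDiff (n : ℤ) : Sigma.ι P n ≫ totalDiff d = d n ≫ Sigma.ι P (n + 1) :=
  Sigma.ι_desc _ _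

lemma exists_totalDiff_comp_eq_iff {N : A} (β : ∐ P ⟶ N) :
    (∃ γ, totalDiff d ≫ γ = β) ↔ ∀ n, ∃ γ, d n ≫ γ = Sigma.ι P n ≫ β := by
  refine ⟨?_, fun h => ?_⟩
  · rintro ⟨γ, rfl⟩ n
    exact ⟨Sigma.ι P (n + 1) ≫ γ, by rw [reassoc_of% ι_totalDiff d]⟩
  · choose γ hγ using h
    refine ⟨Sigma.desc (Equiv.piCongrLeft (P · ⟶ N) (Equiv.addRight 1) γ),
      Sigma.hom_ext _ _ fun n => ?_⟩
    rw [reassoc_of% ι_totalDiff d, Sigma.ι_desc, ← hγ n]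
    exact congrArg _ (Equiv.piCongrLeft_apply_apply (P · ⟶ N) (Equiv.addRight 1) γ n)

variable [HasZeroMorphisms A]

lemma totalDiff_π (n : ℤ) : totalDiff d ≫ Sigma.π P (n + 1) = Sigma.π P n ≫ d n := by
  refine Sigma.hom_ext _ _ fun k => ?_
  rw [reassoc_of% ι_totalDiff d]
  obtain rfl | hk := eq_or_ne k n
  · simp
  · rw [Sigma.ι_π_of_ne _ (by simpa using hk), Sigma.ι_π_of_ne_assoc _ hk, comp_zero, zero_comp]

lemma isHomExact_totalDiff_iff {N : A} :
    IsHomExact (totalDiff d) (totalDiff d) N ↔ ∀ n, IsHomExact (d n) (d (n + 1)) N := by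
  refine ⟨fun h n β => ?_, fun h β => ?_⟩
  · rw [← cancel_epi (Sigma.π P n), comp_zero, ← reassoc_of% totalDiff_π d, h,
      exists_totalDiff_comp_eq_iff]
    refine ⟨fun H => by simpa using H (n + 1), ?_⟩
    rintro ⟨γ, rfl⟩ k
    obtain rfl | hk := eq_or_ne k (n + 1)
    · exact ⟨γ, by simp⟩
    · exact ⟨0, by rw [Sigma.ι_π_of_ne_assoc _ hk, zero_comp, comp_zero]⟩
  · have hβ : totalDiff d ≫ β = 0 ↔ ∀ n, d n ≫ Sigma.ι P (n + 1) ≫ β = 0 := by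
      simp only [Sigma.hom_ext_iff, reassoc_of% ι_totalDiff d, comp_zero]
    rw [hβ, exists_totalDiff_comp_eq_iff]
    exact (forall_congr' fun n => h n _).trans ((Equiv.addRight (1 : ℤ)).surjective.forall
      (p := fun n => ∃ γ, d n ≫ γ = Sigma.ι P n ≫ β)).symm

end Total

variable [Preadditive A] {P F N : A}

lemma IsHomExact.of_retract (h : Retract P F) {D : P ⟶ P} {D' : F ⟶ F} (hi : h.i ≫ D' = D ≫ h.i)
    (hr : D' ≫ h.r = h.r ≫ D) (hD' : IsHomExact D' D' N) : IsHomExact D D N := by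
  refine fun β => ⟨fun hβ => ?_, ?_⟩
  · obtain ⟨γ, hγ⟩ := (hD' (h.r ≫ β)).1 (by rw [reassoc_of% hr, hβ, comp_zero])
    exact ⟨h.i ≫ γ, by rw [← reassoc_of% hi, hγ, h.retract_assoc]⟩
  · rintro ⟨γ, rfl⟩
    have hγ : D' ≫ D' ≫ h.r ≫ γ = 0 := (hD' _).2 ⟨_, rfl⟩
    rw [← h.retract_assoc (D ≫ D ≫ γ), ← reassoc_of% hr, ← reassoc_of% hr, hγ, comp_zero]

lemma isHomExact_conj_iff (e : P ≅ F) {D : P ⟶ P} :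
    IsHomExact (e.inv ≫ D ≫ e.hom) (e.inv ≫ D ≫ e.hom) N ↔ IsHomExact D D N :=
  ⟨fun h => h.of_retract e.retract (by simp) (by simp),
    fun h => h.of_retract e.symm.retract (by simp) (by simp)⟩

variable [HasBinaryBiproducts A]

/-- An extension of an endomorphism of a retract `P` of `F` to `F ⊞ F`; it differs from it by a
contractible summand. -/
noncomputable def stabilization (h : Retract P F) (D : P ⟶ P) : F ⊞ F ⟶ F ⊞ F :=
  biprod.desc (h.r ≫ D ≫ h.i ≫ biprod.inl + (𝟙 F - h.r ≫ h.i) ≫ biprod.inr)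
    (h.r ≫ D ≫ h.i ≫ biprod.inr)

lemma inl_stabilization (h : Retract P F) (D : P ⟶ P) : biprod.inl ≫ stabilization h D =
    h.r ≫ D ≫ h.i ≫ biprod.inl + (𝟙 F - h.r ≫ h.i) ≫ biprod.inr :=
  biprod.inl_desc _ _

lemma inr_stabilization (h : Retract P F) (D : P ⟶ P) : biprod.inr ≫ stabilization h D =
    h.r ≫ D ≫ h.i ≫ biprod.inr :=
  biprod.inr_desc _ _

lemma isHomExact_stabilization_iff (h : Retract P F) {D : P ⟶ P} :
    IsHomExact (stabilization h D) (stabilization h D) N ↔ IsHomExact D D N := by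
  refine ⟨fun H => H.of_retract ⟨h.i ≫ biprod.inl, biprod.fst ≫ h.r, by simp⟩ ?_ ?_,
    fun H f => ⟨fun hf => ?_, ?_⟩⟩
  · simp [inl_stabilization]
  · refine biprod.hom_ext' _ _ ?_ ?_ <;>
      simp [reassoc_of% inl_stabilization, reassoc_of% inr_stabilization]
  · have hl : h.r ≫ D ≫ h.i ≫ biprod.inl ≫ f + (𝟙 F - h.r ≫ h.i) ≫ biprod.inr ≫ f = 0 := by
      simpa [reassoc_of% inl_stabilization] using congrArg (biprod.inl ≫ ·) hf
    have hr : h.r ≫ D ≫ h.i ≫ biprod.inr ≫ f = 0 := by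
      simpa [reassoc_of% inr_stabilization] using congrArg (biprod.inr ≫ ·) hf
    have hl' : D ≫ h.i ≫ biprod.inl ≫ f = 0 := by simpa using congrArg (h.i ≫ ·) hl
    have hr' : D ≫ h.i ≫ biprod.inr ≫ f = 0 := by simpa using congrArg (h.i ≫ ·) hr
    have hfr : biprod.inr ≫ f = h.r ≫ h.i ≫ biprod.inr ≫ f := by
      simpa [hl', sub_eq_zero] using hl
    obtain ⟨γ, hγ⟩ := (H _).1 hl'
    obtain ⟨δ, hδ⟩ := (H _).1 hr'
    refine ⟨biprod.desc (h.r ≫ γ) (h.r ≫ δ + (𝟙 F - h.r ≫ h.i) ≫ biprod.inl ≫ f),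
      biprod.hom_ext' _ _ ?_ ?_⟩
    · simp [reassoc_of% inl_stabilization, hγ]
    · simp [reassoc_of% inr_stabilization, hδ, ← hfr]
  · rintro ⟨γ, rfl⟩
    have hD (β : P ⟶ N) : D ≫ D ≫ β = 0 := (H _).2 ⟨_, rfl⟩
    refine biprod.hom_ext' _ _ ?_ ?_ <;>
      simp [reassoc_of% inl_stabilization, reassoc_of% inr_stabilization, hD]

end IsHomExact

section MatrixEnd

variable {R : Type u} [Ring R]

/-- The endomorphism of the free module with rows `m b`. -/
noncomputable abbrev matrixEnd {B : Type u} (m : B → B →₀ R) :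
    ModuleCat.of R (B →₀ R) ⟶ ModuleCat.of R (B →₀ R) :=
  ModuleCat.ofHom (Finsupp.linearCombination R m)

lemma homExact_iff_isHomExact {B : Type u} {m : B → B →₀ R} {N : ModuleCat.{u} R} :
    HomExact m N ↔ IsHomExact (matrixEnd m) (matrixEnd m) N := by
  let e : (B → N) ≃ (ModuleCat.of R (B →₀ R) ⟶ N) :=
    ⟨fun f => ModuleCat.ofHom (Finsupp.linearCombination R f),
      fun β b => β.hom (Finsupp.single b 1), fun f => by ext; simp, fun β => by ext; simp⟩
  have he0 : e 0 = 0 := by ext; simp [e]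
  have he (f : B → N) : matrixEnd m ≫ e f = e (homDiff m f) := by ext; simp [e, homDiff_apply]
  refine e.forall_congr fun f => iff_congr ?_ (e.exists_congr fun g => ?_)
  · rw [he, ← he0, e.apply_eq_iff_eq]
  · rw [he, e.apply_eq_iff_eq]

lemma exists_matrixEnd_eq {B : Type u} (D : ModuleCat.of R (B →₀ R) ⟶ ModuleCat.of R (B →₀ R)) :
    ∃ m, matrixEnd m = D :=
  ⟨fun b => D.hom (Finsupp.single b 1), by ext b; simp⟩

lemma exists_homExact_iff_isHomExact {P : ModuleCat.{u} R} [Projective P] (D : P ⟶ P) :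
    ∃ (B : Type u) (m : B → B →₀ R),
      ∀ N : ModuleCat.{u} R, HomExact m N ↔ IsHomExact D D N := by
  let p : ModuleCat.of R (P →₀ R) ⟶ P := ModuleCat.ofHom (Finsupp.linearCombination R id)
  have hp : Epi p :=
    (ModuleCat.epi_iff_surjective _).2 (Finsupp.linearCombination_id_surjective R P)
  let h : Retract P (ModuleCat.of R (P →₀ R)) :=
    ⟨Projective.factorThru (𝟙 P) p, p, Projective.factorThru_comp _ _⟩
  let e : ModuleCat.of R (P →₀ R) ⊞ ModuleCat.of R (P →₀ R) ≅ ModuleCat.of R (P ⊕ P →₀ R) :=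
    ModuleCat.biprodIsoProd _ _ ≪≫ (Finsupp.sumFinsuppLEquivProdFinsupp R).symm.toModuleIso
  obtain ⟨m, hm⟩ := exists_matrixEnd_eq (e.inv ≫ stabilization h D ≫ e.hom)
  refine ⟨P ⊕ P, m, fun N => ?_⟩
  rw [homExact_iff_isHomExact, hm, isHomExact_conj_iff, isHomExact_stabilization_iff]

end MatrixEnd

section Dual

variable {R : Type u} [Ring R]

/-- Exchange of arguments of a pairing of `E` and `N` that is balanced over `R`. -/
def flipEquiv {E N G : Type u} [AddCommGroup E] [Module Rᵐᵒᵖ E] [AddCommGroup N] [Module R N]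
    [AddCommGroup G] : (E →ₗ[Rᵐᵒᵖ] (N →+ G)) ≃ (N →ₗ[R] (E →+ G)) where
  toFun φ :=
    { toFun := φ.toAddMonoidHom.flip
      map_add' := map_add _
      map_smul' := fun r n => AddMonoidHom.ext fun e => by simp }
  invFun ψ :=
    { toFun := ψ.toAddMonoidHom.flip
      map_add' := map_add _
      map_smul' := fun r e => AddMonoidHom.ext fun n => by simp }

lemma injective_dual_of_projective (N : ModuleCat.{u} R) [hN : Projective N] :
    Injective (ModuleCat.of Rᵐᵒᵖ (N →+ QZ.{u})) := by
  have := (IsProjective.iff_projective N).2 hN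
  refine ⟨fun {A A'} φ f hf => ?_⟩
  obtain ⟨ψ, hψ⟩ := Module.projective_lifting_property (precompHomOp (R := R) f.hom)
    (flipEquiv φ.hom) (exists_character_extension ((ModuleCat.mono_iff_injective f).1 hf))
  refine ⟨ModuleCat.ofHom (flipEquiv.symm ψ), ModuleCat.hom_ext (flipEquiv.injective ?_)⟩
  exact hψ

variable (R) in
lemma injective_dual_self : Injective (ModuleCat.of R (R →+ QZ.{u})) := by
  have : Module.Projective Rᵐᵒᵖ R := .of_equiv (MulOpposite.opLinearEquiv Rᵐᵒᵖ).symm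
  refine ⟨fun {A A'} φ f hf => ?_⟩
  obtain ⟨ψ, hψ⟩ := Module.projective_lifting_property (precompHom (R := R) f.hom)
    (flipEquiv.symm φ.hom) (exists_character_extension ((ModuleCat.mono_iff_injective f).1 hf))
  refine ⟨ModuleCat.ofHom (flipEquiv ψ), ModuleCat.hom_ext (flipEquiv.symm.injective ?_)⟩
  exact hψ

end Dual

section Complex

variable {R : Type u} [Ring R]

lemma isExactFor_of_homExact {𝓔 : Set (ModuleCat.{u} Rᵐᵒᵖ)} (hR : ModuleCat.of Rᵐᵒᵖ R ∈ 𝓔)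
    {B : Type u} {m : B → B →₀ R} (h : ∀ E ∈ 𝓔, HomExact m (E →+ QZ.{u})) : IsExactFor 𝓔 m :=
  ⟨isDifferential_iff_tensorDiff.2 fun y =>
      (tensorExact_iff_homExact.2 (h _ hR)).apply_apply_eq_zero y,
    fun E hE => tensorExact_iff_homExact.2 (h E hE)⟩

lemma isHomExact_of_injective {A : Type*} [Category* A] [Abelian A] {X Y Z : A} {f : X ⟶ Y}
    {g : Y ⟶ Z} {w : f ≫ g = 0} (h : (ShortComplex.mk f g w).Exact) (I : A) [Injective I] :
    IsHomExact f g I :=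
  .of_comp_eq_zero w fun β hβ => ⟨h.descToInjective β hβ, h.comp_descToInjective β hβ⟩

lemma projective_sigmaObj {A : Type*} [Category* A] {K : Type*} (P : K → A) [HasCoproduct P]
    [∀ k, Projective (P k)] : Projective (∐ P) :=
  ⟨fun f e _ => ⟨Sigma.desc fun k => Projective.factorThru (Sigma.ι P k ≫ f) e,
    Sigma.hom_ext _ _ fun k => by simp⟩⟩

lemma ext1Zero_of_homExact {X N : ModuleCat.{u} R} (hX : X ∈ relGorensteinProj (dualInjModules R))
    (hN : ∀ (B : Type u) (m : B → B →₀ R),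
      IsExactFor ({E | Injective E} ∪ {ModuleCat.of Rᵐᵒᵖ R}) m → HomExact m N) : ext1Zero X N := by
  obtain ⟨P, d, hP, hd, ⟨e⟩, hT⟩ := exists_ascending_of_relGorensteinProj hX
  have := projective_sigmaObj P
  obtain ⟨B, m, hm⟩ := exists_homExact_iff_isHomExact (totalDiff d)
  have hmN (N : ModuleCat.{u} R) : HomExact m N ↔ ∀ n, IsHomExact (d n) (d (n + 1)) N :=
    (hm N).trans (isHomExact_totalDiff_iff d)
  have hmE : IsExactFor ({E | Injective E} ∪ {ModuleCat.of Rᵐᵒᵖ R}) m := by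
    refine isExactFor_of_homExact (.inr rfl) ?_
    rintro E (hE | rfl)
    · exact (hmN (ModuleCat.of R (E →+ QZ.{u}))).2 fun n =>
        .of_comp_eq_zero (hd n).1 (hT _ ⟨E, hE, rfl⟩ n)
    · have := injective_dual_self R
      exact (hmN (ModuleCat.of R (R →+ QZ.{u}))).2 fun n => isHomExact_of_injective (hd n).2 _
  have hXN : X ∈ relGorensteinProj (insert N (dualInjModules R)) := by
    refine relGorensteinProj_of_iso e (relGorensteinProj_of_ascending P d hP hd ?_ 0)
    rintro N' (rfl | hN') n β hβ
    · exact ((hmN N').1 (hN B m hmE) n β).1 hβ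
    · exact hT N' hN' n β hβ
  exact relGorensteinProj_subset_leftPerp _ hXN N (Set.mem_insert N _)

lemma mem_rightPerp_of_projective (N : ModuleCat.{u} R) [Projective N] :
    N ∈ rightPerp (relGorensteinProj (dualInjModules R)) :=
  fun _ hX => ext1Zero_of_homExact hX fun _ _ hm =>
    homExact_of_injective_dual ⟨hm.isDifferential, fun E hE => hm.tensorExact E (.inl hE)⟩
      (injective_dual_of_projective N)

end Complex

section SmallMatrix

variable {R : Type u} [Ring R]

namespace SmallMatrix

variable (s : SmallMatrix R)

lemma matrixEnd_exact : ∃ w,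
    (ShortComplex.mk (matrixEnd s.rows) (matrixEnd s.rows) w).Exact := by
  have h : Function.Exact (Finsupp.linearCombination R s.rows)
      (Finsupp.linearCombination R s.rows) := by
    simpa only [TensorExact, Function.Exact, Set.mem_range, tensorDiff_eq_linearCombination] using
      s.isExactFor.tensorExact _ (.inr rfl)
  exact ⟨ModuleCat.hom_ext (LinearMap.ext h.apply_apply_eq_zero),
    (ShortComplex.ShortExact.moduleCat_exact_iff_function_exact _).2 h⟩

lemma kernel_mem : kernel (matrixEnd s.rows) ∈ relGorensteinProj (dualInjModules R) := by
  refine relGorensteinProj_of_ascending (fun _ => ModuleCat.of R (s.index →₀ R))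
    (fun _ => matrixEnd s.rows) (fun _ => inferInstance) (fun _ => s.matrixEnd_exact) ?_ 0
  rintro _ ⟨E, hE, rfl⟩ _ β hβ
  have hsE := tensorExact_iff_homExact.1 (s.isExactFor.tensorExact E (.inl hE))
  exact (homExact_iff_isHomExact (N := ModuleCat.of R (E →+ QZ.{u})).1 hsE β).1 hβ

lemma isShortExact_kernel : IsShortExact (kernel.ι (matrixEnd s.rows))
    (kernel.lift _ (matrixEnd s.rows) s.matrixEnd_exact.1) :=
  isShortExact_kernel_lift _ s.matrixEnd_exact.2

end SmallMatrix

lemma isHomExact_of_exists_extension {A : Type*} [Category* A] [Abelian A] {P N : A} {D : P ⟶ P}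
    {w : D ≫ D = 0} (hD : (ShortComplex.mk D D w).Exact)
    (h : ∀ φ : kernel D ⟶ N, ∃ ψ, kernel.ι D ≫ ψ = φ) : IsHomExact D D N := by
  have s := isShortExact_kernel_lift w hD
  have := s.epi
  refine .of_comp_eq_zero w fun β hβ => ?_
  obtain ⟨α, hα⟩ := s.exists_desc β
    (by rw [← cancel_epi (kernel.lift D D w), kernel.lift_ι_assoc, hβ, comp_zero])
  obtain ⟨ψ, hψ⟩ := h α
  exact ⟨ψ, by rw [← hα, ← hψ, kernel.lift_ι_assoc]⟩

variable (R) in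
lemma rightPerp_range_kernel_matrixEnd :
    rightPerp (Set.range fun s : SmallMatrix R => kernel (matrixEnd s.rows)) =
      rightPerp (relGorensteinProj (dualInjModules R)) := by
  refine Set.Subset.antisymm (fun N hN X hX => ext1Zero_of_homExact hX fun _ _ hm =>
    homExact_of_smallMatrix (fun s => ?_) hm) ?_
  · exact homExact_iff_isHomExact.2 (isHomExact_of_exists_extension s.matrixEnd_exact.2 fun φ =>
      (hN _ ⟨s, rfl⟩).exists_extend s.isShortExact_kernel φ)
  · rintro N hN _ ⟨s, rfl⟩
    exact hN _ s.kernel_mem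

end SmallMatrix

/-! ### The small object argument and the cotorsion pair -/

section SmallObject

open MorphismProperty ZeroObject IsGrothendieckAbelian

variable {C : Type u} [Category.{v} C] [Abelian C] [IsGrothendieckAbelian.{w} C]
  {K : Type w} {A B : K → C} (i : ∀ k, A k ⟶ B k)

lemma hasSmallObjectArgument_ofHoms_of_mono [hi : ∀ k, Mono (i k)] :
    HasSmallObjectArgument.{w} (ofHoms i) := by
  have hmono : (coproducts.{w} (ofHoms i)).pushouts ≤ monomorphisms C := by
    rw [pushouts_le_iff, coproducts_le_iff, ofHoms_le_iff]
    exact hi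
  obtain ⟨κ, hκ', hκ⟩ := HasCardinalLT.exists_regular_cardinal_forall.{w} fun k => Subobject (A k)
  have : Fact κ.IsRegular := ⟨hκ'⟩
  have : Nonempty κ.ord.ToType := by simpa using hκ'.ne_zero
  have := WellFoundedLT.toOrderBot κ.ord.ToType
  refine ⟨κ, inferInstance, inferInstance, { preservesColimit := ?_ }⟩
  rintro A' B' X Y j ⟨k⟩ f hf
  let hf' : (monomorphisms C).TransfiniteCompositionOfShape κ.ord.ToType f :=
    { toTransfiniteCompositionOfShape := hf.toTransfiniteCompositionOfShape
      map_mem l hl := hmono _ (by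
        simpa only [ofHoms_homFamily] using (hf.attachCells l hl).pushouts_coproducts) }
  have (l l' : κ.ord.ToType) (φ : l ⟶ l') : Mono (hf'.F.map φ) := hf'.mem_map φ
  exact preservesColimit_coyoneda_obj_of_mono (Y := hf'.F) (κ := κ) (hκ k)

lemma llp_rlp_ofHoms_le_monomorphisms [hi : ∀ k, Mono (i k)] :
    (ofHoms i).rlp.llp ≤ monomorphisms C := by
  rw [← llp_rlp_monomorphisms (isSeparator_separator C)]
  exact antitone_llp (antitone_rlp ((ofHoms_le_iff _ _).2 hi))

end SmallObject

section Lifting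

variable {C : Type u} [Category.{v} C] [Abelian C]

lemma ext1Zero.hasLiftingProperty {K P X N E Q : C} [Projective P] (h : ext1Zero X N) {k : K ⟶ P}
    {p : P ⟶ X} (s : IsShortExact k p) {j : N ⟶ E} {q : E ⟶ Q} (t : IsShortExact j q) :
    HasLiftingProperty k q := by
  have := t.epi
  refine ⟨fun {a b} sq => ?_⟩
  let l := Projective.factorThru b q
  obtain ⟨φ, hφ⟩ := t.exists_lift (k ≫ l - a) (by
    rw [Preadditive.sub_comp, Category.assoc, Projective.factorThru_comp, sq.w, sub_self])
  obtain ⟨ψ, hψ⟩ := h.exists_extend s φ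
  exact ⟨⟨⟨l - ψ ≫ j, by rw [Preadditive.comp_sub, reassoc_of% hψ, hφ, sub_sub_cancel],
    by rw [Preadditive.sub_comp, Category.assoc, t.comp_eq_zero, comp_zero, sub_zero,
      Projective.factorThru_comp]⟩⟩⟩

lemma ext1Zero_cokernel_of_hasLiftingProperty {M Y N : C} {f : M ⟶ Y}
    (h : ∀ {E : C} {j : N ⟶ E} {q : E ⟶ cokernel f}, IsShortExact j q → HasLiftingProperty f q) :
    ext1Zero (cokernel f) N := by
  intro E j q w hq
  have := h ⟨w, hq⟩
  have sq : CommSq (0 : M ⟶ E) f q (cokernel.π f) := ⟨by simp⟩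
  exact ⟨cokernel.desc f sq.lift sq.fac_left, by rw [← cancel_epi (cokernel.π f)]; simp⟩

end Lifting

section SmallObject

variable {C : Type u} [Category.{v} C] [Abelian C] [IsGrothendieckAbelian.{w} C]
  [EnoughProjectives C] {K : Type w} (Z : K → C)

open MorphismProperty ZeroObject in
/-- The Eklof–Trlifaj theorem. -/
theorem hasSpecialPreenvelopes_rightPerp_range :
    HasSpecialPreenvelopes (leftPerp (rightPerp (Set.range Z))) (rightPerp (Set.range Z)) := by
  intro M
  let i (k : K) := kernel.ι (Projective.π (Z k))
  have s (k : K) : IsShortExact (i k) (Projective.π (Z k)) := .kernel_ι _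
  have := hasSmallObjectArgument_ofHoms_of_mono i
  let F : MapFactorizationData (ofHoms i).rlp.llp (ofHoms i).rlp (0 : M ⟶ 0) :=
    (functorialFactorizationData _ _).factorizationData _
  have hF : Mono F.i := llp_rlp_ofHoms_le_monomorphisms i _ F.hi
  refine ⟨F.Z, cokernel F.i, F.i, cokernel.π F.i, .cokernel_π _, ?_, fun N hN => ?_⟩
  · rintro _ ⟨k, rfl⟩
    refine ext1Zero_of_projective_presentation (s k) fun φ => ?_
    have := F.hp (i k) (ofHoms.mk k)
    have sq : CommSq φ (i k) F.p 0 := ⟨(isZero_zero C).eq_of_tgt _ _⟩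
    exact ⟨sq.lift, sq.fac_left⟩
  · refine ext1Zero_cokernel_of_hasLiftingProperty fun t => F.hi _ ?_
    rintro _ _ _ ⟨k⟩
    exact (hN _ ⟨k, rfl⟩).hasLiftingProperty (s k) t

end SmallObject

section Representations

variable (V : Type u) [Quiver.{u} V] (R : Type u) [Ring R]

lemma rightPerp_range_evaluationLeftAdjoint {K : Type*} (Z : K → ModuleCat.{u} R) :
    rightPerp (Set.range fun k : V × K => (evaluationLeftAdjoint _ (vtx k.1)).obj (Z k.2)) =
      RepClass (rightPerp (Set.range Z)) := by
  ext N
  constructor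
  · rintro hN i _ ⟨k, rfl⟩
    exact (ext1Zero_evaluationLeftAdjoint_iff _).1 (hN _ ⟨(i, k), rfl⟩)
  · rintro hN _ ⟨⟨i, k⟩, rfl⟩
    exact (ext1Zero_evaluationLeftAdjoint_iff _).2 (hN i _ ⟨k, rfl⟩)

lemma hasSpecialPreenvelopes_repClass :
    HasSpecialPreenvelopes
      (leftPerp (RepClass (V := V) (rightPerp (relGorensteinProj (dualInjModules R)))))
      (RepClass (rightPerp (relGorensteinProj (dualInjModules R)))) := by
  rw [← rightPerp_range_kernel_matrixEnd, ← rightPerp_range_evaluationLeftAdjoint]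
  exact hasSpecialPreenvelopes_rightPerp_range _

end Representations

section Gorenstein

variable {A : Type u} [Category.{v} A] [Abelian A] [EnoughProjectives A]

lemma relGorensteinProj_eq_leftPerp_rightPerp [EnoughInjectives A] {T : Set A}
    (hP : ∀ P : A, Projective P → P ∈ rightPerp (relGorensteinProj T))
    (h : HasSpecialPreenvelopes (leftPerp (rightPerp (relGorensteinProj T)))
      (rightPerp (relGorensteinProj T))) :
    relGorensteinProj T = leftPerp (rightPerp (relGorensteinProj T)) :=
  Set.Subset.antisymm (fun X hX _ hN => hN X hX) fun _ hX => ⟨_,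
    isSyzygyClosed_leftPerp_rightPerp (isSyzygyClosed_relGorensteinProj T) hP h, hX,
    fun _ hY _ hN => hY _ fun _ hX => relGorensteinProj_subset_leftPerp T hX _ hN⟩

lemma relGorensteinProj_inter_rightPerp {T : Set A}
    (hP : ∀ P : A, Projective P → P ∈ rightPerp (relGorensteinProj T))
    (hT : relGorensteinProj T = leftPerp (rightPerp (relGorensteinProj T))) :
    relGorensteinProj T ∩ rightPerp (relGorensteinProj T) = {X | Projective X} := by
  refine Set.Subset.antisymm (fun X hX => ?_) fun X (hX : Projective X) => ⟨?_, hP X hX⟩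
  · exact projective_of_mem_leftPerp_of_mem_rightPerp (isSyzygyClosed_relGorensteinProj T) hP
      (hT ▸ hX.1) hX.2
  · rw [hT]
    exact fun N _ => ext1Zero_of_projective

end Gorenstein

end QuiverGF

section Statements

open CategoryTheory CategoryTheory.Limits Opposite QuiverGF
open scoped DirectSum

theorem stmt17 (R : Type u) [Ring R] (V : Type u) [Quiver.{u} V] (hV : LeftRooted V) :
    IsCotorsionPair {X : RepL V R | IsPGFRep V R X}
      (RepClass (V := V) (rightPerp {M : ModuleCat.{u} R | IsPGFModule R M})) ∧
    IsCompleteCP {X : RepL V R | IsPGFRep V R X}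
      (RepClass (V := V) (rightPerp {M : ModuleCat.{u} R | IsPGFModule R M})) ∧
    IsHereditaryCP {X : RepL V R | IsPGFRep V R X}
      (RepClass (V := V) (rightPerp {M : ModuleCat.{u} R | IsPGFModule R M})) ∧
    {X : RepL V R | IsPGFRep V R X} ∩
        (RepClass (V := V) (rightPerp {M : ModuleCat.{u} R | IsPGFModule R M}))
      = {X : RepL V R | Projective X} := by
  have hperp : rightPerp (relGorensteinProj (dualInjReps V R)) =
      RepClass (rightPerp (relGorensteinProj (dualInjModules R))) :=
    rightPerp_relGorensteinProj_eq_repClass fun _ => obj_mem_leftPerp_dualInjModules hV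
  have hproj (P : RepL V R) (_ : Projective P) :
      P ∈ rightPerp (relGorensteinProj (dualInjReps V R)) := by
    rw [hperp]
    intro i
    have := projective_obj P (vtx i)
    exact mem_rightPerp_of_projective _
  have hpre := hasSpecialPreenvelopes_repClass V R
  rw [← hperp] at hpre
  have hperp_perp := relGorensteinProj_eq_leftPerp_rightPerp hproj hpre
  have hcomplete := isCompleteCP_of_hasSpecialPreenvelopes hpre
  rw [← hperp_perp] at hcomplete
  have hrep : {X : RepL V R | IsPGFRep V R X} = _ := Set.ext isPGFRep_iff
  have hmod : {M : ModuleCat.{u} R | IsPGFModule R M} = _ := Set.ext isPGFModule_iff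
  rw [hrep, hmod, ← hperp]
  exact ⟨⟨rfl, hperp_perp⟩, hcomplete,
    isHereditaryCP_rightPerp (isSyzygyClosed_relGorensteinProj _) hperp_perp.subset,
    relGorensteinProj_inter_rightPerp hproj hperp_perp⟩

end Statements
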